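/- arXiv:1710.03815 — 5 statements merged into one kernel-verified Lean document; each statement's English description precedes it below -/
import Mathlib

section
/- For all integers t and n with 1 ≤ t < n, the maximum size of an n-dimensional matroid with no PG(t,2)-restriction equals 2ⁿ(1 − 2^{−t}); that is, ex({PG(t,2)}, n) = 2ⁿ(1 − 2^{−t}). -/
open scoped Classical

/-- `M` has an `N`-restriction: some injective linear image of `N` lies inside `M`. -/
def HasRestriction {α β : Type*} [AddCommMonoid α] [AddCommMonoid β]
    [Module (ZMod 2) α] [Module (ZMod 2) β] (N : Set α) (M : Set β) : Prop :=
  ∃ ψ : α →ₗ[ZMod 2] β, Function.Injective ψ ∧ ψ '' N ⊆ M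

/-- The set of distinct `N`-restrictions of `M` (as subsets of `M`). -/
def restrictionSet {α β : Type*} [AddCommMonoid α] [AddCommMonoid β]
    [Module (ZMod 2) α] [Module (ZMod 2) β] (N : Set α) (M : Set β) : Set (Set β) :=
  {S | S ⊆ M ∧ ∃ ψ : α →ₗ[ZMod 2] β, Function.Injective ψ ∧ S = ψ '' N}

/-- The Turán number for a single excluded matroid `N`. -/
noncomputable def exNum {α : Type*} [AddCommMonoid α] [Module (ZMod 2) α] (N : Set α) (n : ℕ) : ℕ :=
  sSup {m | ∃ M : Set (Fin n → ZMod 2), 0 ∉ M ∧ ¬ HasRestriction N M ∧ M.ncard = m}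

/-- The Turán number for a family of excluded matroids. -/
noncomputable def exNumFam (𝒩 : Set (Σ k : ℕ, Set (Fin k → ZMod 2))) (n : ℕ) : ℕ :=
  sSup {m | ∃ M : Set (Fin n → ZMod 2), 0 ∉ M ∧
    (∀ N ∈ 𝒩, ¬ HasRestriction N.2 M) ∧ M.ncard = m}

/-- The critical number of `M ⊆ 𝔽₂ⁿ`. -/
noncomputable def critNum {n : ℕ} (M : Set (Fin n → ZMod 2)) : ℕ :=
  sInf {c | ∃ φ : (Fin n → ZMod 2) →ₗ[ZMod 2] (Fin c → ZMod 2), ∀ x ∈ M, φ x ≠ 0}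

/-- The rank of `M`: dimension of its span. -/
noncomputable def rankM {n : ℕ} (M : Set (Fin n → ZMod 2)) : ℕ :=
  Module.finrank (ZMod 2) (Submodule.span (ZMod 2) M)

/-- `M` is a copy of `N^{n,t}`. -/
def IsCopyNnt {d : ℕ} (N : Set (Fin d → ZMod 2)) (n t : ℕ)
    (M : Set (Fin n → ZMod 2)) : Prop :=
  ∃ F : Submodule (ZMod 2) (Fin n → ZMod 2), Module.finrank (ZMod 2) F = n - t ∧
    ∃ θ : (Fin d → ZMod 2) →ₗ[ZMod 2] (Fin n → ZMod 2),
      Function.Injective θ ∧ (∀ x, θ x ∈ F) ∧ M = θ '' N ∪ {x | x ∉ F}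

/-- The decomposition family `𝒟(𝒩)`. -/
def decompFam (𝒩 : Set (Σ k : ℕ, Set (Fin k → ZMod 2))) (k : ℕ) :
    Set (Σ k : ℕ, Set (Fin k → ZMod 2)) :=
  {D | 0 ∉ D.2 ∧
    (∃ N ∈ 𝒩, ∃ M : Set (Fin N.1 → ZMod 2), IsCopyNnt D.2 N.1 k M ∧ HasRestriction N.2 M) ∧
    ∀ D' : Σ k : ℕ, Set (Fin k → ZMod 2), 0 ∉ D'.2 →
      (∃ N ∈ 𝒩, ∃ M : Set (Fin N.1 → ZMod 2), IsCopyNnt D'.2 N.1 k M ∧ HasRestriction N.2 M) →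
      HasRestriction D'.2 D.2 → HasRestriction D.2 D'.2}

/-- The cycle matroid of a simple graph. -/
def cycleMatroid {V : Type*} [DecidableEq V] (G : SimpleGraph V) : Set (V → ZMod 2) :=
  {x | ∃ u v, G.Adj u v ∧ x = Pi.single u 1 + Pi.single v 1}

theorem bb_card_sub {n : ℕ} (W : Submodule (ZMod 2) (Fin n → ZMod 2)) :
    (W : Set (Fin n → ZMod 2)).ncard = 2 ^ Module.finrank (ZMod 2) W := by
  have h := Module.card_eq_pow_finrank (K := ZMod 2) (V := W)
  rw [ZMod.card] at h
  rw [← h, ← Nat.card_coe_set_eq, Nat.card_eq_fintype_card]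
  rfl

theorem bb_card_univ (n : ℕ) : Nat.card (Fin n → ZMod 2) = 2 ^ n := by
  simp [Nat.card_eq_fintype_card]

theorem bb_upper {n t : ℕ} (htn : t < n) (C : Set (Fin n → ZMod 2)) (h0 : 0 ∈ C)
    (hC : C.ncard < 2 ^ (n - t)) (k : ℕ) (hk : k ≤ t + 1) :
    ∃ W : Submodule (ZMod 2) (Fin n → ZMod 2), Module.finrank (ZMod 2) W = k ∧
      ∀ x ∈ W, x ≠ 0 → x ∉ C := by
  induction k with
  | zero => exact ⟨⊥, by simp, fun x hx hx0 => absurd ((Submodule.mem_bot _).1 hx) hx0⟩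
  | succ k ih =>
    obtain ⟨W, hW, hWC⟩ := ih (by omega)
    have hlt : (Set.image2 (fun c w => c - w) C (W : Set (Fin n → ZMod 2))).ncard < 2 ^ n := by
      have h1 : (Set.image2 (fun c w => c - w) C (W : Set (Fin n → ZMod 2))).ncard
          ≤ C.ncard * (W : Set (Fin n → ZMod 2)).ncard := by
        rw [← Set.image_prod, ← Set.ncard_prod]
        exact Set.ncard_image_le (Set.toFinite _)
      rw [bb_card_sub, hW] at h1
      calc _ ≤ C.ncard * 2 ^ k := h1
        _ ≤ C.ncard * 2 ^ t := Nat.mul_le_mul_left _ (Nat.pow_le_pow_right (by norm_num) (by omega))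
        _ < 2 ^ (n - t) * 2 ^ t := Nat.mul_lt_mul_of_pos_right hC (by positivity)
        _ = 2 ^ n := by rw [← pow_add]; congr 1; omega
    obtain ⟨v, hv⟩ : ∃ v, v ∉ Set.image2 (fun c w => c - w) C (W : Set (Fin n → ZMod 2)) := by
      by_contra! h
      rw [Set.eq_univ_of_forall h, Set.ncard_univ, bb_card_univ] at hlt
      exact lt_irrefl _ hlt
    have hvW : v ∉ W := fun h => hv ⟨0, h0, -v, W.neg_mem h, by simp⟩
    refine ⟨W ⊔ Submodule.span (ZMod 2) {v}, ?_, ?_⟩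
    · rw [Submodule.finrank_sup_span_singleton hvW, hW]
    · intro x hx hx0 hxC
      obtain ⟨y, hy, z, hz, rfl⟩ := Submodule.mem_sup.1 hx
      obtain ⟨a, rfl⟩ := Submodule.mem_span_singleton.1 hz
      have ha : a = 0 ∨ a = 1 := (by decide : ∀ b : ZMod 2, b = 0 ∨ b = 1) a
      rcases ha with rfl | rfl
      · simp only [zero_smul, add_zero] at hx0 hxC
        exact hWC y hy hx0 hxC
      · exact hv ⟨_, hxC, y, hy, by simp⟩

theorem bb_le {n t : ℕ} (htn : t < n) (M : Set (Fin n → ZMod 2)) (h0 : 0 ∉ M)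
    (hM : ¬ HasRestriction {x : Fin (t + 1) → ZMod 2 | x ≠ 0} M) :
    M.ncard ≤ 2 ^ n - 2 ^ (n - t) := by
  have hc := Set.ncard_add_ncard_compl M
  rw [bb_card_univ] at hc
  by_contra hlt
  have hle : 2 ^ (n - t) ≤ 2 ^ n := Nat.pow_le_pow_right (by norm_num) (by omega)
  obtain ⟨W, hW, hWC⟩ := bb_upper htn Mᶜ h0 (by omega) (t + 1) le_rfl
  apply hM
  have e : (Fin (t + 1) → ZMod 2) ≃ₗ[ZMod 2] W :=
    LinearEquiv.ofFinrankEq _ _ (by simp [hW])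
  refine ⟨W.subtype ∘ₗ e.toLinearMap, ?_, ?_⟩
  · exact W.injective_subtype.comp e.injective
  · rintro _ ⟨x, hx, rfl⟩
    have := hWC (e x) (e x).2 (by simpa using hx)
    simpa using this

theorem bb_lower {n t : ℕ} (htn : t < n) :
    ∃ M : Set (Fin n → ZMod 2), 0 ∉ M ∧
      ¬ HasRestriction {x : Fin (t + 1) → ZMod 2 | x ≠ 0} M ∧
      M.ncard = 2 ^ n - 2 ^ (n - t) := by
  let p : (Fin n → ZMod 2) →ₗ[ZMod 2] (Fin t → ZMod 2) :=
    LinearMap.funLeft (ZMod 2) (ZMod 2) (Fin.castLE htn.le)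
  have hp : Function.Surjective p :=
    LinearMap.funLeft_surjective_of_injective _ _ _ (Fin.castLE_injective htn.le)
  refine ⟨(LinearMap.ker p : Set (Fin n → ZMod 2))ᶜ, by simp, ?_, ?_⟩
  · rintro ⟨ψ, hψ, hsub⟩
    have hk : LinearMap.ker (p ∘ₗ ψ) ≠ ⊥ := LinearMap.ker_ne_bot_of_finrank_lt (by simp)
    obtain ⟨x, hx, hx0⟩ := Submodule.exists_mem_ne_zero_of_ne_bot hk
    exact hsub ⟨x, hx0, rfl⟩ (by simpa using hx)
  · have hr := LinearMap.finrank_range_add_finrank_ker p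
    rw [LinearMap.range_eq_top.2 hp, finrank_top] at hr
    simp only [Module.finrank_fin_fun] at hr
    have hc := Set.ncard_add_ncard_compl (LinearMap.ker p : Set (Fin n → ZMod 2))
    rw [bb_card_univ, bb_card_sub, show Module.finrank (ZMod 2) (LinearMap.ker p) = n - t by omega] at hc
    omega

/-- Bose–Burton: `ex({PG(t,2)}, n) = 2ⁿ(1 − 2^{−t})` for `1 ≤ t < n`. -/
theorem bose_burton (t n : ℕ) (ht : 1 ≤ t) (htn : t < n) :
    exNum {x : Fin (t + 1) → ZMod 2 | x ≠ 0} n = 2 ^ n - 2 ^ (n - t) := by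
  have hub : ∀ m ∈ {m | ∃ M : Set (Fin n → ZMod 2), 0 ∉ M ∧
      ¬ HasRestriction {x : Fin (t + 1) → ZMod 2 | x ≠ 0} M ∧ M.ncard = m},
      m ≤ 2 ^ n - 2 ^ (n - t) := by
    rintro m ⟨M, h0, hM, rfl⟩
    exact bb_le htn M h0 hM
  exact (IsGreatest.csSup_eq ⟨bb_lower htn, hub⟩)
end

section
/- (Matroidal Erdős–Stone theorem.) For every nonempty matroid N, ex({N}, n) = 2ⁿ(1 − 2^{1−χ(N)} + o(1)); that is, for every ε > 0 there exists n₀ such that for all n ≥ n₀, |ex({N}, n) − (1 − 2^{1−χ(N)})·2ⁿ| ≤ ε·2ⁿ. -/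
open scoped Classical

theorem aux_pop {W : Type} [AddCommGroup W] [Module (ZMod 2) W] [Fintype W]
    (Q : Finset W) (A : Finset W) (ε : ℝ) (hε : 0 < ε)
    (hQ : ε * Fintype.card W ≤ Q.card) (hA : (A.card : ℝ) ≤ ε ^ 2 / 2 * Fintype.card W) :
    ∃ h, h ∉ A ∧ ε ^ 2 / 2 * Fintype.card W ≤ ((Q.filter (fun x => x + h ∈ Q)).card : ℝ) := by
  by_contra hcon
  push Not at hcon
  have hW : (0 : ℝ) < Fintype.card W := by exact_mod_cast Fintype.card_pos
  have h1 : ∑ h : W, (Q.filter (fun x => x + h ∈ Q)).card = Q.card * Q.card := by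
    simp_rw [Finset.card_filter]
    rw [Finset.sum_comm]
    rw [← smul_eq_mul, ← Finset.sum_const]
    refine Finset.sum_congr rfl fun x _ => ?_
    rw [Fintype.sum_equiv (Equiv.addLeft x) (fun h => if x + h ∈ Q then 1 else 0)
      (fun y => if y ∈ Q then 1 else 0) (fun h => rfl)]
    simp
  have h2 : ∑ h : W, ((Q.filter (fun x => x + h ∈ Q)).card : ℝ) = (Q.card : ℝ) * Q.card := by
    exact_mod_cast h1
  have h3 : ∑ h : W, ((Q.filter (fun x => x + h ∈ Q)).card : ℝ)
      < ∑ h : W, (ε ^ 2 / 2 * Fintype.card W + if h ∈ A then (Fintype.card W : ℝ) else 0) := by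
    apply Finset.sum_lt_sum_of_nonempty Finset.univ_nonempty
    intro h _
    split_ifs with hh
    · have : ((Q.filter (fun x => x + h ∈ Q)).card : ℝ) ≤ Fintype.card W := by
        exact_mod_cast Finset.card_le_univ _
      have : 0 < ε ^ 2 / 2 * Fintype.card W := by positivity
      linarith
    · simpa using hcon h hh
  rw [h2, Finset.sum_add_distrib] at h3
  simp only [Finset.sum_const, Finset.card_univ, nsmul_eq_mul, Finset.sum_ite_mem,
    Finset.univ_inter] at h3
  have h4 : (ε * Fintype.card W) * (ε * Fintype.card W) ≤ (Q.card : ℝ) * Q.card := by gcongr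
  have h5 := mul_le_mul_of_nonneg_right hA hW.le
  nlinarith

theorem aux_span {W : Type} [AddCommGroup W] [Module (ZMod 2) W] (h z : W)
    (hz : z ∈ Submodule.span (ZMod 2) {h}) : z = 0 ∨ z = h := by
  obtain ⟨a, rfl⟩ := Submodule.mem_span_singleton.1 hz
  rcases Fin.exists_fin_two.1 ⟨a, rfl⟩ with h | h
  · left; rw [h]; exact zero_smul _ _
  · right; rw [h]; exact one_smul _ _

theorem aux_fin {W : Type} [AddCommGroup W] [Module (ZMod 2) W] [Fintype W]
    (A : Submodule (ZMod 2) W) (h : W) (hA : h ∉ A) :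
    Module.finrank (ZMod 2) (A ⊔ Submodule.span (ZMod 2) {h} : Submodule (ZMod 2) W)
      = Module.finrank (ZMod 2) A + 1 ∧ Disjoint A (Submodule.span (ZMod 2) {h}) := by
  have hd : Disjoint A (Submodule.span (ZMod 2) {h}) := by
    rw [Submodule.disjoint_def]
    intro x hx hx'
    rcases aux_span h x hx' with h0 | h0
    · exact h0
    · exact absurd (h0 ▸ hx) hA
  refine ⟨?_, hd⟩
  have h0 : h ≠ 0 := fun h0 => hA (h0 ▸ A.zero_mem)
  have := Submodule.finrank_sup_add_finrank_inf_eq A (Submodule.span (ZMod 2) {h})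
  rw [hd.eq_bot, finrank_bot, finrank_span_singleton h0] at this
  omega

theorem aux_cube (d : ℕ) : ∀ (ε : ℝ) (K : ℕ), 0 < ε → ∃ D : ℕ, ∀ (W : Type) [AddCommGroup W]
    [Module (ZMod 2) W] [Fintype W] (Q : Finset W) (A : Submodule (ZMod 2) W),
    D ≤ Fintype.card W → ε * Fintype.card W ≤ Q.card → Module.finrank (ZMod 2) A ≤ K →
    ∃ (w : W) (U : Submodule (ZMod 2) W), Module.finrank (ZMod 2) U = d ∧ Disjoint U A ∧
      ∀ u ∈ U, w + u ∈ Q := by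
  induction d with
  | zero =>
    intro ε K hε
    refine ⟨0, ?_⟩
    intro W _ _ _ Q A _ hQ _
    have hW : (0 : ℝ) < Fintype.card W := by exact_mod_cast Fintype.card_pos
    have : (0 : ℝ) < Q.card := lt_of_lt_of_le (by positivity) hQ
    obtain ⟨w, hw⟩ := Finset.card_pos.1 (by exact_mod_cast this)
    exact ⟨w, ⊥, finrank_bot _ _, disjoint_bot_left, by simpa using hw⟩
  | succ d ih =>
    intro ε K hε
    obtain ⟨D, hD⟩ := ih (ε ^ 2 / 2) (K + 1) (by positivity)
    obtain ⟨E, hE⟩ := exists_nat_gt (2 ^ K / (ε ^ 2 / 2))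
    refine ⟨max D E, ?_⟩
    intro W _ _ _ Q A hW hQ hA
    have hE' : (2 : ℝ) ^ K ≤ ε ^ 2 / 2 * Fintype.card W := by
      rw [div_lt_iff₀ (by positivity)] at hE
      have : (E : ℝ) ≤ Fintype.card W := by exact_mod_cast (le_max_right _ _).trans hW
      nlinarith [mul_le_mul_of_nonneg_left this (show 0 ≤ ε ^ 2 / 2 by positivity)]
    have hcA : ((Finset.univ.filter (fun x => x ∈ A)).card : ℝ) ≤ 2 ^ K := by
      have h1 : (Finset.univ.filter (fun x => x ∈ A)).card = Fintype.card A := by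
        rw [Fintype.card_subtype]
      have h2 := Module.card_eq_pow_finrank (K := ZMod 2) (V := A)
      rw [h1, h2, ZMod.card]
      push_cast
      exact pow_le_pow_right₀ (by norm_num) hA
    obtain ⟨h, hh, hc⟩ := aux_pop Q _ ε hε hQ (hcA.trans hE')
    simp only [Finset.mem_filter, Finset.mem_univ, true_and] at hh
    obtain ⟨hf, hdis⟩ := aux_fin A h hh
    obtain ⟨w, U, hU, hdU, hw⟩ := hD W _ (A ⊔ Submodule.span (ZMod 2) {h})
      ((le_max_left _ _).trans hW) hc (by omega)
    have hhU : h ∉ U := fun hU' => hh (by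
      have : h = 0 := (Submodule.disjoint_def.1 hdU) h hU'
        (Submodule.mem_sup_right (Submodule.mem_span_singleton_self h))
      rw [this]; exact A.zero_mem)
    refine ⟨w, U ⊔ Submodule.span (ZMod 2) {h}, ?_, ?_, ?_⟩
    · rw [(aux_fin U h hhU).1, hU]
    · rw [sup_comm] at hdU
      exact hdis.symm.disjoint_sup_left_of_disjoint_sup_right hdU
    · intro u hu
      obtain ⟨a, ha, b, hb, rfl⟩ := Submodule.mem_sup.1 hu
      have := Finset.mem_filter.1 (hw a ha)
      rcases aux_span h b hb with rfl | rfl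
      · simpa using this.1
      · simpa [add_assoc] using this.2

theorem aux_avg {V : Type} [AddCommGroup V] [Module (ZMod 2) V] [Fintype V]
    (M : Finset V) (X U : Submodule (ZMod 2) V) (ε : ℝ) 
    (hM : ε * Fintype.card V ≤ Fintype.card V - Fintype.card X * (Fintype.card V - M.card)) :
    ∃ (y : V) (Q : Finset U), (∀ u ∈ Q, ∀ x : X, y + x + u ∈ M) ∧
      ε * Fintype.card U ≤ (Q.card : ℝ) := by
  suffices hs : ∃ y : V, ε * Fintype.card U ≤
      ((Finset.univ.filter (fun u : U => ∀ x : X, y + x + u ∈ M)).card : ℝ) by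
    obtain ⟨y, hy⟩ := hs
    exact ⟨y, _, fun u hu => (Finset.mem_filter.1 hu).2, hy⟩
  by_contra hcon
  push Not at hcon
  have h1 := Finset.sum_lt_sum_of_nonempty (Finset.univ_nonempty (α := V)) (fun y _ => hcon y)
  have h2 : ∑ y : V, (Finset.univ.filter (fun u : U => ∀ x : X, y + x + u ∈ M)).card
      = ∑ u : U, (Finset.univ.filter (fun y : V => ∀ x : X, y + x + u ∈ M)).card := by
    simp_rw [Finset.card_filter]
    rw [Finset.sum_comm]
  have h3 : ∀ u : U, ε * Fintype.card V ≤
      ((Finset.univ.filter (fun y : V => ∀ x : X, y + x + u ∈ M)).card : ℝ) := by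
    intro u
    refine hM.trans ?_
    have h4 : (Finset.univ.filter (fun y : V => ¬ ∀ x : X, y + x + u ∈ M)).card
        ≤ Fintype.card X * (Mᶜ).card := by
      calc _ ≤ (Finset.univ.biUnion (fun x : X => (Mᶜ).image (fun m => m - (u : V) - (x : V)))).card := by
            apply Finset.card_le_card
            intro y hy
            simp only [Finset.mem_filter, Finset.mem_univ, true_and, not_forall] at hy
            obtain ⟨x, hx⟩ := hy
            simp only [Finset.mem_biUnion, Finset.mem_univ, true_and, Finset.mem_image]
            exact ⟨x, y + x + u, by simpa using hx, by abel⟩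
        _ ≤ _ := by
            refine Finset.card_biUnion_le.trans ?_
            refine (Finset.sum_le_card_nsmul _ _ _ fun x _ => Finset.card_image_le).trans ?_
            simp
    have h5 := Finset.card_filter_add_card_filter_not (s := (Finset.univ : Finset V))
      (fun y : V => ∀ x : X, y + x + u ∈ M)
    have h6 := Finset.card_add_card_compl M
    rw [Finset.card_univ] at h5
    have h4' : ((Finset.univ.filter (fun y : V => ¬ ∀ x : X, y + x + u ∈ M)).card : ℝ)
        ≤ Fintype.card X * (Mᶜ).card := by exact_mod_cast h4
    have h5' : ((Finset.univ.filter (fun y : V => ∀ x : X, y + x + u ∈ M)).card : ℝ) +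
      (Finset.univ.filter (fun y : V => ¬ ∀ x : X, y + x + u ∈ M)).card = Fintype.card V := by
      exact_mod_cast h5
    have h6' : (M.card : ℝ) + (Mᶜ).card = Fintype.card V := by exact_mod_cast h6
    have : (Fintype.card V : ℝ) - M.card = (Mᶜ).card := by linarith
    rw [this]
    linarith
  have h7 := Finset.sum_le_sum (fun u (_ : u ∈ (Finset.univ : Finset U)) => h3 u)
  have h2' : ∑ y : V, ((Finset.univ.filter (fun u : U => ∀ x : X, y + x + u ∈ M)).card : ℝ)
      = ∑ u : U, ((Finset.univ.filter (fun y : V => ∀ x : X, y + x + u ∈ M)).card : ℝ) := by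
    exact_mod_cast h2
  rw [h2'] at h1
  have h8 := h7.trans_lt h1
  simp only [Finset.sum_const, Finset.card_univ, nsmul_eq_mul] at h8
  linarith

theorem aux_main (c : ℕ) : ∀ (d : ℕ) (ε : ℝ), 0 < ε → ∃ n₀ : ℕ, ∀ n ≥ n₀,
    ∀ M : Finset (Fin n → ZMod 2), 0 ∉ M → (1 - 2 / 2 ^ c + ε) * 2 ^ n ≤ (M.card : ℝ) →
    ∃ X U : Submodule (ZMod 2) (Fin n → ZMod 2), Module.finrank (ZMod 2) X = c ∧
      Module.finrank (ZMod 2) U = d ∧ ∀ x ∈ X, x ≠ 0 → ∀ u ∈ U, x + u ∈ M := by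
  induction c with
  | zero =>
    intro d ε hε
    obtain ⟨D, hD⟩ := aux_cube d 1 0 one_pos
    refine ⟨D, fun n hn M _ _ => ?_⟩
    obtain ⟨w, U, hU, -, -⟩ := hD (Fin n → ZMod 2) Finset.univ ⊥
      (by
        simp only [Fintype.card_fun, ZMod.card, Fintype.card_fin]
        exact hn.trans Nat.lt_two_pow_self.le)
      (by simp) (by simp)
    refine ⟨⊥, U, finrank_bot _ _, hU, ?_⟩
    intro x hx hx0
    exact absurd ((Submodule.mem_bot _).1 hx) hx0
  | succ c ih =>
    intro d ε hε
    obtain ⟨D, hD⟩ := aux_cube d ε 0 hε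
    obtain ⟨n₀, hn₀⟩ := ih D ε hε
    refine ⟨n₀, fun n hn M hM0 hM => ?_⟩
    have hc2 : (2 : ℝ) / 2 ^ (c + 1) = 1 / 2 ^ c := by rw [pow_succ]; field_simp
    rw [hc2] at hM
    have hcpos : (0 : ℝ) < 1 / 2 ^ c := by positivity
    obtain ⟨X, U, hX, hU, hXU⟩ := hn₀ n hn M hM0 (by
      refine le_trans ?_ hM
      have : (2 : ℝ) / 2 ^ c = 1 / 2 ^ c + 1 / 2 ^ c := by ring
      rw [this]
      gcongr
      linarith)
    have hcX : Fintype.card X = 2 ^ c := by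
      rw [Module.card_eq_pow_finrank (K := ZMod 2) (V := X), ZMod.card, hX]
    have hcU : Fintype.card U = 2 ^ D := by
      rw [Module.card_eq_pow_finrank (K := ZMod 2) (V := U), ZMod.card, hU]
    have hcV : Fintype.card (Fin n → ZMod 2) = 2 ^ n := by simp
    obtain ⟨y, Q, hQ, hy⟩ := aux_avg M X U ε (by
      rw [hcX, hcV]
      push_cast
      have h1 : (2 : ℝ) ^ c * ((1 - 1 / 2 ^ c + ε) * 2 ^ n) ≤ 2 ^ c * M.card := by gcongr
      have h2 : (2 : ℝ) ^ c * ((1 - 1 / 2 ^ c + ε) * 2 ^ n)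
        = 2 ^ c * 2 ^ n - 2 ^ n + 2 ^ c * (ε * 2 ^ n) := by
        field_simp
      have h3 : 1 * (ε * 2 ^ n) ≤ (2 : ℝ) ^ c * (ε * 2 ^ n) := by
        gcongr
        exact one_le_pow₀ (by norm_num)
      linarith)
    obtain ⟨w, U', hU', -, hw⟩ := hD U _ ⊥ (by rw [hcU]; exact Nat.lt_two_pow_self.le) hy (by simp)
    have key : ∀ x ∈ X, ∀ u ∈ U'.map U.subtype, (x + (y + w)) + u ∈ M := by
      intro x hx u hu
      obtain ⟨u, hu', rfl⟩ := Submodule.mem_map.1 hu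
      have h1 := hQ _ (hw u hu') ⟨x, hx⟩
      convert h1 using 1
      simp only [Submodule.subtype_apply, Submodule.coe_add]
      abel
    have hyX : y + w ∉ X := by
      intro hyX
      have := key (-(y + w)) (X.neg_mem hyX) 0 (Submodule.zero_mem _)
      apply hM0
      simpa using this
    refine ⟨X ⊔ Submodule.span (ZMod 2) {y + (w : Fin n → ZMod 2)}, U'.map U.subtype, ?_, ?_, ?_⟩
    · rw [(aux_fin X _ hyX).1, hX]
    · rw [← hU']
      exact (Submodule.equivMapOfInjective U.subtype U.injective_subtype U').finrank_eq.symm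
    · intro x hx hx0 u hu
      obtain ⟨a, ha, b, hb, rfl⟩ := Submodule.mem_sup.1 hx
      rcases aux_span _ b hb with rfl | rfl
      · obtain ⟨u, hu', rfl⟩ := Submodule.mem_map.1 hu
        rw [add_zero] at hx0 ⊢
        exact hXU a ha hx0 _ u.2
      · exact key a ha u hu

theorem aux_restr {k c n : ℕ} (N : Set (Fin k → ZMod 2)) (M : Set (Fin n → ZMod 2)) (hM : 0 ∉ M)
    (φ : (Fin k → ZMod 2) →ₗ[ZMod 2] (Fin c → ZMod 2)) (hφ : ∀ x ∈ N, φ x ≠ 0)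
    (X U : Submodule (ZMod 2) (Fin n → ZMod 2)) (hX : Module.finrank (ZMod 2) X = c)
    (hU : Module.finrank (ZMod 2) U = k) (h : ∀ x ∈ X, x ≠ 0 → ∀ u ∈ U, x + u ∈ M) :
    HasRestriction N M := by
  let eX : (Fin c → ZMod 2) ≃ₗ[ZMod 2] X := LinearEquiv.ofFinrankEq _ _ (by simp [hX])
  let eU : (Fin k → ZMod 2) ≃ₗ[ZMod 2] U := LinearEquiv.ofFinrankEq _ _ (by simp [hU])
  let ψ : (Fin k → ZMod 2) →ₗ[ZMod 2] (Fin n → ZMod 2) :=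
    X.subtype ∘ₗ eX.toLinearMap ∘ₗ φ + U.subtype ∘ₗ eU.toLinearMap
  have hψ : ∀ z, ψ z = (eX (φ z) : Fin n → ZMod 2) + eU z := fun z => rfl
  refine ⟨ψ, ?_, ?_⟩
  · rw [injective_iff_map_eq_zero]
    intro z hz
    rw [hψ] at hz
    by_cases h0 : (eX (φ z) : Fin n → ZMod 2) = 0
    · rw [h0, zero_add] at hz
      simpa using hz
    · exact absurd (hz ▸ h _ (eX (φ z)).2 h0 _ (eU z).2) hM
  · rintro _ ⟨z, hz, rfl⟩
    rw [hψ]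
    refine h _ (eX (φ z)).2 ?_ _ (eU z).2
    simpa using hφ z hz

theorem aux_lower {k : ℕ} (N : Set (Fin k → ZMod 2)) (c n : ℕ) (hc : c + 1 = critNum N)
    (hn : c ≤ n) : 2 ^ n ≤ exNum N n + 2 ^ (n - c) := by
  obtain ⟨m, rfl⟩ := Nat.exists_eq_add_of_le hn
  let p : (Fin (c + m) → ZMod 2) →ₗ[ZMod 2] (Fin c → ZMod 2) :=
    LinearMap.funLeft (ZMod 2) (ZMod 2) (Fin.castAdd m)
  have hp : Function.Surjective p :=
    LinearMap.funLeft_surjective_of_injective _ _ _ (Fin.castAdd_injective c m)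
  let M : Set (Fin (c + m) → ZMod 2) := {x | p x ≠ 0}
  have hle : M.ncard ≤ exNum N (c + m) := by
    apply le_csSup
    · refine ⟨Nat.card (Fin (c + m) → ZMod 2), ?_⟩
      rintro _ ⟨M, -, -, rfl⟩
      exact Set.ncard_le_card M
    · refine ⟨M, by simp [M], ?_, rfl⟩
      rintro ⟨ψ, -, hψ⟩
      have : critNum N ≤ c := Nat.sInf_le ⟨p ∘ₗ ψ, fun x hx => hψ ⟨x, hx, rfl⟩⟩
      omega
  have hker : (Mᶜ).ncard = 2 ^ m := by
    have h1 : Mᶜ = (LinearMap.ker p : Set (Fin (c + m) → ZMod 2)) := by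
      ext x; simp [M]
    have h2 := LinearMap.finrank_range_add_finrank_ker p
    rw [LinearMap.range_eq_top.2 hp, finrank_top] at h2
    simp only [Module.finrank_fin_fun] at h2
    have h3 : Module.finrank (ZMod 2) (LinearMap.ker p) = m := by omega
    rw [h1, ← Nat.card_coe_set_eq]
    have := Module.card_eq_pow_finrank (K := ZMod 2) (V := LinearMap.ker p)
    rw [h3, ZMod.card] at this
    rw [← this, ← Nat.card_eq_fintype_card]
    rfl
  have h4 := Set.ncard_add_ncard_compl M
  rw [hker] at h4
  have h5 : Nat.card (Fin (c + m) → ZMod 2) = 2 ^ (c + m) := by simp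
  rw [h5] at h4
  rw [Nat.add_sub_cancel_left]
  omega

/-- Matroidal Erdős–Stone theorem: `ex({N}, n) = 2ⁿ(1 − 2^{1−χ(N)} + o(1))`. -/
theorem matroidal_erdos_stone {k : ℕ} (N : Set (Fin k → ZMod 2))
    (hN0 : 0 ∉ N) (hNne : N.Nonempty) {ε : ℝ} (hε : 0 < ε) :
    ∃ n₀ : ℕ, ∀ n ≥ n₀,
      |(exNum N n : ℝ) - (1 - 2 ^ (1 - (critNum N : ℤ))) * 2 ^ n| ≤ ε * 2 ^ n := by
  have hmem : critNum N ∈ {c | ∃ φ : (Fin k → ZMod 2) →ₗ[ZMod 2] (Fin c → ZMod 2),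
      ∀ x ∈ N, φ x ≠ 0} :=
    Nat.sInf_mem ⟨k, LinearMap.id, fun x hx h => hN0 (by
      have h' : x = 0 := h
      exact h' ▸ hx)⟩
  obtain ⟨φ, hφ⟩ := hmem
  obtain ⟨c, hc⟩ : ∃ c, c + 1 = critNum N := by
    rcases Nat.eq_zero_or_pos (critNum N) with h | h
    · obtain ⟨x, hx⟩ := hNne
      refine absurd ?_ (hφ x hx)
      funext i
      exact absurd i.2 (by omega)
    · exact ⟨critNum N - 1, by omega⟩
  obtain ⟨n₀, hn₀⟩ := aux_main (critNum N) k ε hε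
  refine ⟨max n₀ c, fun n hn => ?_⟩
  have hcn : c ≤ n := (le_max_right _ _).trans hn
  have hz : (2 : ℝ) ^ (1 - (critNum N : ℤ)) = 2 / 2 ^ critNum N := by
    rw [zpow_sub₀ (by norm_num)]
    simp
  rw [hz]
  have hlow := aux_lower N c n hc hcn
  have hlow' : (2 : ℝ) ^ n ≤ exNum N n + 2 ^ (n - c) := by exact_mod_cast hlow
  have hpow : (2 : ℝ) / 2 ^ critNum N * 2 ^ n = 2 ^ (n - c) := by
    rw [← hc, pow_succ, ← Nat.sub_add_cancel hcn, pow_add, Nat.add_sub_cancel]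
    field_simp
  have hup : (exNum N n : ℝ) ≤ (1 - 2 / 2 ^ critNum N + ε) * 2 ^ n := by
    have hin : exNum N n ∈ {m | ∃ M : Set (Fin n → ZMod 2), 0 ∉ M ∧ ¬ HasRestriction N M ∧
        M.ncard = m} := by
      apply Nat.sSup_mem
      · refine ⟨0, ∅, by simp, ?_, by simp⟩
        rintro ⟨ψ, -, hψ⟩
        obtain ⟨x, hx⟩ := hNne
        exact hψ ⟨x, hx, rfl⟩
      · refine ⟨Nat.card (Fin n → ZMod 2), ?_⟩
        rintro _ ⟨M, -, -, rfl⟩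
        exact Set.ncard_le_card M
    obtain ⟨M, hM0, hM, hcard⟩ := hin
    by_contra hlt
    push Not at hlt
    obtain ⟨X, U, hX, hU, h⟩ := hn₀ n ((le_max_left _ _).trans hn) M.toFinset (by simpa using hM0)
      (by rw [← Set.ncard_eq_toFinset_card', hcard]; exact hlt.le)
    exact hM (aux_restr N M hM0 φ hφ X U hX hU (by simpa using h))
  have hpos : 0 ≤ ε * 2 ^ n := by positivity
  rw [abs_le]
  constructor <;> nlinarith
end

section
/- (Stability for the matroidal Erdős–Stone theorem.) Let N be a nonempty matroid with χ(N) ≥ 2. For all δ > 0 there exist ε > 0 and n₀ such that for every n ≥ n₀, if M is an n-dimensional N-free matroid with | |M| − (1 − 2^{1−χ(N)})·2ⁿ | ≤ ε·2ⁿ, then there is a matroid B isomorphic to BB(n−1, 2, χ(N)−1), i.e. B = (𝔽₂ⁿ \ {0}) \ W for some subspace W of 𝔽₂ⁿ of dimension n − χ(N) + 1, such that |M Δ B| < δ·2ⁿ. -/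
open scoped Classical

set_option linter.unusedSectionVars false

theorem essZ : ∀ r : ZMod 2, r = 0 ∨ r = 1 := by decide

section ESS

variable {V : Type} [AddCommGroup V] [Module (ZMod 2) V] [Fintype V]

noncomputable def essLk (M : Finset V) (x : V) : Finset V := M.filter (fun y => x + y ∈ M)

noncomputable def essCnt : ℕ → Finset V → ℕ
  | 0, _ => 1
  | c + 1, M => ∑ x ∈ M, essCnt c (essLk M x)

theorem ess_cnt_le (c : ℕ) : ∀ M : Finset V, essCnt c M ≤ Fintype.card V ^ c := by
  induction c with
  | zero => intro M; simp [essCnt]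
  | succ c ih =>
    intro M
    rw [essCnt]
    calc _ ≤ ∑ x ∈ M, Fintype.card V ^ c := Finset.sum_le_sum (fun x _ => ih _)
      _ = M.card * Fintype.card V ^ c := by simp
      _ ≤ Fintype.card V * Fintype.card V ^ c := Nat.mul_le_mul_right _ (Finset.card_le_univ M)
      _ = _ := by ring

theorem ess_card_pos : (0 : ℝ) < Fintype.card V := by
  have : 0 < Fintype.card V := Fintype.card_pos
  exact_mod_cast this

/-- upper Markov -/
theorem ess_markov (c : ℕ) (M : Finset V) (κ η : ℝ)
    (h : (essCnt (c + 1) M : ℝ) ≤ η * (Fintype.card V : ℝ) ^ (c + 1)) :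
    ((M.filter (fun x => κ * (Fintype.card V : ℝ) ^ c < essCnt c (essLk M x))).card : ℝ) * κ
      ≤ η * Fintype.card V := by
  have hq : (0 : ℝ) < Fintype.card V := ess_card_pos (V := V)
  set D := M.filter (fun x => κ * (Fintype.card V : ℝ) ^ c < essCnt c (essLk M x)) with hD
  have h1 : (D.card : ℝ) * (κ * (Fintype.card V : ℝ) ^ c) ≤ essCnt (c + 1) M := by
    calc (D.card : ℝ) * (κ * (Fintype.card V : ℝ) ^ c)
        = ∑ x ∈ D, (κ * (Fintype.card V : ℝ) ^ c) := by simp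
      _ ≤ ∑ x ∈ D, (essCnt c (essLk M x) : ℝ) := by
          apply Finset.sum_le_sum
          intro x hx
          exact (Finset.mem_filter.1 hx).2.le
      _ ≤ ∑ x ∈ M, (essCnt c (essLk M x) : ℝ) := by
          apply Finset.sum_le_sum_of_subset_of_nonneg (Finset.filter_subset _ _)
          intros; positivity
      _ = _ := by rw [essCnt]; push_cast; rfl
  have h2 := h1.trans h
  have hp : (0 : ℝ) < (Fintype.card V : ℝ) ^ c := by positivity
  have h3 : ((D.card : ℝ) * κ) * (Fintype.card V : ℝ) ^ c
      ≤ (η * Fintype.card V) * (Fintype.card V : ℝ) ^ c := by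
    calc _ = _ := by ring
      _ ≤ _ := h2
      _ = _ := by ring
  exact le_of_mul_le_mul_right h3 hp

/-- lower Markov -/
theorem ess_markov' (c : ℕ) (M : Finset V) (η : ℝ) (hη : 0 ≤ η)
    (h : 2 * η * (Fintype.card V : ℝ) ^ (c + 1) ≤ essCnt (c + 1) M) :
    η * Fintype.card V ≤
    ((M.filter (fun x => η * (Fintype.card V : ℝ) ^ c ≤ essCnt c (essLk M x))).card : ℝ) := by
  have hq : (0 : ℝ) < Fintype.card V := ess_card_pos (V := V)
  have hp : (0 : ℝ) < (Fintype.card V : ℝ) ^ c := by positivity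
  set D := M.filter (fun x => η * (Fintype.card V : ℝ) ^ c ≤ essCnt c (essLk M x)) with hD
  have h1 : (essCnt (c + 1) M : ℝ) ≤ D.card * (Fintype.card V : ℝ) ^ c
      + (Fintype.card V : ℝ) * (η * (Fintype.card V : ℝ) ^ c) := by
    calc (essCnt (c + 1) M : ℝ) = ∑ x ∈ M, (essCnt c (essLk M x) : ℝ) := by
          rw [essCnt]; push_cast; rfl
      _ = ∑ x ∈ D, (essCnt c (essLk M x) : ℝ) + ∑ x ∈ M.filter
          (fun x => ¬ (η * (Fintype.card V : ℝ) ^ c ≤ essCnt c (essLk M x))),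
            (essCnt c (essLk M x) : ℝ) := (Finset.sum_filter_add_sum_filter_not _ _ _).symm
      _ ≤ ∑ x ∈ D, (Fintype.card V : ℝ) ^ c + ∑ x ∈ M.filter
          (fun x => ¬ (η * (Fintype.card V : ℝ) ^ c ≤ essCnt c (essLk M x))),
            (η * (Fintype.card V : ℝ) ^ c) := by
          apply add_le_add
          · apply Finset.sum_le_sum
            intro x _
            exact_mod_cast ess_cnt_le c _
          · apply Finset.sum_le_sum
            intro x hx
            exact (not_le.1 (Finset.mem_filter.1 hx).2).le
      _ ≤ _ := by
          simp only [Finset.sum_const, nsmul_eq_mul]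
          gcongr
          exact Finset.card_le_univ _
  have h3 : (η * Fintype.card V) * (Fintype.card V : ℝ) ^ c
      ≤ (D.card : ℝ) * (Fintype.card V : ℝ) ^ c := by
    have : 2 * η * (Fintype.card V : ℝ) ^ (c + 1) =
      2 * ((η * Fintype.card V) * (Fintype.card V : ℝ) ^ c) := by ring
    nlinarith
  exact le_of_mul_le_mul_right h3 hp

theorem ess_card_lk (D : Finset V) (u : V) :
    ((essLk D u).card : ℝ) = ∑ x : V, (if x ∈ D then (1 : ℝ) else 0) * (if u + x ∈ D then 1 else 0) := by
  rw [essLk, Finset.card_filter]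
  push_cast
  rw [← Finset.sum_subset (Finset.subset_univ D)]
  · apply Finset.sum_congr rfl
    intro x hx
    simp [hx]
  · intro x _ hx
    simp [hx]

theorem ess_card_ind (D : Finset V) : ∑ x : V, (if x ∈ D then (1 : ℝ) else 0) = D.card := by
  simp

theorem ess_card_ind_shift (D : Finset V) (u : V) :
    ∑ x : V, (if u + x ∈ D then (1 : ℝ) else 0) = D.card := by
  rw [← ess_card_ind D]
  exact Fintype.sum_equiv (Equiv.addLeft u) _ _ (fun x => rfl)

theorem ess_shift_sum (D : Finset V) (U : Submodule (ZMod 2) V) :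
    ((D.card : ℝ) * Fintype.card U) ^ 2 ≤
      (Fintype.card V : ℝ) * (Fintype.card U * ∑ u : U, ((essLk D (u : V)).card : ℝ)) := by
  let f : V → ℝ := fun x => if x ∈ D then 1 else 0
  have h1 : ∑ x : V, ∑ u : U, f (u + x) = (D.card : ℝ) * Fintype.card U := by
    rw [Finset.sum_comm]
    have : ∀ u : U, ∑ x : V, f (u + x) = D.card := fun u => ess_card_ind_shift D u
    simp [this, mul_comm]
  have h2 : ∑ x : V, (∑ u : U, f (u + x)) ^ 2
      = Fintype.card U * ∑ u : U, ((essLk D (u : V)).card : ℝ) := by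
    have : ∀ u : U, ∑ v : U, ∑ x : V, f (u + x) * f (v + x)
        = ∑ v : U, ((essLk D (v : V)).card : ℝ) := by
      intro u
      refine Fintype.sum_equiv (Equiv.addRight (-u)) _ _ (fun v => ?_)
      rw [ess_card_lk]
      refine Fintype.sum_equiv (Equiv.addLeft (u : V)) _ _ (fun x => ?_)
      have : (((Equiv.addRight (-u)) v : U) : V) + (Equiv.addLeft (u : V)) x = v + x := by
        simp
      rw [this]
      rfl
    calc ∑ x : V, (∑ u : U, f (u + x)) ^ 2
        = ∑ x : V, ∑ u : U, ∑ v : U, f (u + x) * f (v + x) := by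
          apply Finset.sum_congr rfl
          intro x _
          rw [sq, Finset.sum_mul_sum]
      _ = ∑ u : U, ∑ v : U, ∑ x : V, f (u + x) * f (v + x) := by
          rw [Finset.sum_comm]
          apply Finset.sum_congr rfl
          intro u _
          rw [Finset.sum_comm]
      _ = _ := by simp [this]
  have := sq_sum_le_card_mul_sum_sq (s := (Finset.univ : Finset V))
    (f := fun x => ∑ u : U, f (u + x))
  rw [h1, h2] at this
  simpa using this

theorem ess_exists_shift (D : Finset V) (U : Submodule (ZMod 2) V) (η : ℝ) (hη : 0 < η)
    (hD : η * Fintype.card V ≤ D.card) (hU : 2 / η ^ 2 ≤ Fintype.card U) :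
    ∃ u ∈ U, u ≠ 0 ∧ η ^ 2 / 2 * Fintype.card V ≤ (essLk D u).card := by
  by_contra! hcon
  have hq : (0 : ℝ) < Fintype.card V := ess_card_pos (V := V)
  have hp : (0 : ℝ) < Fintype.card U := ess_card_pos (V := U)
  have h := ess_shift_sum D U
  set q : ℝ := (Fintype.card V : ℝ)
  set p : ℝ := (Fintype.card U : ℝ)
  have h1 : ∑ u : U, ((essLk D (u : V)).card : ℝ) < q + p * (η ^ 2 / 2 * q) := by
    calc ∑ u : U, ((essLk D (u : V)).card : ℝ)
        < ∑ u : U, ((if u = 0 then q else 0) + η ^ 2 / 2 * q) := by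
          apply Finset.sum_lt_sum_of_nonempty Finset.univ_nonempty
          intro u _
          by_cases hu : u = 0
          · have : ((essLk D (u : V)).card : ℝ) ≤ q := by
              simp only [q]
              exact_mod_cast Finset.card_le_univ _
            have : 0 < η ^ 2 / 2 * q := by positivity
            simp only [hu, if_true]
            simp only [hu] at *
            linarith
          · have := hcon u u.2 (by simpa using hu)
            simp only [hu, if_false]
            linarith
      _ = _ := by
          rw [Finset.sum_add_distrib]
          simp [p]
  have h2 : (η * q * p) ^ 2 ≤ (D.card * p) ^ 2 := by gcongr
  have h3 : (η * q * p) ^ 2 < q * (p * (q + p * (η ^ 2 / 2 * q))) := by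
    refine lt_of_le_of_lt (h2.trans h) ?_
    gcongr
  have h4 : 2 ≤ p * η ^ 2 := by
    rw [div_le_iff₀ (by positivity)] at hU
    exact hU
  have h5 : (q * q * p) * (p * η ^ 2) < (q * q * p) * (1 + p * η ^ 2 / 2) := by
    calc _ = (η * q * p) ^ 2 := by ring
      _ < _ := h3
      _ = _ := by ring
  have := lt_of_mul_lt_mul_left h5 (by positivity)
  linarith

theorem ess_card_sub (U : Submodule (ZMod 2) V) :
    Fintype.card U = 2 ^ Module.finrank (ZMod 2) U := by
  have := Module.card_eq_pow_finrank (K := ZMod 2) (V := U)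
  rw [ZMod.card] at this
  convert this

theorem ess_card_V : Fintype.card V = 2 ^ Module.finrank (ZMod 2) V := by
  have := Module.card_eq_pow_finrank (K := ZMod 2) (V := V)
  rw [ZMod.card] at this
  convert this

end ESS

theorem ess_affine (m : ℕ) : ∀ η : ℝ, 0 < η → ∃ d : ℕ,
    ∀ (V : Type) [AddCommGroup V] [Module (ZMod 2) V] [Fintype V],
    ∀ (D : Finset V) (U : Submodule (ZMod 2) V), d ≤ Module.finrank (ZMod 2) U →
      η * Fintype.card V ≤ D.card →
      ∃ x : V, ∃ W : Submodule (ZMod 2) V, W ≤ U ∧ Module.finrank (ZMod 2) W = m ∧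
        ∀ w ∈ W, x + w ∈ D := by
  induction m with
  | zero =>
    intro η hη
    refine ⟨0, ?_⟩
    intro V _ _ _ D U _ hD
    have hq : (0 : ℝ) < Fintype.card V := ess_card_pos (V := V)
    have : (0 : ℝ) < D.card := lt_of_lt_of_le (by positivity) hD
    have hpos : 0 < D.card := by exact_mod_cast this
    obtain ⟨x, hx⟩ := Finset.card_pos.1 hpos
    refine ⟨x, ⊥, bot_le, by simp, ?_⟩
    intro w hw
    rw [Submodule.mem_bot] at hw
    simpa [hw] using hx
  | succ m ih =>
    intro η hη
    obtain ⟨d, hd⟩ := ih (η ^ 2 / 2) (by positivity)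
    obtain ⟨d', hd'⟩ := pow_unbounded_of_one_lt (2 / η ^ 2) (one_lt_two (α := ℝ))
    refine ⟨max (d + 1) d', ?_⟩
    intro V _ _ _ D U hU hD
    have hUc : 2 / η ^ 2 ≤ Fintype.card U := by
      rw [ess_card_sub]
      push_cast
      refine hd'.le.trans ?_
      exact pow_le_pow_right₀ one_le_two ((le_max_right _ _).trans hU)
    obtain ⟨u, huU, hu0, hu⟩ := ess_exists_shift D U η hη hD hUc
    -- complement of u in U
    obtain ⟨T, hT⟩ := Submodule.exists_isCompl (Submodule.span (ZMod 2) {u})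
    have hspan : Submodule.span (ZMod 2) {u} ≤ U := by
      rw [Submodule.span_singleton_le_iff_mem]; exact huU
    have hfr1 : Module.finrank (ZMod 2) (Submodule.span (ZMod 2) {u}) = 1 :=
      finrank_span_singleton hu0
    have hsup : Submodule.span (ZMod 2) {u} ⊔ (T ⊓ U) = U := by
      rw [← sup_inf_assoc_of_le T hspan, hT.sup_eq_top, top_inf_eq]
    have hfr : Module.finrank (ZMod 2) U ≤ 1 + Module.finrank (ZMod 2) (T ⊓ U : Submodule _ _) := by
      have := Submodule.finrank_add_le_finrank_add_finrank (Submodule.span (ZMod 2) {u}) (T ⊓ U)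
      rw [hsup, hfr1] at this
      exact this
    obtain ⟨x, W, hWU, hWm, hW⟩ := hd V (essLk D u) (T ⊓ U)
      (by have := (le_max_left (d+1) d').trans hU; omega) hu
    refine ⟨x, Submodule.span (ZMod 2) {u} ⊔ W, sup_le hspan (hWU.trans inf_le_right), ?_, ?_⟩
    · have := Submodule.finrank_sup_add_finrank_inf_eq (Submodule.span (ZMod 2) {u}) W
      have hbot : Submodule.span (ZMod 2) {u} ⊓ W = ⊥ := by
        rw [eq_bot_iff, ← hT.inf_eq_bot]
        exact inf_le_inf_left _ (hWU.trans inf_le_left)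
      rw [hbot, hfr1, hWm, finrank_bot] at this
      omega
    · intro w hw
      obtain ⟨a, ha, b, hb, rfl⟩ := Submodule.mem_sup.1 hw
      obtain ⟨r, rfl⟩ := Submodule.mem_span_singleton.1 ha
      have h := Finset.mem_filter.1 (hW b hb)
      have hr : r = 0 ∨ r = 1 := essZ r
      rcases hr with rfl | rfl
      · simpa using h.1
      · have := h.2
        rw [one_smul]
        rwa [show x + (u + b) = u + (x + b) by abel]

/-- Bose-Burton structure with core `W`. -/
def EssBB {V : Type} [AddCommGroup V] [Module (ZMod 2) V] [Fintype V]
    (W : Submodule (ZMod 2) V) : ℕ → Finset V → Prop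
  | 0, _ => True
  | c + 1, M => ∃ x, (∀ w ∈ W, x + w ∈ M) ∧ EssBB W c (essLk M x)

theorem ess_supersat (m c : ℕ) : ∀ η : ℝ, 0 < η → ∃ d : ℕ,
    ∀ (V : Type) [AddCommGroup V] [Module (ZMod 2) V] [Fintype V],
    ∀ (M : Finset V) (U : Submodule (ZMod 2) V), d ≤ Module.finrank (ZMod 2) U →
      η * (Fintype.card V : ℝ) ^ c ≤ essCnt c M →
      ∃ W : Submodule (ZMod 2) V, W ≤ U ∧ Module.finrank (ZMod 2) W = m ∧ EssBB W c M := by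
  induction c with
  | zero =>
    intro η hη
    obtain ⟨d, hd⟩ := ess_affine m 1 one_pos
    refine ⟨d, ?_⟩
    intro V _ _ _ M U hU _
    obtain ⟨x, W, h1, h2, _⟩ := hd V Finset.univ U hU (by simp)
    exact ⟨W, h1, h2, trivial⟩
  | succ c ih =>
    intro η hη
    obtain ⟨d1, hd1⟩ := ih (η / 2) (by positivity)
    obtain ⟨d, hd⟩ := ess_affine d1 (η / 2) (by positivity)
    refine ⟨d, ?_⟩
    intro V _ _ _ M U hU hM
    have h := ess_markov' c M (η / 2) (by positivity) (by rwa [mul_div_cancel₀ _ two_ne_zero])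
    obtain ⟨x, W1, hW1U, hW1, hx⟩ := hd V _ U hU h
    have hx0 := (Finset.mem_filter.1 (hx 0 W1.zero_mem)).2
    rw [add_zero] at hx0
    obtain ⟨W, hW, hWm, hBB⟩ := hd1 V (essLk M x) W1 hW1.ge hx0
    refine ⟨W, hW.trans hW1U, hWm, x, ?_, hBB⟩
    intro w hw
    exact (Finset.mem_filter.1 (hx w (hW hw))).1

theorem ess_BB_tuple {V : Type} [AddCommGroup V] [Module (ZMod 2) V] [Fintype V]
    (W : Submodule (ZMod 2) V) (c : ℕ) : ∀ M : Finset V, EssBB W c M →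
    ∃ w : Fin c → V, ∀ a : Fin c → ZMod 2, a ≠ 0 → ∀ z ∈ W, ∑ i, a i • w i + z ∈ M := by
  induction c with
  | zero =>
    intro M _
    exact ⟨Fin.elim0, fun a ha => absurd (Subsingleton.elim a 0) ha⟩
  | succ c ih =>
    rintro M ⟨x, hx, hBB⟩
    obtain ⟨w, hw⟩ := ih _ hBB
    refine ⟨Fin.cons x w, ?_⟩
    intro a ha z hz
    rw [Fin.sum_univ_succ]
    simp only [Fin.cons_zero, Fin.cons_succ]
    have hr : a 0 = 0 ∨ a 0 = 1 := essZ (a 0)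
    by_cases ht : Fin.tail a = 0
    · have h0 : ∀ i : Fin c, a i.succ = 0 := fun i => congrFun ht i
      have ha0 : a 0 = 1 := by
        rcases hr with h | h
        · exfalso
          apply ha
          funext i
          refine Fin.cases h h0 i
        · exact h
      simpa [h0, ha0] using hx z hz
    · have := Finset.mem_filter.1 (hw (Fin.tail a) ht z hz)
      simp only [Fin.tail] at this
      rcases hr with h | h
      · rw [h, zero_smul, zero_add]; exact this.1
      · rw [h, one_smul, add_assoc]; exact this.2

theorem ess_restriction {k c n : ℕ} (N : Set (Fin k → ZMod 2))
    (φ : (Fin k → ZMod 2) →ₗ[ZMod 2] (Fin c → ZMod 2)) (hφ : ∀ x ∈ N, φ x ≠ 0)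
    (M : Finset (Fin n → ZMod 2)) (h0 : 0 ∉ M) (W : Submodule (ZMod 2) (Fin n → ZMod 2))
    (hW : Module.finrank (ZMod 2) W = k) (hBB : EssBB W c M) :
    HasRestriction N (M : Set (Fin n → ZMod 2)) := by
  obtain ⟨w, hw⟩ := ess_BB_tuple W c M hBB
  have e : (Fin k → ZMod 2) ≃ₗ[ZMod 2] W := LinearEquiv.ofFinrankEq _ _ (by simp [hW])
  let ψ : (Fin k → ZMod 2) →ₗ[ZMod 2] (Fin n → ZMod 2) :=
    (Fintype.linearCombination (ZMod 2) w).comp φ + W.subtype.comp e.toLinearMap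
  have hψ : ∀ v, ψ v = ∑ i, φ v i • w i + (e v : Fin n → ZMod 2) := by
    intro v
    simp [ψ, Fintype.linearCombination_apply]
  refine ⟨ψ, ?_, ?_⟩
  · rw [injective_iff_map_eq_zero]
    intro v hv
    rw [hψ] at hv
    have hφv : φ v = 0 := by
      by_contra hne
      apply h0
      rw [← hv]
      exact hw _ hne _ (e v).2
    rw [hφv] at hv
    simpa using hv
  · rintro _ ⟨v, hv, rfl⟩
    rw [hψ]
    exact hw _ (hφ v hv) _ (e v).2

section ESS2

variable {V : Type} [AddCommGroup V] [Module (ZMod 2) V] [Fintype V]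

noncomputable def essF (W : Submodule (ZMod 2) V) : Finset V := Finset.univ.filter (fun x => x ∈ W)

theorem ess_mem_F (W : Submodule (ZMod 2) V) (x : V) : x ∈ essF W ↔ x ∈ W := by simp [essF]

theorem ess_card_F (W : Submodule (ZMod 2) V) : (essF W).card = Fintype.card W := by
  rw [essF, Fintype.card_subtype]

theorem ess_codim (W : Submodule (ZMod 2) V) : ∃ j, (essF W).card * 2 ^ j = Fintype.card V := by
  refine ⟨Module.finrank (ZMod 2) V - Module.finrank (ZMod 2) W, ?_⟩
  rw [ess_card_F, ess_card_sub, ess_card_V (V := V), ← pow_add]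
  congr 1
  have := Submodule.finrank_le W
  omega

theorem ess_lk_lower (M : Finset V) (x : V) :
    2 * (M.card : ℝ) - Fintype.card V ≤ (essLk M x).card := by
  rw [ess_card_lk]
  have h1 := ess_card_ind M
  have h2 := ess_card_ind_shift M x
  have h3 : ∑ z : V, (1 : ℝ) = Fintype.card V := by simp
  have : ∑ z : V, ((if z ∈ M then (1 : ℝ) else 0) + (if x + z ∈ M then (1 : ℝ) else 0) - 1)
      ≤ ∑ z : V, (if z ∈ M then (1 : ℝ) else 0) * (if x + z ∈ M then 1 else 0) := by
    apply Finset.sum_le_sum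
    intro z _
    split_ifs <;> norm_num
  rw [Finset.sum_sub_distrib, Finset.sum_add_distrib, h1, h2, h3] at this
  linarith

theorem ess_three (M : Finset V) (x y : V) :
    3 * (M.card : ℝ) ≤ Fintype.card V + (essLk M x).card + (essLk M y).card
      + (essLk M (x + y)).card := by
  have h1 := ess_card_ind M
  have h2 := ess_card_ind_shift M x
  have h2' := ess_card_ind_shift M y
  have h3 : ∑ z : V, (1 : ℝ) = Fintype.card V := by simp
  have h4 : ((essLk M (x + y)).card : ℝ) =
      ∑ z : V, (if x + z ∈ M then (1 : ℝ) else 0) * (if y + z ∈ M then 1 else 0) := by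
    rw [ess_card_lk]
    symm
    refine Fintype.sum_equiv (Equiv.addLeft x) _ _ (fun z => ?_)
    have : x + y + (Equiv.addLeft x) z = y + z := by
      have h := ZModModule.add_self x
      simp only [Equiv.coe_addLeft]
      calc x + y + (x + z) = (x + x) + (y + z) := by abel
        _ = _ := by rw [h, zero_add]
    rw [this]
    rfl
  rw [h4, ess_card_lk, ess_card_lk, ← h3, ← Finset.sum_add_distrib, ← Finset.sum_add_distrib,
    ← Finset.sum_add_distrib]
  have : 3 * (M.card : ℝ) = ∑ z : V, ((if z ∈ M then (1 : ℝ) else 0)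
      + (if x + z ∈ M then (1 : ℝ) else 0) + (if y + z ∈ M then (1 : ℝ) else 0)) := by
    rw [Finset.sum_add_distrib, Finset.sum_add_distrib, h1, h2, h2']; ring
  rw [this]
  apply Finset.sum_le_sum
  intro z _
  split_ifs <;> norm_num

/-- Freiman 3/2. -/
theorem ess_freiman (G : Finset V) (hne : G.Nonempty)
    (h : 2 * (Finset.image₂ (fun a b => a + b) G G).card < 3 * G.card) :
    ∃ H : Submodule (ZMod 2) V, essF H = Finset.image₂ (fun a b => a + b) G G := by
  set S := Finset.image₂ (fun a b => a + b) G G with hS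
  have hmem : ∀ a ∈ G, ∀ b ∈ G, a + b ∈ S := fun a ha b hb => Finset.mem_image₂_of_mem ha hb
  have key : ∀ u ∈ S, G.card < 2 * (essLk G u).card := by
    intro u hu
    obtain ⟨a, ha, b, hb, rfl⟩ := Finset.mem_image₂.1 hu
    have h1 : G.image (fun g => a + g) ∪ G.image (fun g => b + g) ⊆ S := by
      intro z hz
      rcases Finset.mem_union.1 hz with hz | hz
      · obtain ⟨g, hg, rfl⟩ := Finset.mem_image.1 hz
        exact hmem _ ha _ hg
      · obtain ⟨g, hg, rfl⟩ := Finset.mem_image.1 hz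
        exact hmem _ hb _ hg
    have h2 := Finset.card_le_card h1
    have h3 := Finset.card_union_add_card_inter (G.image (fun g => a + g)) (G.image (fun g => b + g))
    rw [Finset.card_image_of_injective _ (add_right_injective a),
      Finset.card_image_of_injective _ (add_right_injective b)] at h3
    have h4 : (G.image (fun g => a + g) ∩ G.image (fun g => b + g)).card
        ≤ (essLk G (a + b)).card := by
      have : G.image (fun g => a + g) ∩ G.image (fun g => b + g)
          ⊆ (essLk G (a + b)).image (fun g => a + g) := by
        intro z hz
        obtain ⟨hz1, hz2⟩ := Finset.mem_inter.1 hz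
        obtain ⟨g, hg, rfl⟩ := Finset.mem_image.1 hz1
        obtain ⟨g', hg', he⟩ := Finset.mem_image.1 hz2
        refine Finset.mem_image.2 ⟨g, Finset.mem_filter.2 ⟨hg, ?_⟩, rfl⟩
        have : a + b + g = g' := by
          have hb2 := ZModModule.add_self b
          calc a + b + g = b + (a + g) := by abel
            _ = b + (b + g') := by rw [he]
            _ = (b + b) + g' := by abel
            _ = g' := by rw [hb2, zero_add]
        rw [this]; exact hg'
      exact (Finset.card_le_card this).trans Finset.card_image_le
    omega
  have hclosed : ∀ u ∈ S, ∀ v ∈ S, u + v ∈ S := by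
    intro u hu v hv
    have h1 := key u hu
    have h2 := key v hv
    have h3 := Finset.card_union_add_card_inter (essLk G u) (essLk G v)
    have h4 : (essLk G u ∪ essLk G v).card ≤ G.card :=
      Finset.card_le_card (Finset.union_subset (Finset.filter_subset _ _) (Finset.filter_subset _ _))
    have h5 : 0 < (essLk G u ∩ essLk G v).card := by omega
    obtain ⟨g, hg⟩ := Finset.card_pos.1 h5
    obtain ⟨hg1, hg2⟩ := Finset.mem_inter.1 hg
    have e1 := (Finset.mem_filter.1 hg1).2
    have e2 := (Finset.mem_filter.1 hg2).2
    have := hmem _ e1 _ e2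
    have hgg := ZModModule.add_self g
    rwa [show u + g + (v + g) = (u + v) + (g + g) by abel, hgg, add_zero] at this
  have h0 : (0 : V) ∈ S := by
    obtain ⟨g, hg⟩ := hne
    have := hmem g hg g hg
    rwa [ZModModule.add_self] at this
  refine ⟨{ carrier := {x | x ∈ S}, add_mem' := fun {a b} ha hb => hclosed a ha b hb,
            zero_mem' := h0, smul_mem' := ?_ }, ?_⟩
  · intro r x hx
    rcases essZ r with rfl | rfl
    · simpa using h0
    · simpa using hx
  · ext x
    rw [ess_mem_F]
    rfl

theorem ess_geom (C : Finset V) (W : Submodule (ZMod 2) V) (x : V) (a b : ℝ)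
    (ha : 2 * (C.card : ℝ) ≤ (essF W).card + a)
    (hb : (((essF W).filter (fun w => w ∉ C ∧ x + w ∉ C)).card : ℝ) ≤ b) :
    ((C \ essF W).card : ℝ) ≤ a + b ∧ ((essF W).card : ℝ) - b ≤ 2 * C.card ∧
    (x ∈ W ∨ (C.card : ℝ) ≤ 2 * (a + b)) := by
  set F := essF W with hF
  set C' := C.image (fun c => x + c) with hC'
  have hmC' : ∀ z, z ∈ C' ↔ x + z ∈ C := by
    intro z
    rw [hC', Finset.mem_image]
    have hx := ZModModule.add_self x
    constructor
    · rintro ⟨c, hc, rfl⟩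
      rwa [← add_assoc, hx, zero_add]
    · intro h
      exact ⟨x + z, h, by rw [← add_assoc, hx, zero_add]⟩
  have hcC' : C'.card = C.card := Finset.card_image_of_injective _ (add_right_injective x)
  set U := C ∪ C' with hU
  have hUc : (U.card : ℝ) ≤ 2 * C.card := by
    have := Finset.card_union_le C C'
    rw [hcC'] at this
    have h2 : (U.card : ℝ) ≤ C.card + C.card := by exact_mod_cast this
    linarith
  have hfilt : F.filter (fun w => w ∉ C ∧ x + w ∉ C) = F \ U := by
    ext z
    simp [hU, hmC']
  rw [hfilt] at hb
  have e1 : ((F \ U).card : ℝ) + (F ∩ U).card = F.card := by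
    exact_mod_cast Finset.card_sdiff_add_card_inter F U
  have e2 : ((U \ F).card : ℝ) + (U ∩ F).card = U.card := by
    exact_mod_cast Finset.card_sdiff_add_card_inter U F
  rw [Finset.inter_comm] at e2
  have e3 : ((U \ F).card : ℝ) ≤ a + b := by linarith
  have e4 : ((C \ F).card : ℝ) ≤ (U \ F).card := by
    exact_mod_cast Finset.card_le_card (Finset.sdiff_subset_sdiff Finset.subset_union_left le_rfl)
  have e5 : ((C' \ F).card : ℝ) ≤ (U \ F).card := by
    exact_mod_cast Finset.card_le_card (Finset.sdiff_subset_sdiff Finset.subset_union_right le_rfl)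
  have e0 : (0 : ℝ) ≤ (U \ F).card := by positivity
  refine ⟨by linarith, by linarith, ?_⟩
  by_cases hx : x ∈ W
  · exact Or.inl hx
  right
  have e6 : (C ∩ F).card ≤ (C' \ F).card := by
    rw [← Finset.card_image_of_injective (C ∩ F) (add_right_injective x)]
    apply Finset.card_le_card
    intro z hz
    obtain ⟨c, hc, rfl⟩ := Finset.mem_image.1 hz
    obtain ⟨hc1, hc2⟩ := Finset.mem_inter.1 hc
    refine Finset.mem_sdiff.2 ⟨Finset.mem_image.2 ⟨c, hc1, rfl⟩, ?_⟩
    rw [hF, ess_mem_F] at hc2 ⊢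
    intro hcon
    exact hx ((Submodule.add_mem_iff_left W hc2).1 hcon)
  have e6' : ((C ∩ F).card : ℝ) ≤ (C' \ F).card := by exact_mod_cast e6
  have e7 : ((C \ F).card : ℝ) + (C ∩ F).card = C.card := by
    exact_mod_cast Finset.card_sdiff_add_card_inter C F
  linarith

theorem ess_good (c : ℕ) (M : Finset V) (κ η : ℝ)
    (h : (essCnt (c + 1) M : ℝ) ≤ κ * η * (Fintype.card V : ℝ) ^ (c + 1)) (hη : 0 < η) :
    ∃ G ⊆ M, (∀ x ∈ G, (essCnt c (essLk M x) : ℝ) ≤ η * (Fintype.card V : ℝ) ^ c) ∧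
      ((M \ G).card : ℝ) ≤ κ * Fintype.card V ∧
      (M.card : ℝ) - κ * Fintype.card V ≤ G.card := by
  have hm := ess_markov c M η (κ * η) h
  refine ⟨M.filter (fun x => ¬ η * (Fintype.card V : ℝ) ^ c < essCnt c (essLk M x)),
    Finset.filter_subset _ _, ?_, ?_⟩
  · intro x hx
    exact not_lt.1 (Finset.mem_filter.1 hx).2
  have e := Finset.card_filter_add_card_filter_not (s := M)
    (fun x => η * (Fintype.card V : ℝ) ^ c < essCnt c (essLk M x))
  have e' : ((M.filter (fun x => η * (Fintype.card V : ℝ) ^ c < essCnt c (essLk M x))).card : ℝ) +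
    (M.filter (fun x => ¬ η * (Fintype.card V : ℝ) ^ c < essCnt c (essLk M x))).card = M.card := by
    exact_mod_cast e
  have h3 : ((M.filter (fun x => η * (Fintype.card V : ℝ) ^ c < essCnt c (essLk M x))).card : ℝ)
      ≤ κ * Fintype.card V := by
    have : ((M.filter (fun x => η * (Fintype.card V : ℝ) ^ c < essCnt c (essLk M x))).card : ℝ) * η
      ≤ (κ * Fintype.card V) * η := by linarith
    exact le_of_mul_le_mul_right this hη
  constructor
  · have := Finset.card_sdiff_add_card_eq_card (Finset.filter_subset
      (fun x => ¬ η * (Fintype.card V : ℝ) ^ c < essCnt c (essLk M x)) M)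
    have h4 : ((M \ M.filter (fun x => ¬ η * (Fintype.card V : ℝ) ^ c < essCnt c (essLk M x))).card : ℝ)
      + (M.filter (fun x => ¬ η * (Fintype.card V : ℝ) ^ c < essCnt c (essLk M x))).card = M.card := by
      exact_mod_cast this
    linarith
  · linarith

theorem ess_cnt_one (M : Finset V) : essCnt 1 M = M.card := by simp [essCnt]

end ESS2

def EssP (t : ℕ) : Prop := ∀ δ : ℝ, 0 < δ → ∃ ε : ℝ, 0 < ε ∧ ∃ η : ℝ, 0 < η ∧
    ∀ (V : Type) [AddCommGroup V] [Module (ZMod 2) V] [Fintype V],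
    ∀ (M : Finset V), (1 - 1 / 2 ^ t - ε) * Fintype.card V ≤ M.card →
      (essCnt (t + 1) M : ℝ) ≤ η * (Fintype.card V : ℝ) ^ (t + 1) →
      ∃ W : Submodule (ZMod 2) V, (essF W).card * 2 ^ t = Fintype.card V ∧
        ((M ∩ essF W).card : ℝ) ≤ δ * Fintype.card V

theorem ess_P1 : EssP 1 := by
  intro δ hδ
  set κ := min δ (1 / 100) with hκ
  have hκ0 : 0 < κ := by positivity
  have hκδ : κ ≤ δ := min_le_left _ _
  have hκ1 : κ ≤ 1 / 100 := min_le_right _ _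
  refine ⟨κ, hκ0, κ * κ, by positivity, ?_⟩
  intro V _ _ _ M hM hcnt
  have hq : (0 : ℝ) < Fintype.card V := ess_card_pos (V := V)
  obtain ⟨G, hGM, hG, hMG, hGc⟩ := ess_good 1 M κ κ hcnt hκ0
  simp only [ess_cnt_one, pow_one] at hG
  set q : ℝ := (Fintype.card V : ℝ) with hqdef
  have hM' : (1 / 2 - κ) * q ≤ M.card := by
    convert hM using 2; norm_num
  have hκq : κ * q ≤ 1 / 100 * q := by gcongr
  have hGbig : (48 / 100) * q ≤ G.card := by nlinarith
  have hdisj : Disjoint (Finset.image₂ (fun a b => a + b) G G) G := by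
    rw [Finset.disjoint_left]
    intro z hz hzG
    obtain ⟨a, ha, b, hb, rfl⟩ := Finset.mem_image₂.1 hz
    have := ess_three M a b
    have h1 := hG a ha
    have h2 := hG b hb
    have h3 := hG _ hzG
    nlinarith
  have hne : G.Nonempty := by
    rw [← Finset.card_pos]
    have : (0 : ℝ) < G.card := by linarith
    exact_mod_cast this
  have hsum : (((Finset.image₂ (fun a b => a + b) G G).card : ℝ)) + G.card ≤ q := by
    have := Finset.card_le_univ (Finset.image₂ (fun a b => a + b) G G ∪ G)
    rw [Finset.card_union_of_disjoint hdisj] at this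
    rw [hqdef]
    exact_mod_cast this
  obtain ⟨H, hH⟩ := ess_freiman G hne (by
    have : 2 * ((Finset.image₂ (fun a b => a + b) G G).card : ℝ) < 3 * G.card := by linarith
    exact_mod_cast this)
  rw [← hH] at hsum hdisj
  have hlow : (G.card : ℝ) ≤ (essF H).card := by
    obtain ⟨g, hg⟩ := hne
    have : G.image (fun x => g + x) ⊆ essF H := by
      intro z hz
      obtain ⟨y, hy, rfl⟩ := Finset.mem_image.1 hz
      rw [hH]
      exact Finset.mem_image₂_of_mem hg hy
    have := Finset.card_le_card this
    rw [Finset.card_image_of_injective _ (add_right_injective g)] at this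
    exact_mod_cast this
  refine ⟨H, ?_, ?_⟩
  · obtain ⟨j, hj⟩ := ess_codim H
    have hjr : ((essF H).card : ℝ) * 2 ^ j = q := by rw [hqdef]; exact_mod_cast hj
    have hjj : j = 1 := by
      rcases Nat.lt_trichotomy j 1 with h | h | h
      · have : j = 0 := by omega
        subst this
        simp at hjr
        linarith
      · exact h
      · exfalso
        have : (2 : ℝ) ^ 2 ≤ 2 ^ j := pow_le_pow_right₀ one_le_two h
        nlinarith
    rw [← hjj]; exact hj
  · have : M ∩ essF H ⊆ M \ G := by
      intro z hz
      obtain ⟨h1, h2⟩ := Finset.mem_inter.1 hz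
      exact Finset.mem_sdiff.2 ⟨h1, fun h => Finset.disjoint_left.1 hdisj h2 h⟩
    have : ((M ∩ essF H).card : ℝ) ≤ (M \ G).card := by exact_mod_cast Finset.card_le_card this
    nlinarith

theorem ess_Pstep (t : ℕ) (ht : 1 ≤ t) (hP : EssP t) : EssP (t + 1) := by
  intro δ hδ
  set s : ℝ := 1 / 2 ^ (t + 1) with hs
  have hs0 : 0 < s := by positivity
  have hs4 : s ≤ 1 / 4 := by
    rw [hs]
    have : (2 : ℝ) ^ 2 ≤ 2 ^ (t + 1) := pow_le_pow_right₀ one_le_two (by omega)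
    apply one_div_le_one_div_of_le <;> linarith
  have hst : (1 : ℝ) / 2 ^ t = 2 * s := by
    rw [hs, pow_succ]; field_simp
  set δ' := min δ s / 100 with hδ'
  have hδ'0 : 0 < δ' := by positivity
  have hδ'δ : 100 * δ' ≤ δ := by rw [hδ']; linarith [min_le_left δ s]
  have hδ's : 100 * δ' ≤ s := by rw [hδ']; linarith [min_le_right δ s]
  obtain ⟨ε1, hε1, η1, hη1, hP⟩ := hP δ' hδ'0
  set ε := min δ' (ε1 / 2) with hε
  have hε0 : 0 < ε := by positivity
  have hεδ : ε ≤ δ' := min_le_left _ _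
  have hε2 : 2 * ε ≤ ε1 := by linarith [min_le_right δ' (ε1 / 2)]
  refine ⟨ε, hε0, δ' * η1, by positivity, ?_⟩
  intro V _ _ _ M hM hcnt
  have hq : (0 : ℝ) < Fintype.card V := ess_card_pos (V := V)
  obtain ⟨G, hGM, hG, hMG, hGc⟩ := ess_good (t + 1) M δ' η1 hcnt hη1
  have hlow := ess_lk_lower M
  have hC : ((Mᶜ).card : ℝ) + M.card = Fintype.card V := by
    have := Finset.card_compl_add_card M
    exact_mod_cast this
  have hW : ∀ x ∈ G, ∃ W : Submodule (ZMod 2) V, (essF W).card * 2 ^ t = Fintype.card V ∧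
        ((essLk M x ∩ essF W).card : ℝ) ≤ δ' * Fintype.card V := by
    intro x hx
    apply hP V (essLk M x) _ (hG x hx)
    refine le_trans ?_ (hlow x)
    rw [hst]
    nlinarith
  set q : ℝ := (Fintype.card V : ℝ) with hqdef
  set C := Mᶜ with hCdef
  have hCup : (C.card : ℝ) ≤ (s + ε) * q := by nlinarith
  have hεq : ε * q ≤ δ' * q := by gcongr
  have hδq : 100 * (δ' * q) ≤ s * q := by nlinarith
  have hδq0 : 0 < δ' * q := by positivity
  have hδδq : 100 * (δ' * q) ≤ δ * q := by nlinarith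
  have hWcard : ∀ W : Submodule (ZMod 2) V, (essF W).card * 2 ^ t = Fintype.card V →
      ((essF W).card : ℝ) = 2 * s * q := by
    intro W h
    have : ((essF W).card : ℝ) * 2 ^ t = q := by rw [hqdef]; exact_mod_cast h
    rw [← hst, ← this]; field_simp
  have hW2 : ∀ x ∈ G, ∃ W : Submodule (ZMod 2) V, (essF W).card * 2 ^ t = Fintype.card V ∧
      ((C \ essF W).card : ℝ) ≤ 3 * (δ' * q) ∧ s * q - δ' * q ≤ C.card ∧ x ∈ W := by
    intro x hx
    obtain ⟨W, hWc, hWM⟩ := hW x hx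
    have hc := hWcard W hWc
    obtain ⟨g1, g2, g3⟩ := ess_geom C W x (2 * ε * q) (δ' * q) (by rw [hc]; nlinarith) (by
      convert hWM using 3
      ext z
      simp [hCdef, essLk]
      tauto)
    have hlowC : s * q - δ' * q ≤ C.card := by
      rw [hc] at g2; linarith
    refine ⟨W, hWc, by linarith, hlowC, ?_⟩
    rcases g3 with h | h
    · exact h
    · exfalso
      linarith
  clear hW
  have hGpos : 2 * s * q < G.card := by nlinarith
  have hGne : G.Nonempty := by
    rw [← Finset.card_pos]
    have : (0 : ℝ) < G.card := lt_of_le_of_lt (by positivity) hGpos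
    exact_mod_cast this
  obtain ⟨x0, hx0⟩ := hGne
  obtain ⟨W0, hW0c, hW0C, hClow, -⟩ := hW2 x0 hx0
  have hex : ∃ x ∈ G, x ∉ W0 := by
    by_contra! hcon
    have : G ⊆ essF W0 := fun x hx => (ess_mem_F _ _).2 (hcon x hx)
    have h1 : (G.card : ℝ) ≤ (essF W0).card := by exact_mod_cast Finset.card_le_card this
    rw [hWcard W0 hW0c] at h1
    linarith
  obtain ⟨x1, hx1, hx1W⟩ := hex
  obtain ⟨W1, hW1c, hW1C, -, hx1W1⟩ := hW2 x1 hx1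
  set W := W0 ⊓ W1 with hWdef
  have hCW : ((C \ essF W).card : ℝ) ≤ 6 * (δ' * q) := by
    have : C \ essF W ⊆ (C \ essF W0) ∪ (C \ essF W1) := by
      intro z hz
      simp only [Finset.mem_sdiff, Finset.mem_union, ess_mem_F, hWdef, Submodule.mem_inf] at hz ⊢
      tauto
    have h1 := (Finset.card_le_card this).trans (Finset.card_union_le _ _)
    have h2 : ((C \ essF W).card : ℝ) ≤ (C \ essF W0).card + (C \ essF W1).card := by
      exact_mod_cast h1
    linarith
  have e7 : ((C \ essF W).card : ℝ) + (C ∩ essF W).card = C.card := by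
    exact_mod_cast Finset.card_sdiff_add_card_inter C (essF W)
  have e8 : ((C ∩ essF W).card : ℝ) ≤ (essF W).card := by
    exact_mod_cast Finset.card_le_card Finset.inter_subset_right
  obtain ⟨j, hj⟩ := ess_codim W
  have hlt : (essF W).card < (essF W1).card := by
    apply Finset.card_lt_card
    rw [Finset.ssubset_iff_of_subset]
    · exact ⟨x1, (ess_mem_F _ _).2 hx1W1, fun h => hx1W (Submodule.mem_inf.1 ((ess_mem_F _ _).1 h)).1⟩
    · intro z hz
      exact (ess_mem_F _ _).2 (Submodule.mem_inf.1 ((ess_mem_F _ _).1 hz)).2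
  have hjr : ((essF W).card : ℝ) * 2 ^ j = q := by rw [hqdef]; exact_mod_cast hj
  have hs1 : s * 2 ^ (t + 1) = 1 := by rw [hs]; field_simp
  have hjt : j = t + 1 := by
    rcases Nat.lt_trichotomy j (t + 1) with h | h | h
    · exfalso
      have h2 : 2 ^ j ≤ 2 ^ t := Nat.pow_le_pow_right (by norm_num) (by omega)
      have h3 : (essF W).card * 2 ^ j < (essF W1).card * 2 ^ t := by
        calc _ < (essF W1).card * 2 ^ j := Nat.mul_lt_mul_of_pos_right hlt (by positivity)
          _ ≤ _ := Nat.mul_le_mul_left _ h2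
      omega
    · exact h
    · exfalso
      have h2 : (2 : ℝ) ^ (t + 2) ≤ 2 ^ j := pow_le_pow_right₀ one_le_two h
      have h3 : s / 2 * q < (essF W).card := by linarith
      have h4 : s / 2 * q * 2 ^ (t + 2) < q := by
        calc s / 2 * q * 2 ^ (t + 2) < (essF W).card * 2 ^ (t + 2) := by gcongr
          _ ≤ (essF W).card * 2 ^ j := by gcongr
          _ = q := hjr
      have h5 : s / 2 * q * 2 ^ (t + 2) = (s * 2 ^ (t + 1)) * q := by ring
      rw [h5, hs1] at h4
      linarith
  subst hjt
  refine ⟨W, hj, ?_⟩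
  have hWc : ((essF W).card : ℝ) = s * q := by
    rw [← hjr]
    calc ((essF W).card : ℝ) = (essF W).card * (s * 2 ^ (t + 1)) := by rw [hs1, mul_one]
      _ = _ := by ring
  have e9 : ((M ∩ essF W).card : ℝ) + (C ∩ essF W).card = (essF W).card := by
    have := Finset.card_inter_add_card_sdiff (essF W) M
    rw [Finset.inter_comm M, Finset.inter_comm C, hCdef, ← Finset.sdiff_eq_inter_compl]
    exact_mod_cast this
  linarith

theorem ess_P (t : ℕ) (ht : 1 ≤ t) : EssP t := by
  induction t, ht using Nat.le_induction with
  | base => exact ess_P1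
  | succ t ht ih => exact ess_Pstep t ht ih

/-- Stability for the matroidal Erdős–Stone theorem. -/
theorem erdos_stone_stability {k : ℕ} (N : Set (Fin k → ZMod 2))
    (hN0 : 0 ∉ N) (hNne : N.Nonempty) (hχ : 2 ≤ critNum N)
    {δ : ℝ} (hδ : 0 < δ) :
    ∃ ε : ℝ, 0 < ε ∧ ∃ n₀ : ℕ, ∀ n ≥ n₀, ∀ M : Set (Fin n → ZMod 2),
      0 ∉ M → ¬ HasRestriction N M →
      |(M.ncard : ℝ) - (1 - 2 ^ (1 - (critNum N : ℤ))) * 2 ^ n| ≤ ε * 2 ^ n →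
      ∃ W : Submodule (ZMod 2) (Fin n → ZMod 2),
        Module.finrank (ZMod 2) W = n - critNum N + 1 ∧
        ((symmDiff M {x : Fin n → ZMod 2 | x ≠ 0 ∧ x ∉ W}).ncard : ℝ) < δ * 2 ^ n := by
  obtain ⟨φ, hφ⟩ : critNum N ∈ {c | ∃ φ : (Fin k → ZMod 2) →ₗ[ZMod 2] (Fin c → ZMod 2),
      ∀ x ∈ N, φ x ≠ 0} := by
    apply Nat.sInf_mem
    apply Nat.nonempty_of_pos_sInf
    change 0 < critNum N
    omega
  obtain ⟨t, ht⟩ : ∃ t, critNum N = t + 1 := ⟨critNum N - 1, by omega⟩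
  rw [ht] at hχ
  generalize critNum N = c at *
  subst ht
  obtain ⟨ε1, hε1, η, hη, hP⟩ := ess_P t (by omega) (δ / 4) (by positivity)
  obtain ⟨d, hd⟩ := ess_supersat k (t + 1) η hη
  refine ⟨min ε1 (δ / 4), by positivity, max (t + 1) d, ?_⟩
  intro n hn M hM0 hfree hM
  have hn1 : t + 1 ≤ n := (le_max_left _ _).trans hn
  have hn2 : d ≤ n := (le_max_right _ _).trans hn
  have hcard : Fintype.card (Fin n → ZMod 2) = 2 ^ n := by simp
  have hcardR : (Fintype.card (Fin n → ZMod 2) : ℝ) = 2 ^ n := by rw [hcard]; push_cast; rfl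
  have hpow : (2 : ℝ) ^ (1 - ((t + 1 : ℕ) : ℤ)) = 1 / 2 ^ t := by
    rw [show (1 - ((t + 1 : ℕ) : ℤ)) = -(t : ℤ) by push_cast; ring, zpow_neg, zpow_natCast,
      one_div]
  rw [hpow] at hM
  set M' : Finset (Fin n → ZMod 2) := M.toFinite.toFinset with hM'
  have hMM : (M' : Set (Fin n → ZMod 2)) = M := by simp [hM']
  have hMn : M.ncard = M'.card := by rw [← hMM, Set.ncard_coe_finset]
  rw [hMn] at hM
  have hq : (0 : ℝ) < 2 ^ n := by positivity
  obtain ⟨hMl, -⟩ := abs_le.1 hM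
  have hm1 : min ε1 (δ / 4) * 2 ^ n ≤ ε1 * 2 ^ n := by gcongr; exact min_le_left _ _
  have hm2 : min ε1 (δ / 4) * 2 ^ n ≤ δ / 4 * 2 ^ n := by gcongr; exact min_le_right _ _
  have hcnt : (essCnt (t + 1) M' : ℝ) ≤ η * (Fintype.card (Fin n → ZMod 2) : ℝ) ^ (t + 1) := by
    by_contra! hcon
    obtain ⟨W, -, hWk, hBB⟩ := hd (Fin n → ZMod 2) M' ⊤ (by simpa using hn2) hcon.le
    apply hfree
    rw [← hMM]
    exact ess_restriction N φ hφ M' (by simpa [hM'] using hM0) W hWk hBB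
  obtain ⟨W, hWc, hWM⟩ := hP (Fin n → ZMod 2) M' (by rw [hcardR]; nlinarith) hcnt
  rw [hcardR] at hWM
  refine ⟨W, ?_, ?_⟩
  · rw [ess_card_F, ess_card_sub, hcard, ← pow_add] at hWc
    have := Nat.pow_right_injective le_rfl hWc
    omega
  · have hWr : ((essF W).card : ℝ) = 1 / 2 ^ t * 2 ^ n := by
      have : ((essF W).card : ℝ) * 2 ^ t = 2 ^ n := by rw [← hcardR]; exact_mod_cast hWc
      rw [← this]; field_simp
    have hsub : symmDiff M {x : Fin n → ZMod 2 | x ≠ 0 ∧ x ∉ W} ⊆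
        (((M' ∩ essF W) ∪ (M' ∪ essF W)ᶜ : Finset (Fin n → ZMod 2)) : Set (Fin n → ZMod 2)) := by
      intro z hz
      have hz0 : z ∈ M → z ≠ 0 := fun h h0 => hM0 (h0 ▸ h)
      rw [Set.mem_symmDiff] at hz
      simp only [Set.mem_ofPred_eq] at hz
      simp only [Finset.coe_union, Finset.coe_inter, Finset.coe_compl, hMM, Set.mem_union,
        Set.mem_inter_iff, Set.mem_compl_iff, Finset.mem_coe, ess_mem_F]
      tauto
    have h1 := Set.ncard_le_ncard hsub (Set.toFinite _)
    rw [Set.ncard_coe_finset] at h1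
    have h2 := h1.trans (Finset.card_union_le _ _)
    have h3 : ((symmDiff M {x : Fin n → ZMod 2 | x ≠ 0 ∧ x ∉ W}).ncard : ℝ) ≤
      (M' ∩ essF W).card + ((M' ∪ essF W)ᶜ).card := by exact_mod_cast h2
    have h4 : (((M' ∪ essF W)ᶜ).card : ℝ) + (M' ∪ essF W).card = 2 ^ n := by
      rw [← hcardR]
      exact_mod_cast Finset.card_compl_add_card (M' ∪ essF W)
    have h5 : ((M' ∪ essF W).card : ℝ) + (M' ∩ essF W).card = M'.card + (essF W).card := by
      exact_mod_cast Finset.card_union_add_card_inter M' (essF W)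
    have hWM' : ((M' ∩ essF W).card : ℝ) ≤ δ / 4 * 2 ^ n := by convert hWM
    have h6 : 0 < δ * 2 ^ n := by positivity
    linarith
end

section
/- (Rank version of stability.) Let N be a nonempty matroid with χ(N) ≥ 2. For all ε > 0 there exist δ > 0 and r₀ such that the following holds: if M ⊆ 𝔽₂ⁿ \ {0} is an N-free matroid of rank r ≥ r₀ with |M| ≥ (1 − 2^{1−χ(N)} − δ)·2ʳ, then there is an r-dimensional subspace U of 𝔽₂ⁿ containing M and a subspace W ⊆ U with dim W = r − χ(N) + 1 such that, setting B = (U \ {0}) \ W (a copy of BB(r−1, 2, χ(N)−1)), we have |M Δ B| < ε·2ʳ. -/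
open scoped Classical

namespace ESS
set_option linter.unusedSectionVars false
open Module

section
variable {V : Type} [AddCommGroup V] [Module (ZMod 2) V] [Fintype V]

lemma add_self2 (x : V) : x + x = 0 := ZModModule.add_self x

lemma cardV : (Fintype.card V : ℝ) = 2 ^ finrank (ZMod 2) V := by
  rw [Module.card_eq_pow_finrank (K := ZMod 2) (V := V), ZMod.card]; norm_num

lemma cardV_pos : (0:ℝ) < Fintype.card V := by
  rw [cardV]; positivity

lemma card_sub (X : Submodule (ZMod 2) V) :
    (Finset.univ.filter (fun x : V => x ∈ X)).card = 2 ^ finrank (ZMod 2) X := by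
  have h := Module.natCard_eq_pow_finrank (K := ZMod 2) (V := X)
  rw [Nat.card_zmod] at h
  rw [← h, Nat.card_eq_fintype_card, Fintype.card_subtype]

lemma mem_sup_single {X : Submodule (ZMod 2) V} {z y : V}
    (h : y ∈ X ⊔ Submodule.span (ZMod 2) {z}) : y ∈ X ∨ ∃ x ∈ X, y = x + z := by
  obtain ⟨x, hx, w, hw, rfl⟩ := Submodule.mem_sup.1 h
  obtain ⟨a, rfl⟩ := Submodule.mem_span_singleton.1 hw
  have : ∀ a : ZMod 2, a = 0 ∨ a = 1 := by decide
  rcases this a with rfl | rfl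
  · left; simpa using hx
  · right; exact ⟨x, hx, by simp⟩

/-- translation preserves counting -/
lemma card_translate (S : Finset V) (x : V) :
    (Finset.univ.filter (fun z : V => z + x ∈ S)).card = S.card := by
  apply Finset.card_bij (fun z _ => z + x)
  · intro a ha; simpa using ha
  · intro a _ b _ h; simpa using h
  · intro b hb
    exact ⟨b - x, by simpa using hb, by simp⟩

/-- union bound -/
lemma exists_avoid (X : Submodule (ZMod 2) V) (S T : Finset V)
    (h : 2 ^ finrank (ZMod 2) X * S.card < T.card) :
    ∃ z ∈ T, ∀ x ∈ X, z + x ∉ S := by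
  by_contra hc
  push Not at hc
  have : T ⊆ (Finset.univ.filter (fun x : V => x ∈ X)).biUnion
      (fun x => Finset.univ.filter (fun z : V => z + x ∈ S)) := by
    intro z hz
    obtain ⟨x, hx, hxs⟩ := hc z hz
    simp only [Finset.mem_biUnion, Finset.mem_filter, Finset.mem_univ, true_and]
    exact ⟨x, hx, hxs⟩
  have h2 := (Finset.card_le_card this).trans Finset.card_biUnion_le
  simp only [card_translate, Finset.sum_const, card_sub, smul_eq_mul] at h2
  omega

/-- count of common translates -/
lemma card_common (X : Submodule (ZMod 2) V) (M : Finset V) :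
    ((Finset.univ.filter (fun z : V => ∀ x ∈ X, z + x ∈ M))ᶜ).card
      ≤ 2 ^ finrank (ZMod 2) X * (Mᶜ).card := by
  have : (Finset.univ.filter (fun z : V => ∀ x ∈ X, z + x ∈ M))ᶜ ⊆
     (Finset.univ.filter (fun x : V => x ∈ X)).biUnion
      (fun x => Finset.univ.filter (fun z : V => z + x ∈ Mᶜ)) := by
    intro z hz
    simp only [Finset.mem_compl, Finset.mem_filter, Finset.mem_univ, true_and, not_forall] at hz
    obtain ⟨x, hx, hxs⟩ := hz
    simp only [Finset.mem_biUnion, Finset.mem_filter, Finset.mem_univ, true_and]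
    exact ⟨x, hx, by simpa using hxs⟩
  have h2 := (Finset.card_le_card this).trans Finset.card_biUnion_le
  simpa only [card_translate, Finset.sum_const, card_sub, smul_eq_mul] using h2

/-- signs -/
noncomputable def sgn (a : ZMod 2) : ℝ := if a = 0 then 1 else -1

lemma sgn_add (a b : ZMod 2) : sgn (a + b) = sgn a * sgn b := by
  have : ∀ a : ZMod 2, a = 0 ∨ a = 1 := by decide
  have e : (1 : ZMod 2) + 1 = 0 := by decide
  rcases this a with rfl | rfl <;> rcases this b with rfl | rfl <;> simp [sgn, e]

noncomputable instance dualFin : Fintype (Dual (ZMod 2) V) :=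
  @Fintype.ofFinite _ (Module.finite_of_finite (ZMod 2))

lemma card_dual : (Fintype.card (Dual (ZMod 2) V) : ℝ) = Fintype.card V := by
  rw [cardV, cardV, Subspace.dual_finrank_eq]

lemma sum_sgn (x : V) : ∑ l : Dual (ZMod 2) V, sgn (l x) = if x = 0 then (Fintype.card V : ℝ) else 0 := by
  split_ifs with h
  · subst h; simp [sgn, card_dual]
  · have : ¬ ∀ φ : Dual (ZMod 2) V, φ x = 0 := by
      rwa [Module.forall_dual_apply_eq_zero_iff]
    push Not at this
    obtain ⟨φ, hφ⟩ := this
    have e : ∑ l : Dual (ZMod 2) V, sgn (l x) = ∑ l : Dual (ZMod 2) V, sgn ((l + φ) x) :=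
      (Equiv.sum_comp (Equiv.addRight φ) (fun l : Dual (ZMod 2) V => sgn (l x))).symm
    have e2 : ∀ l : Dual (ZMod 2) V, sgn ((l + φ) x) = - sgn (l x) := by
      intro l
      rw [LinearMap.add_apply, sgn_add, show sgn (φ x) = -1 by simp [sgn, hφ]]; ring
    simp only [e2, Finset.sum_neg_distrib] at e
    linarith

lemma four2 (M : Finset V) : ∑ l : Dual (ZMod 2) V, (∑ x ∈ M, sgn (l x)) ^ 2
    = Fintype.card V * M.card := by
  have : ∀ l : Dual (ZMod 2) V, (∑ x ∈ M, sgn (l x)) ^ 2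
      = ∑ x ∈ M, ∑ y ∈ M, sgn (l (x + y)) := by
    intro l
    rw [sq, Finset.sum_mul_sum]
    simp only [map_add, sgn_add]
  simp only [this]
  rw [Finset.sum_comm]
  have : ∀ x ∈ M, ∑ l : Dual (ZMod 2) V, ∑ y ∈ M, sgn (l (x + y)) = Fintype.card V := by
    intro x hx
    rw [Finset.sum_comm]
    simp only [sum_sgn]
    have : ∀ y, (x + y = 0) ↔ x = y := fun y => by
      constructor
      · intro h; rw [← sub_eq_zero, ZModModule.sub_eq_add, h]
      · rintro rfl; exact add_self2 x
    simp [this, hx]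
  rw [Finset.sum_congr rfl this]; simp; ring

lemma four3 (M : Finset V) (h : ∀ x ∈ M, ∀ y ∈ M, x + y ∉ M) :
    ∑ l : Dual (ZMod 2) V, (∑ x ∈ M, sgn (l x)) ^ 3 = 0 := by
  have : ∀ l : Dual (ZMod 2) V, (∑ x ∈ M, sgn (l x)) ^ 3
      = ∑ x ∈ M, ∑ y ∈ M, ∑ z ∈ M, sgn (l (x + y + z)) := by
    intro l
    rw [pow_succ, sq, Finset.sum_mul_sum, Finset.sum_mul]
    simp only [map_add, sgn_add, Finset.sum_mul_sum]
  simp only [this]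
  rw [Finset.sum_comm]
  apply Finset.sum_eq_zero
  intro x hx
  rw [Finset.sum_comm]
  apply Finset.sum_eq_zero
  intro y hy
  rw [Finset.sum_comm]
  apply Finset.sum_eq_zero
  intro z hz
  rw [sum_sgn, if_neg]
  intro h0
  apply h x hx y hy
  rw [← sub_eq_zero, ZModModule.sub_eq_add] at *
  have : x + y = z := by rw [← sub_eq_zero, ZModModule.sub_eq_add]; simpa using h0
  rwa [this]


lemma tri_free (M : Finset V) (h0 : (0:V) ∉ M)
    (hX : ¬ ∃ X : Submodule (ZMod 2) V, finrank (ZMod 2) X = 2 ∧ ∀ x ∈ X, x ≠ 0 → x ∈ M) :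
    ∀ x ∈ M, ∀ y ∈ M, x + y ∉ M := by
  intro x hx y hy hxy
  apply hX
  have hx0 : x ≠ 0 := fun h => h0 (h ▸ hx)
  have hy0 : y ≠ 0 := fun h => h0 (h ▸ hy)
  have hmem : ∀ a ∈ Submodule.span (ZMod 2) {x}, a = 0 ∨ a = x := by
    intro a ha
    obtain ⟨t, rfl⟩ := Submodule.mem_span_singleton.1 ha
    have : ∀ a : ZMod 2, a = 0 ∨ a = 1 := by decide
    rcases this t with rfl | rfl <;> simp
  have hyx : y ∉ Submodule.span (ZMod 2) {x} := by
    intro h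
    rcases hmem y h with h | h
    · exact hy0 h
    · subst h; rw [add_self2] at hxy; exact h0 hxy
  refine ⟨Submodule.span (ZMod 2) {x} ⊔ Submodule.span (ZMod 2) {y}, ?_, ?_⟩
  · rw [Submodule.finrank_sup_span_singleton hyx, finrank_span_singleton hx0]
  · intro a ha ha0
    rcases mem_sup_single ha with h | ⟨b, hb, rfl⟩
    · rcases hmem a h with h | h
      · exact absurd h ha0
      · rwa [h]
    · rcases hmem b hb with h | h
      · rw [h, zero_add]; exact hy
      · rwa [h]

lemma finrank_ker_dual (l : Dual (ZMod 2) V) (hl : l ≠ 0) :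
    finrank (ZMod 2) (LinearMap.ker l) + 1 = finrank (ZMod 2) V := by
  have h := LinearMap.finrank_range_add_finrank_ker l
  have : LinearMap.range l = ⊤ := LinearMap.range_eq_top.2 (LinearMap.surjective hl)
  rw [this, finrank_top, finrank_self] at h
  omega

lemma card_compl_real (M : Finset V) : ((Mᶜ).card : ℝ) = Fintype.card V - M.card := by
  have := Finset.card_add_card_compl M
  have h : (M.card : ℝ) + (Mᶜ).card = Fintype.card V := by exact_mod_cast this
  linarith

lemma S1_core {ε : ℝ} (hε : 0 < ε) (hε1 : ε < 1) (M : Finset V) (h0 : (0:V) ∉ M)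
    (hX : ¬ ∃ X : Submodule (ZMod 2) V, finrank (ZMod 2) X = 2 ∧ ∀ x ∈ X, x ≠ 0 → x ∈ M)
    (hM : ((Mᶜ).card : ℝ) ≤ (1 / 2 + ε / 8) * Fintype.card V) :
    ∃ W : Submodule (ZMod 2) V, finrank (ZMod 2) W + 1 = finrank (ZMod 2) V ∧
      ((M.filter (· ∈ W)).card : ℝ) ≤ ε * Fintype.card V := by
  have ht := tri_free M h0 hX
  have hN := cardV_pos (V := V)
  rw [card_compl_real] at hM
  set n : ℝ := (Fintype.card V : ℝ) with hn
  set a : ℝ := (M.card : ℝ) with ha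
  have hex : ∃ l : Dual (ZMod 2) V, l ≠ 0 ∧ ∑ x ∈ M, sgn (l x) ≤ -(1 / 2 - ε) * n := by
    by_contra hc
    push Not at hc
    have h2 := four2 M
    have h3 := four3 M ht
    have hz : ∑ x ∈ M, sgn ((0 : Dual (ZMod 2) V) x) = a := by simp [sgn, ha]
    rw [← Finset.add_sum_erase _ _ (Finset.mem_univ (0 : Dual (ZMod 2) V)), hz] at h2 h3
    have : ∑ l ∈ Finset.univ.erase (0 : Dual (ZMod 2) V), (-(1 / 2 - ε) * n) * (∑ x ∈ M, sgn (l x)) ^ 2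
        ≤ ∑ l ∈ Finset.univ.erase (0 : Dual (ZMod 2) V), (∑ x ∈ M, sgn (l x)) ^ 3 := by
      apply Finset.sum_le_sum
      intro l hl
      have := hc l (Finset.ne_of_mem_erase hl)
      rw [pow_succ' _ 2]
      exact mul_le_mul_of_nonneg_right this.le (sq_nonneg _)
    rw [← Finset.mul_sum] at this
    have e2 : ∑ l ∈ Finset.univ.erase (0 : Dual (ZMod 2) V), (∑ x ∈ M, sgn (l x)) ^ 2 = n * a - a ^ 2 := by
      linarith
    rw [e2] at this
    have hh : a * (a ^ 2 - (1 / 2 - ε) * n * (n - a)) ≤ 0 := by nlinarith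
    have ha' : (1 / 2 - ε / 8) * n ≤ a := by linarith
    have hapos : 0 < a := lt_of_lt_of_le (by apply mul_pos <;> linarith) ha'
    have hle : a ^ 2 - (1 / 2 - ε) * n * (n - a) ≤ 0 := by
      by_contra hcc; push Not at hcc
      have := mul_pos hapos hcc
      linarith
    have hna : n - a ≤ (1 / 2 + ε / 8) * n := by linarith
    have hna0 : 0 ≤ n - a := by
      have : (M.card : ℝ) ≤ Fintype.card V := by exact_mod_cast Finset.card_le_univ M
      linarith
    have k1 : ((1 / 2 - ε / 8) * n) ^ 2 ≤ a ^ 2 :=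
      pow_le_pow_left₀ (by apply mul_nonneg <;> linarith) ha' 2
    rcases le_or_gt (1 / 2 - ε) 0 with hs | hs
    · have : (1 / 2 - ε) * n * (n - a) ≤ 0 :=
        mul_nonpos_of_nonpos_of_nonneg (mul_nonpos_of_nonpos_of_nonneg hs hN.le) hna0
      nlinarith
    · have k2 : (1 / 2 - ε) * n * (n - a) ≤ (1 / 2 - ε) * n * ((1 / 2 + ε / 8) * n) :=
        mul_le_mul_of_nonneg_left hna (mul_nonneg hs.le hN.le)
      have k3 : ((1 / 2 - ε / 8) ^ 2 - (1 / 2 - ε) * (1 / 2 + ε / 8)) * n ^ 2 ≤ 0 := by nlinarith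
      have k4 : 0 < (1 / 2 - ε / 8) ^ 2 - (1 / 2 - ε) * (1 / 2 + ε / 8) := by nlinarith
      have := mul_pos k4 (pow_pos hN 2)
      linarith
  obtain ⟨l, hl, hF⟩ := hex
  refine ⟨LinearMap.ker l, finrank_ker_dual l hl, ?_⟩
  have hk := finrank_ker_dual l hl
  have e1 : ∑ x ∈ M, sgn (l x) = ((M.filter (· ∈ LinearMap.ker l)).card : ℝ)
      - ((M.filter (fun x => ¬ x ∈ LinearMap.ker l)).card : ℝ) := by
    rw [← Finset.sum_filter_add_sum_filter_not M (· ∈ LinearMap.ker l)]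
    have q1 : ∑ x ∈ M.filter (· ∈ LinearMap.ker l), sgn (l x) = ∑ x ∈ M.filter (· ∈ LinearMap.ker l), 1 := by
      apply Finset.sum_congr rfl
      intro x hx
      have := (Finset.mem_filter.1 hx).2
      rw [LinearMap.mem_ker] at this
      simp [sgn, this]
    have q2 : ∑ x ∈ M.filter (fun x => ¬ x ∈ LinearMap.ker l), sgn (l x) = ∑ x ∈ M.filter (fun x => ¬ x ∈ LinearMap.ker l), (-1) := by
      apply Finset.sum_congr rfl
      intro x hx
      have := (Finset.mem_filter.1 hx).2
      rw [LinearMap.mem_ker] at this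
      simp [sgn, this]
    rw [q1, q2]; simp; ring
  have e2 : ((M.filter (fun x => ¬ x ∈ LinearMap.ker l)).card : ℝ) ≤ n / 2 := by
    have s1 : (M.filter (fun x => ¬ x ∈ LinearMap.ker l)).card ≤
      ((Finset.univ.filter (fun x => x ∈ LinearMap.ker l))ᶜ).card := by
      apply Finset.card_le_card
      intro x hx
      simpa using (Finset.mem_filter.1 hx).2
    have s2 : (((Finset.univ.filter (fun x => x ∈ LinearMap.ker l))ᶜ).card : ℝ) = n / 2 := by
      rw [card_compl_real, card_sub, hn, cardV, ← hk, pow_succ]; push_cast; ring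
    rw [← s2]; exact_mod_cast s1
  rw [e1] at hF
  nlinarith

end

def Sj (j : ℕ) : Prop := ∀ ε : ℝ, 0 < ε → ∃ δ : ℝ, 0 < δ ∧ ∀ (V : Type) [AddCommGroup V]
  [Module (ZMod 2) V] [Fintype V] (M : Finset V), (0 : V) ∉ M →
  (¬ ∃ X : Submodule (ZMod 2) V, finrank (ZMod 2) X = j + 1 ∧ ∀ x ∈ X, x ≠ 0 → x ∈ M) →
  ((Mᶜ).card : ℝ) ≤ ((1 / 2) ^ j + δ) * Fintype.card V →
  ∃ W : Submodule (ZMod 2) V, finrank (ZMod 2) W + j = finrank (ZMod 2) V ∧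
      ((M.filter (· ∈ W)).card : ℝ) ≤ ε * Fintype.card V

lemma S_one : Sj 1 := by
  intro ε hε
  refine ⟨min ε (1 / 2) / 8, by positivity, ?_⟩
  intro V _ _ _ M h0 hX hM
  obtain ⟨W, hW, h⟩ := S1_core (ε := min ε (1 / 2)) (by positivity)
    (lt_of_le_of_lt (min_le_right _ _) (by norm_num)) M h0 hX (by simpa using hM)
  exact ⟨W, hW, h.trans (mul_le_mul_of_nonneg_right (min_le_left _ _) cardV_pos.le)⟩

lemma S_zero : Sj 0 := by
  intro ε hε
  refine ⟨1, one_pos, ?_⟩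
  intro V _ _ _ M h0 hX hM
  refine ⟨⊤, by simp, ?_⟩
  have : M = ∅ := by
    rw [Finset.eq_empty_iff_forall_notMem]
    intro x hx
    have hx0 : x ≠ 0 := fun h => h0 (h ▸ hx)
    apply hX
    refine ⟨Submodule.span (ZMod 2) {x}, by rw [finrank_span_singleton hx0], ?_⟩
    intro a ha ha0
    have := mem_sup_single (X := ⊥) (z := x) (y := a) (by simpa using ha)
    rcases this with h | ⟨b, hb, rfl⟩
    · exact absurd (by simpa using h) ha0
    · rw [Submodule.mem_bot] at hb; rw [hb, zero_add]; exact hx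
  subst this
  simp; positivity

section
variable {V : Type} [AddCommGroup V] [Module (ZMod 2) V] [Fintype V]

def BB (X D : Submodule (ZMod 2) V) (M : Finset V) : Prop :=
  ∀ x ∈ X, x ≠ 0 → ∀ d ∈ D, x + d ∈ M

lemma ext_BB {X D W : Submodule (ZMod 2) V} {M : Finset V} {z : V} (h0 : (0:V) ∉ M)
    (hB : BB X D M) (hW : W ≤ D) (hz : ∀ x ∈ X, ∀ w ∈ W, z + x + w ∈ M) :
    finrank (ZMod 2) ↥(X ⊔ Submodule.span (ZMod 2) {z}) = finrank (ZMod 2) X + 1 ∧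
      BB (X ⊔ Submodule.span (ZMod 2) {z}) W M := by
  constructor
  · apply Submodule.finrank_sup_span_singleton
    intro hzX
    have := hz z hzX 0 W.zero_mem
    rw [add_self2, add_zero] at this
    exact h0 this
  · intro x hx hx0 d hd
    rcases mem_sup_single hx with h | ⟨b, hb, rfl⟩
    · exact hB x h hx0 d (hW hd)
    · rw [add_comm b z]; exact hz b hb d hd

lemma exists_PG (M : Finset V) (h0 : (0:V) ∉ M) (j : ℕ)
    (h : 2 ^ j * (Mᶜ).card < Fintype.card V) :
    ∃ X : Submodule (ZMod 2) V, finrank (ZMod 2) X = j ∧ BB X ⊥ M := by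
  induction j with
  | zero => exact ⟨⊥, by simp, fun x hx hx0 => absurd (by simpa using hx) hx0⟩
  | succ j ih =>
    obtain ⟨X, hX, hB⟩ := ih (lt_of_le_of_lt (Nat.mul_le_mul_right _
      (Nat.pow_le_pow_right (by norm_num) (Nat.le_succ j))) h)
    obtain ⟨z, -, hz⟩ := exists_avoid X Mᶜ Finset.univ (by
      rw [hX, Finset.card_univ]
      exact lt_of_le_of_lt (Nat.mul_le_mul_right _
        (Nat.pow_le_pow_right (by norm_num) (Nat.le_succ j))) h)
    have := ext_BB (W := ⊥) (z := z) h0 hB le_rfl (by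
      intro x hx w hw
      rw [Submodule.mem_bot] at hw
      subst hw
      simpa using hz x hx)
    exact ⟨_, by rw [this.1, hX], this.2⟩

/-- combine X0 with a subspace of common translates -/
lemma sup_PG {X0 Y : Submodule (ZMod 2) V} {M : Finset V} (h0 : (0:V) ∉ M)
    (hB : BB X0 ⊥ M) (hY : ∀ y ∈ Y, y ≠ 0 → ∀ x ∈ X0, y + x ∈ M) :
    finrank (ZMod 2) ↥(X0 ⊔ Y) = finrank (ZMod 2) X0 + finrank (ZMod 2) Y ∧
      ∀ x ∈ X0 ⊔ Y, x ≠ 0 → x ∈ M := by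
  constructor
  · have h := Submodule.finrank_sup_add_finrank_inf_eq X0 Y
    have : X0 ⊓ Y = ⊥ := by
      rw [Submodule.eq_bot_iff]
      intro x hx
      by_contra hx0
      have := hY x hx.2 hx0 x hx.1
      rw [add_self2] at this
      exact h0 this
    rw [this, finrank_bot] at h
    omega
  · intro a ha ha0
    obtain ⟨x, hx, y, hy, rfl⟩ := Submodule.mem_sup.1 ha
    by_cases hy0 : y = 0
    · subst hy0
      rw [add_zero] at ha0 ⊢
      simpa using hB x hx ha0 0 (Submodule.zero_mem _)
    · rw [add_comm]; exact hY y hy hy0 x hx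

/-- If `A` is nearly as large as the complement of `H` and misses most of `H`
  then it nearly fills the complement. -/
lemma card_outside (M : Finset V) (W : Submodule (ZMod 2) V) :
    ((Mᶜ.filter (fun x => ¬ x ∈ W)).card : ℝ) =
      (Mᶜ).card - 2 ^ finrank (ZMod 2) W + (M.filter (· ∈ W)).card := by
  have h1 : (Mᶜ.filter (· ∈ W)).card + (Mᶜ.filter (fun x => ¬ x ∈ W)).card = (Mᶜ).card :=
    Finset.card_filter_add_card_filter_not _
  have h2 : (M.filter (· ∈ W)).card + (Mᶜ.filter (· ∈ W)).card = 2 ^ finrank (ZMod 2) W := by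
    rw [← card_sub W, ← Finset.card_union_of_disjoint, ← Finset.filter_union, Finset.union_compl]
    exact Finset.disjoint_filter_filter disjoint_compl_right
  have h1' : ((Mᶜ.filter (· ∈ W)).card : ℝ) + (Mᶜ.filter (fun x => ¬ x ∈ W)).card = (Mᶜ).card := by
    exact_mod_cast h1
  have h2' : ((M.filter (· ∈ W)).card : ℝ) + (Mᶜ.filter (· ∈ W)).card = 2 ^ finrank (ZMod 2) W := by
    exact_mod_cast h2
  linarith

end

lemma S_succ (j : ℕ) (hj : Sj j) : Sj (j + 1) := by
  intro ε hε
  obtain ⟨δ1, hδ1, H1⟩ := S_one ((1 / 2) ^ (j + 4)) (by positivity)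
  obtain ⟨δ2, hδ2, H2⟩ := hj ε hε
  refine ⟨min (min (δ2 / 2) ((1 / 2) ^ j * δ1)) ((1 / 2) ^ (2 * j + 4)), by positivity, ?_⟩
  intro V _ _ _ M h0 hX hM
  set δ := min (min (δ2 / 2) ((1 / 2) ^ j * δ1)) ((1 / 2) ^ (2 * j + 4)) with hδ
  have d1 : δ ≤ δ2 / 2 := (min_le_left _ _).trans (min_le_left _ _)
  have d2 : δ ≤ (1 / 2) ^ j * δ1 := (min_le_left _ _).trans (min_le_right _ _)
  have d3 : δ ≤ (1 / 2) ^ (2 * j + 4) := min_le_right _ _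
  have hN := cardV_pos (V := V)
  have p1 : (2:ℝ) ^ j * (1 / 2) ^ j = 1 := by rw [← mul_pow]; norm_num
  have ppos : (0:ℝ) < 2 ^ j := by positivity
  have d2' : 2 ^ j * δ ≤ δ1 := by
    calc 2 ^ j * δ ≤ 2 ^ j * ((1 / 2) ^ j * δ1) := by gcongr
      _ = δ1 := by rw [← mul_assoc, p1, one_mul]
  have d3' : 2 ^ j * (2 ^ j * δ) ≤ 1 / 16 := by
    calc 2 ^ j * (2 ^ j * δ) ≤ 2 ^ j * (2 ^ j * (1 / 2) ^ (2 * j + 4)) := by gcongr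
      _ = (2 ^ j * (1 / 2) ^ j) * (2 ^ j * (1 / 2) ^ j) / 16 := by ring
      _ = 1 / 16 := by rw [p1]; norm_num
  have d3'' : 2 ^ j * δ ≤ 1 / 16 := by
    have : (1:ℝ) ≤ 2 ^ j := one_le_pow₀ (by norm_num)
    have hδ0 : 0 < δ := by positivity
    nlinarith [mul_nonneg ppos.le hδ0.le]
  have hMj : 2 ^ j * ((Mᶜ).card : ℝ) ≤ (1 / 2 + 2 ^ j * δ) * Fintype.card V := by
    calc 2 ^ j * ((Mᶜ).card : ℝ) ≤ 2 ^ j * (((1 / 2) ^ (j + 1) + δ) * Fintype.card V) := by gcongr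
      _ = ((2 ^ j * (1 / 2) ^ j) / 2 + 2 ^ j * δ) * Fintype.card V := by ring
      _ = _ := by rw [p1]
  obtain ⟨X0, hX0, hB0⟩ := exists_PG M h0 j (by
    have : (2:ℝ) ^ j * ((Mᶜ).card : ℝ) < Fintype.card V := by nlinarith
    exact_mod_cast this)
  set A : Finset V := Finset.univ.filter (fun z : V => ∀ x ∈ X0, z + x ∈ M) with hA
  have hA0 : (0:V) ∉ A := by
    intro h
    have := (Finset.mem_filter.1 h).2 0 X0.zero_mem
    rw [add_zero] at this; exact h0 this
  have hAc : ((Aᶜ).card : ℝ) ≤ (1 / 2 + 2 ^ j * δ) * Fintype.card V := by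
    have := card_common X0 M
    rw [hX0] at this
    have t : ((Aᶜ).card : ℝ) ≤ 2 ^ j * ((Mᶜ).card : ℝ) := by exact_mod_cast this
    exact t.trans hMj
  obtain ⟨H, hH, hAH⟩ := H1 V A hA0 (by
      rintro ⟨Y, hY, hYA⟩
      have := sup_PG (X0 := X0) (Y := Y) h0 hB0
        (fun y hy hy0 => (Finset.mem_filter.1 (hYA y hy hy0)).2)
      exact hX ⟨X0 ⊔ Y, by rw [this.1, hX0, hY], this.2⟩)
    (hAc.trans (by gcongr; simpa using d2'))
  have hcH : (2:ℝ) ^ finrank (ZMod 2) H = Fintype.card V / 2 := by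
    rw [cardV, ← hH, pow_succ]; ring
  have hout : ((Mᶜ.filter (fun x => ¬ x ∈ H)).card : ℝ) ≤
      (2 ^ j * δ + (1 / 2) ^ (j + 4)) * Fintype.card V := by
    have t1 : (Mᶜ.filter (fun x => ¬ x ∈ H)).card ≤ (Aᶜ.filter (fun x => ¬ x ∈ H)).card := by
      apply Finset.card_le_card
      apply Finset.filter_subset_filter
      rw [Finset.compl_subset_compl]
      intro x hx
      simpa using (Finset.mem_filter.1 hx).2 0 X0.zero_mem
    have t2 := card_outside A H
    rw [hcH] at t2
    have t3 : ((Mᶜ.filter (fun x => ¬ x ∈ H)).card : ℝ) ≤ (Aᶜ.filter (fun x => ¬ x ∈ H)).card := by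
      exact_mod_cast t1
    nlinarith
  set MH : Finset H := Finset.univ.filter (fun h : H => (h : V) ∈ M) with hMH
  have hcardH : (Fintype.card H : ℝ) = Fintype.card V / 2 := by rw [cardV (V := H), hcH]
  obtain ⟨W, hW, hMW⟩ := H2 H MH (by
      intro h; exact h0 (Finset.mem_filter.1 h).2) (by
      rintro ⟨X, hXr, hXM⟩
      set X' := X.map H.subtype with hX'
      have r' : finrank (ZMod 2) X' = j + 1 := by rw [hX', Submodule.finrank_map_subtype_eq, hXr]
      have b' : BB X' ⊥ M := by
        intro x hx hx0 d hd
        rw [Submodule.mem_bot] at hd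
        subst hd
        obtain ⟨y, hy, rfl⟩ := Submodule.mem_map.1 hx
        have := hXM y hy (fun h => hx0 (by simp [h]))
        simpa using (Finset.mem_filter.1 this).2
      obtain ⟨z, hzT, hz⟩ := exists_avoid X' (Mᶜ.filter (fun x => ¬ x ∈ H))
          (Finset.univ.filter (fun x => x ∈ H))ᶜ (by
        rw [r']
        have c1 : ((((Finset.univ.filter (fun x => x ∈ H))ᶜ).card : ℕ) : ℝ) = Fintype.card V / 2 := by
          rw [card_compl_real, card_sub]; push_cast; rw [hcH]; ring
        have c2 : (2:ℝ) ^ (j + 1) * ((Mᶜ.filter (fun x => ¬ x ∈ H)).card : ℝ) <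
            (((Finset.univ.filter (fun x => x ∈ H))ᶜ).card : ℕ) := by
          rw [c1]
          calc (2:ℝ) ^ (j + 1) * ((Mᶜ.filter (fun x => ¬ x ∈ H)).card : ℝ)
              ≤ (2:ℝ) ^ (j + 1) * ((2 ^ j * δ + (1 / 2) ^ (j + 4)) * Fintype.card V) := by gcongr
            _ = (2 * (2 ^ j * (2 ^ j * δ)) + (2 ^ j * (1 / 2) ^ j) / 8) * Fintype.card V := by ring
            _ < _ := by rw [p1]; nlinarith
        exact_mod_cast c2)
      have hzH : z ∉ H := by simpa using hzT
      have := ext_BB (W := ⊥) (z := z) h0 b' le_rfl (by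
        intro x hx w hw
        rw [Submodule.mem_bot] at hw
        subst hw
        have hxH : x ∈ H := by
          obtain ⟨y, hy, rfl⟩ := Submodule.mem_map.1 hx
          exact y.2
        have := hz x hx
        simp only [Finset.mem_filter, Finset.mem_compl, not_and, not_not] at this
        by_contra hc
        rw [add_zero] at hc
        exact hzH ((Submodule.add_mem_iff_left H hxH).1 (this hc)))
      exact hX ⟨_, by rw [this.1, r'], fun x hx hx0 => by
        simpa using this.2 x hx hx0 0 (Submodule.zero_mem _)⟩) (by
      refine le_trans (?_ : _ ≤ ((Mᶜ).card : ℝ)) ?_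
      · apply Nat.cast_le.2
        apply Finset.card_le_card_of_injOn (fun h : H => (h : V))
        · intro x hx
          simpa [hMH] using hx
        · intro x _ y _ h; exact Subtype.ext h
      · rw [hcardH]
        calc ((Mᶜ).card : ℝ) ≤ ((1 / 2) ^ (j + 1) + δ) * Fintype.card V := hM
          _ = ((1 / 2) ^ j + 2 * δ) * (Fintype.card V / 2) := by ring
          _ ≤ ((1 / 2) ^ j + δ2) * (Fintype.card V / 2) := by gcongr; linarith)
  refine ⟨W.map H.subtype, by rw [Submodule.finrank_map_subtype_eq]; omega, ?_⟩
  have c : (M.filter (· ∈ W.map H.subtype)).card ≤ (MH.filter (· ∈ W)).card := by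
    apply Finset.card_le_card_of_surjOn (fun h : H => (h : V))
    intro x hx
    simp only [Finset.coe_filter, Set.mem_setOf_eq] at hx
    obtain ⟨y, hy, rfl⟩ := Submodule.mem_map.1 hx.2
    refine ⟨y, ?_, rfl⟩
    simp only [Finset.coe_filter, Set.mem_setOf_eq]
    exact ⟨by simpa [hMH] using hx.1, hy⟩
  have c' : ((M.filter (· ∈ W.map H.subtype)).card : ℝ) ≤ (MH.filter (· ∈ W)).card := by exact_mod_cast c
  refine c'.trans (hMW.trans ?_)
  rw [hcardH]
  gcongr
  linarith

lemma S_all (j : ℕ) : Sj j := by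
  induction j with
  | zero => exact S_zero
  | succ j ih => exact S_succ j ih

lemma cube (k : ℕ) : ∀ τ : ℝ, 0 < τ → ∃ τ' : ℝ, 0 < τ' ∧ ∃ m : ℕ, ∀ (V : Type) [AddCommGroup V]
    [Module (ZMod 2) V] [Fintype V], m ≤ finrank (ZMod 2) V → ∀ A : Finset V,
    τ * Fintype.card V ≤ A.card → ∃ W : Submodule (ZMod 2) V, finrank (ZMod 2) W = k ∧
      τ' * Fintype.card V ≤ ((Finset.univ.filter (fun z : V => ∀ w ∈ W, z + w ∈ A)).card : ℝ) := by
  induction k with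
  | zero =>
    intro τ hτ
    refine ⟨τ, hτ, 0, ?_⟩
    intro V _ _ _ _ A hA
    refine ⟨⊥, by simp, ?_⟩
    simpa using hA
  | succ k ih =>
    intro τ hτ
    obtain ⟨τ', hτ', m, H⟩ := ih τ hτ
    obtain ⟨m', hm'⟩ := pow_unbounded_of_one_lt (2 ^ (k + 1) / τ') (one_lt_two : (1:ℝ) < 2)
    refine ⟨τ' ^ 2 / 2, by positivity, max m m', ?_⟩
    intro V _ _ _ hV A hA
    obtain ⟨W, hW, hB⟩ := H V ((le_max_left _ _).trans hV) A hA
    set B := Finset.univ.filter (fun z : V => ∀ w ∈ W, z + w ∈ A) with hBdef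
    have hN := cardV_pos (V := V)
    have hbig : 2 ^ (k + 1) < τ' * Fintype.card V := by
      rw [div_lt_iff₀ hτ'] at hm'
      rw [cardV]
      have : (2:ℝ) ^ m' ≤ 2 ^ finrank (ZMod 2) V :=
        pow_le_pow_right₀ (by norm_num) ((le_max_right _ _).trans hV)
      nlinarith
    have hsum : ∑ w : V, ((B.filter (fun z => z + w ∈ B)).card : ℝ) = (B.card : ℝ) ^ 2 := by
      have : ∑ w : V, (B.filter (fun z => z + w ∈ B)).card = B.card ^ 2 := by
        simp only [Finset.card_filter]
        rw [Finset.sum_comm]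
        simp only [← Finset.card_filter]
        have : ∀ z : V, (Finset.univ.filter (fun w : V => z + w ∈ B)).card = B.card := by
          intro z
          rw [← card_translate B z]
          simp only [add_comm]
        simp only [this, Finset.sum_const, smul_eq_mul, sq]
      exact_mod_cast this
    have hw : ∃ w : V, w ∉ W ∧ τ' ^ 2 / 2 * Fintype.card V ≤ ((B.filter (fun z => z + w ∈ B)).card : ℝ) := by
      by_contra hc
      push Not at hc
      have hb : ∑ w : V, ((B.filter (fun z => z + w ∈ B)).card : ℝ) ≤
          ∑ w : V, ((if w ∈ W then (B.card : ℝ) else 0) + τ' ^ 2 / 2 * Fintype.card V) := by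
        apply Finset.sum_le_sum
        intro w _
        split_ifs with h
        · have : ((B.filter (fun z => z + w ∈ B)).card : ℝ) ≤ B.card := by
            exact_mod_cast Finset.card_filter_le _ _
          have : 0 ≤ τ' ^ 2 / 2 * (Fintype.card V : ℝ) := by positivity
          linarith
        · rw [zero_add]; exact (hc w h).le
      rw [hsum, Finset.sum_add_distrib, ← Finset.sum_filter, Finset.sum_const, card_sub, hW,
        Finset.sum_const, Finset.card_univ] at hb
      simp only [nsmul_eq_mul] at hb
      push_cast at hb
      have h1 : (τ' * Fintype.card V) ^ 2 ≤ (B.card : ℝ) ^ 2 := pow_le_pow_left₀ (by positivity) hB 2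
      have h2 : 2 ^ (k + 1) < (B.card : ℝ) := lt_of_lt_of_le hbig hB
      have h3 : (2:ℝ) ^ (k + 1) = 2 * 2 ^ k := by ring
      have h4 : (0:ℝ) < 2 ^ (k + 1) := by positivity
      have h5 : (B.card : ℝ) * 2 ^ (k + 1) < B.card * B.card := mul_lt_mul_of_pos_left h2 (h4.trans h2)
      nlinarith
    obtain ⟨w, hwW, hwB⟩ := hw
    refine ⟨W ⊔ Submodule.span (ZMod 2) {w}, by
      rw [Submodule.finrank_sup_span_singleton hwW, hW], hwB.trans ?_⟩
    apply Nat.cast_le.2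
    apply Finset.card_le_card
    intro z hz
    simp only [hBdef, Finset.mem_filter, Finset.mem_univ, true_and] at hz ⊢
    intro y hy
    rcases mem_sup_single hy with h | ⟨b, hb, rfl⟩
    · exact hz.1 y h
    · have := hz.2 b hb
      rwa [add_assoc, add_comm w b] at this

lemma grow (k : ℕ) (τ : ℝ) (hτ : 0 < τ) : ∃ m : ℕ, ∀ (V : Type) [AddCommGroup V]
    [Module (ZMod 2) V] [Fintype V] (X D : Submodule (ZMod 2) V) (M : Finset V), (0:V) ∉ M →
    BB X D M → m ≤ finrank (ZMod 2) D →
    τ * Fintype.card V ≤ ((Finset.univ.filter (fun z : V => ∀ x ∈ X, z + x ∈ M)).card : ℝ) →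
    ∃ X1 W : Submodule (ZMod 2) V, finrank (ZMod 2) X1 = finrank (ZMod 2) X + 1 ∧
      finrank (ZMod 2) W = k ∧ BB X1 W M := by
  obtain ⟨τ', hτ', m, H⟩ := cube k τ hτ
  refine ⟨m, ?_⟩
  intro V _ _ _ X D M h0 hB hm hZ
  set Z := Finset.univ.filter (fun z : V => ∀ x ∈ X, z + x ∈ M) with hZdef
  have hex : ∃ y : V, τ * Fintype.card D ≤ ((Finset.univ.filter (fun d : D => y + (d : V) ∈ Z)).card : ℝ) := by
    by_contra hc
    push Not at hc
    have h1 : ∑ y : V, ((Finset.univ.filter (fun d : D => y + (d : V) ∈ Z)).card : ℝ) <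
        ∑ y : V, τ * Fintype.card D :=
      Finset.sum_lt_sum_of_nonempty ⟨0, Finset.mem_univ _⟩ (fun y _ => hc y)
    have h2 : ∑ y : V, (Finset.univ.filter (fun d : D => y + (d : V) ∈ Z)).card = Fintype.card D * Z.card := by
      simp only [Finset.card_filter]
      rw [Finset.sum_comm]
      simp only [← Finset.card_filter, card_translate]
      simp
    have h2' : ∑ y : V, ((Finset.univ.filter (fun d : D => y + (d : V) ∈ Z)).card : ℝ) = Fintype.card D * Z.card := by
      exact_mod_cast h2
    rw [h2'] at h1
    simp only [Finset.sum_const, Finset.card_univ, nsmul_eq_mul] at h1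
    have := cardV_pos (V := D)
    nlinarith
  obtain ⟨y, hy⟩ := hex
  obtain ⟨W, hW, hWc⟩ := H D hm _ hy
  have hD := cardV_pos (V := D)
  have hpos := (Nat.cast_pos (α := ℝ)).1 (lt_of_lt_of_le (mul_pos hτ' hD) hWc)
  obtain ⟨d0, hd0⟩ := Finset.card_pos.1 hpos
  simp only [Finset.mem_filter, Finset.mem_univ, true_and, hZdef] at hd0
  have := ext_BB (W := W.map D.subtype) (z := y + d0) h0 hB (Submodule.map_subtype_le D W) (by
    intro x hx w hw
    obtain ⟨w', hw', rfl⟩ := Submodule.mem_map.1 hw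
    have := hd0 w' hw' x hx
    have e : y + (d0 : V) + x + D.subtype w' = y + ((d0 + w' : D) : V) + x := by
      simp; abel
    rwa [e])
  exact ⟨_, _, this.1, by rw [Submodule.finrank_map_subtype_eq, hW], this.2⟩

lemma exists_sub {V : Type} [AddCommGroup V] [Module (ZMod 2) V] [Fintype V] (k : ℕ)
    (D : Submodule (ZMod 2) V) (h : k ≤ finrank (ZMod 2) D) :
    ∃ W : Submodule (ZMod 2) V, W ≤ D ∧ finrank (ZMod 2) W = k := by
  obtain ⟨f, hf⟩ := exists_linearIndependent_of_le_finrank h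
  refine ⟨(Submodule.span (ZMod 2) (Set.range f)).map D.subtype, Submodule.map_subtype_le D _, ?_⟩
  rw [Submodule.finrank_map_subtype_eq, finrank_span_eq_card hf, Fintype.card_fin]

lemma exists_BB (j : ℕ) : ∀ k : ℕ, ∃ r : ℕ, ∀ (V : Type) [AddCommGroup V]
    [Module (ZMod 2) V] [Fintype V] (M : Finset V), (0:V) ∉ M → r ≤ finrank (ZMod 2) V →
    2 ^ j * ((Mᶜ).card : ℝ) ≤ 3 / 2 * Fintype.card V →
    ∃ X D : Submodule (ZMod 2) V, finrank (ZMod 2) X = j ∧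
      finrank (ZMod 2) D = k ∧ BB X D M := by
  induction j with
  | zero =>
    intro k
    refine ⟨k, ?_⟩
    intro V _ _ _ M h0 hr _
    obtain ⟨W, -, hW⟩ := exists_sub k (⊤ : Submodule (ZMod 2) V) (by simpa using hr)
    exact ⟨⊥, W, by simp, hW, fun x hx hx0 => absurd (by simpa using hx) hx0⟩
  | succ j ih =>
    intro k
    obtain ⟨m, hm⟩ := grow k (1 / 4) (by norm_num)
    obtain ⟨r, hr⟩ := ih m
    refine ⟨r, ?_⟩
    intro V _ _ _ M h0 hrV hM
    rw [pow_succ] at hM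
    have hpos : (0:ℝ) ≤ 2 ^ j * ((Mᶜ).card : ℝ) := by positivity
    obtain ⟨X, D, hX, hD, hB⟩ := hr V M h0 hrV (by linarith)
    obtain ⟨X1, W, h1, h2, h3⟩ := hm V X D M h0 hB hD.ge (by
      have := card_common X M
      rw [hX] at this
      have t : (((Finset.univ.filter (fun z : V => ∀ x ∈ X, z + x ∈ M))ᶜ).card : ℝ) ≤ 2 ^ j * ((Mᶜ).card : ℝ) := by
        exact_mod_cast this
      rw [card_compl_real] at t
      linarith)
    exact ⟨X1, W, by rw [h1, hX], h2, h3⟩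

section
variable {V : Type} [AddCommGroup V] [Module (ZMod 2) V] [Fintype V]

noncomputable def gg (M : Finset V) (z : V) : ℝ := if z ∈ M then 0 else 1

lemma gg_nonneg (M : Finset V) (z : V) : 0 ≤ gg M z := by
  unfold gg; split_ifs <;> norm_num

lemma sum_gg (M : Finset V) (a : V) : ∑ z : V, gg M (z + a) = (Mᶜ).card := by
  have e : ∑ z : V, gg M (z + a) = ∑ z, gg M z := Equiv.sum_comp (Equiv.addRight a) (gg M)
  rw [e]
  simp only [gg]
  rw [Finset.sum_ite]
  simp only [Finset.sum_const_zero, Finset.sum_const, zero_add, nsmul_eq_mul, mul_one]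
  congr 2
  ext z; simp

noncomputable def AA (M : Finset V) (X : Submodule (ZMod 2) V) (w : V) (l : Dual (ZMod 2) X) (z : V) : ℝ :=
  ∑ x : X, gg M (z + ((x : V) + l x • w))

lemma AA_bound {X D : Submodule (ZMod 2) V} {M : Finset V} (h0 : (0:V) ∉ M) (hB : BB X D M)
    {δ τ : ℝ} (hM : ((Mᶜ).card : ℝ) ≤ ((1 / 2) ^ finrank (ZMod 2) X + δ) * Fintype.card V)
    (hZ : ∀ X' : Submodule (ZMod 2) V, finrank (ZMod 2) X' = finrank (ZMod 2) X → BB X' D M →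
      ((Finset.univ.filter (fun z : V => ∀ x ∈ X', z + x ∈ M)).card : ℝ) ≤ τ * Fintype.card V)
    {w : V} (hw : w ∈ D) (l : Dual (ZMod 2) X) :
    ∑ z : V, |AA M X w l z - 1| ≤ (2 ^ finrank (ZMod 2) X * δ + 2 * τ) * Fintype.card V := by
  set φ : X →ₗ[ZMod 2] V := X.subtype + l.smulRight w with hφ
  have hφx : ∀ x : X, φ x = (x : V) + l x • w := fun x => by simp [hφ]
  have hne : ∀ x : X, x ≠ 0 → ∀ d ∈ D, φ x + d ∈ M := by
    intro x hx d hd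
    rw [hφx, add_assoc]
    exact hB x x.2 (by simpa using hx) _ (D.add_mem (D.smul_mem _ hw) hd)
  have hinj : Function.Injective φ := by
    rw [injective_iff_map_eq_zero]
    intro x hx
    by_contra hx0
    have := hne x hx0 0 D.zero_mem
    rw [hx, add_zero] at this
    exact h0 this
  have hz := hZ (LinearMap.range φ) (LinearMap.finrank_range_of_inj hinj) (by
    rintro _ ⟨x, rfl⟩ hx0 d hd
    exact hne x (fun h => hx0 (by rw [h, map_zero])) d hd)
  set Z := Finset.univ.filter (fun z : V => ∀ x ∈ LinearMap.range φ, z + x ∈ M) with hZd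
  have hpt : ∀ z : V, |AA M X w l z - 1| ≤ (AA M X w l z - 1) + 2 * (if z ∈ Z then 1 else 0) := by
    intro z
    split_ifs with h
    · have : AA M X w l z = 0 := by
        apply Finset.sum_eq_zero
        intro x _
        have := (Finset.mem_filter.1 h).2 (φ x) ⟨x, rfl⟩
        rw [hφx] at this
        simp [gg, this]
      rw [this]; norm_num
    · simp only [hZd, Finset.mem_filter, Finset.mem_univ, true_and, not_forall] at h
      obtain ⟨_, ⟨x, rfl⟩, hx⟩ := h
      have h1 : (1:ℝ) ≤ AA M X w l z := by
        have : gg M (z + ((x : V) + l x • w)) = 1 := by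
          rw [hφx] at hx; simp [gg, hx]
        rw [← this]
        exact Finset.single_le_sum (f := fun x : X => gg M (z + ((x : V) + l x • w)))
          (fun y _ => gg_nonneg _ _) (Finset.mem_univ x)
      rw [abs_of_nonneg (by linarith)]; linarith
  have hS : ∑ z : V, AA M X w l z = 2 ^ finrank (ZMod 2) X * ((Mᶜ).card : ℝ) := by
    simp only [AA]
    rw [Finset.sum_comm]
    simp only [sum_gg, Finset.sum_const, Finset.card_univ, nsmul_eq_mul]
    rw [cardV (V := X)]
  have hp : (2:ℝ) ^ finrank (ZMod 2) X * (1 / 2) ^ finrank (ZMod 2) X = 1 := by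
    rw [← mul_pow]; norm_num
  calc ∑ z : V, |AA M X w l z - 1|
      ≤ ∑ z : V, ((AA M X w l z - 1) + 2 * (if z ∈ Z then 1 else 0)) := Finset.sum_le_sum (fun z _ => hpt z)
    _ = 2 ^ finrank (ZMod 2) X * ((Mᶜ).card : ℝ) - Fintype.card V + 2 * Z.card := by
      rw [Finset.sum_add_distrib, Finset.sum_sub_distrib, hS, ← Finset.mul_sum]
      simp
    _ ≤ 2 ^ finrank (ZMod 2) X * (((1 / 2) ^ finrank (ZMod 2) X + δ) * Fintype.card V)
        - Fintype.card V + 2 * (τ * Fintype.card V) := by gcongr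
    _ = (2 ^ finrank (ZMod 2) X * (1 / 2) ^ finrank (ZMod 2) X) * Fintype.card V + 2 ^ finrank (ZMod 2) X * δ * Fintype.card V
        - Fintype.card V + 2 * (τ * Fintype.card V) := by ring
    _ = _ := by rw [hp]; ring

lemma key_id (M : Finset V) (X : Submodule (ZMod 2) V) (w z : V) :
    (Fintype.card X : ℝ) * (gg M (z + w) - gg M z) =
      Fintype.card X * (AA M X w 0 (z + w) - AA M X w 0 z)
        - 2 * ∑ l : Dual (ZMod 2) X, (AA M X w l z - AA M X w 0 z) := by
  have h1 : ∀ l : Dual (ZMod 2) X, AA M X w l z - AA M X w 0 z =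
      ∑ x : X, (1 - sgn (l x)) / 2 * (gg M (z + w + x) - gg M (z + x)) := by
    intro l
    simp only [AA]
    rw [← Finset.sum_sub_distrib]
    apply Finset.sum_congr rfl
    intro x _
    have : ∀ a : ZMod 2, a = 0 ∨ a = 1 := by decide
    rcases this (l x) with h | h
    · simp [h, sgn]
    · have e : z + ((x : V) + w) = z + w + x := by abel
      simp [h, sgn, e]
  simp only [h1]
  rw [Finset.sum_comm]
  have h2 : ∀ x : X, ∑ l : Dual (ZMod 2) X, (1 - sgn (l x)) / 2 * (gg M (z + w + x) - gg M (z + x))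
      = (Fintype.card X / 2 : ℝ) * (gg M (z + w + x) - gg M (z + x))
        - (if x = 0 then (Fintype.card X / 2 : ℝ) * (gg M (z + w + x) - gg M (z + x)) else 0) := by
    intro x
    rw [← Finset.sum_mul, ← Finset.sum_div, Finset.sum_sub_distrib, sum_sgn]
    simp only [Finset.sum_const, Finset.card_univ, nsmul_eq_mul, mul_one, card_dual]
    split_ifs <;> ring
  simp only [h2]
  rw [Finset.sum_sub_distrib, ← Finset.mul_sum, Finset.sum_ite_eq' Finset.univ (0 : X)]
  simp only [AA, LinearMap.zero_apply, zero_smul, add_zero, Finset.mem_univ, if_true,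
    Submodule.coe_zero, Finset.sum_sub_distrib]
  ring

lemma near_inv {X D : Submodule (ZMod 2) V} {M : Finset V} (h0 : (0:V) ∉ M) (hB : BB X D M)
    {δ τ : ℝ} (hM : ((Mᶜ).card : ℝ) ≤ ((1 / 2) ^ finrank (ZMod 2) X + δ) * Fintype.card V)
    (hZ : ∀ X' : Submodule (ZMod 2) V, finrank (ZMod 2) X' = finrank (ZMod 2) X → BB X' D M →
      ((Finset.univ.filter (fun z : V => ∀ x ∈ X', z + x ∈ M)).card : ℝ) ≤ τ * Fintype.card V)
    {w : V} (hw : w ∈ D) :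
    ((M.filter (fun z => z + w ∉ M)).card : ℝ) ≤
      6 * ((2 ^ finrank (ZMod 2) X * δ + 2 * τ) * Fintype.card V) := by
  set κ := (2 ^ finrank (ZMod 2) X * δ + 2 * τ) * (Fintype.card V : ℝ) with hκ
  have hA := AA_bound h0 hB hM hZ hw
  have hX := cardV_pos (V := X)
  have hA' : ∑ z : V, |AA M X w 0 (z + w) - 1| ≤ κ := by
    have e : ∑ z : V, |AA M X w 0 (z + w) - 1| = ∑ z, |AA M X w 0 z - 1| :=
      Equiv.sum_comp (Equiv.addRight w) (fun z => |AA M X w 0 z - 1|)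
    rw [e]
    exact hA 0
  have hT : ∑ z : V, |AA M X w 0 (z + w) - AA M X w 0 z| ≤ 2 * κ := by
    calc _ ≤ ∑ z : V, (|AA M X w 0 (z + w) - 1| + |AA M X w 0 z - 1|) := by
          apply Finset.sum_le_sum
          intro z _
          have := abs_sub_le (AA M X w 0 (z + w)) 1 (AA M X w 0 z)
          rwa [abs_sub_comm 1] at this
      _ ≤ _ := by rw [Finset.sum_add_distrib]; linarith [hA 0]
  have hR : ∀ l, ∑ z : V, |AA M X w l z - AA M X w 0 z| ≤ 2 * κ := by
    intro l
    calc _ ≤ ∑ z : V, (|AA M X w l z - 1| + |AA M X w 0 z - 1|) := by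
          apply Finset.sum_le_sum
          intro z _
          have := abs_sub_le (AA M X w l z) 1 (AA M X w 0 z)
          rwa [abs_sub_comm 1] at this
      _ ≤ _ := by rw [Finset.sum_add_distrib]; linarith [hA 0, hA l]
  have hmain : (Fintype.card X : ℝ) * ∑ z : V, |gg M (z + w) - gg M z| ≤ Fintype.card X * (6 * κ) := by
    calc (Fintype.card X : ℝ) * ∑ z : V, |gg M (z + w) - gg M z|
        = ∑ z : V, |(Fintype.card X : ℝ) * (gg M (z + w) - gg M z)| := by
          rw [Finset.mul_sum]
          simp only [abs_mul, abs_of_pos hX]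
      _ ≤ ∑ z : V, (Fintype.card X * |AA M X w 0 (z + w) - AA M X w 0 z|
            + 2 * ∑ l : Dual (ZMod 2) X, |AA M X w l z - AA M X w 0 z|) := by
          apply Finset.sum_le_sum
          intro z _
          rw [key_id]
          refine (abs_sub _ _).trans ?_
          rw [abs_mul, abs_mul, abs_of_pos hX, abs_two]
          gcongr
          exact Finset.abs_sum_le_sum_abs _ _
      _ = Fintype.card X * ∑ z : V, |AA M X w 0 (z + w) - AA M X w 0 z|
            + 2 * ∑ l : Dual (ZMod 2) X, ∑ z : V, |AA M X w l z - AA M X w 0 z| := by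
          rw [Finset.sum_add_distrib, ← Finset.mul_sum, ← Finset.mul_sum, Finset.sum_comm]
      _ ≤ Fintype.card X * (2 * κ) + 2 * ∑ l : Dual (ZMod 2) X, 2 * κ := by
          gcongr with l
          exact hR l
      _ = _ := by
          simp only [Finset.sum_const, Finset.card_univ, nsmul_eq_mul, card_dual]; ring
  have hfin := le_of_mul_le_mul_left hmain hX
  refine le_trans ?_ hfin
  have : ((M.filter (fun z => z + w ∉ M)).card : ℝ) = ∑ z ∈ M.filter (fun z => z + w ∉ M), |gg M (z + w) - gg M z| := by
    rw [Finset.card_eq_sum_ones]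
    push_cast
    apply Finset.sum_congr rfl
    intro z hz
    have := Finset.mem_filter.1 hz
    simp [gg, this.1, this.2]
  rw [this]
  exact Finset.sum_le_sum_of_subset_of_nonneg (Finset.subset_univ _) (fun _ _ _ => abs_nonneg _)

end

lemma near_all {V : Type} [AddCommGroup V] [Module (ZMod 2) V] [Fintype V]
    (M : Finset V) (D : Submodule (ZMod 2) V) (β : ℝ)
    (h : ∀ w ∈ D, ((M.filter (fun z => z + w ∉ M)).card : ℝ) ≤ β) :
    ((M.filter (fun y => ¬ ∀ d ∈ D, y + d ∈ M)).card : ℝ) ≤ 2 ^ finrank (ZMod 2) D * β := by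
  have hsub : M.filter (fun y => ¬ ∀ d ∈ D, y + d ∈ M) ⊆
      (Finset.univ : Finset D).biUnion (fun w => M.filter (fun z => z + (w : V) ∉ M)) := by
    intro y hy
    simp only [Finset.mem_filter, not_forall] at hy
    obtain ⟨hyM, d, hd, hn⟩ := hy
    simp only [Finset.mem_biUnion, Finset.mem_univ, true_and, Finset.mem_filter]
    exact ⟨⟨d, hd⟩, hyM, hn⟩
  have h1 := (Finset.card_le_card hsub).trans Finset.card_biUnion_le
  have h2 : ((M.filter (fun y => ¬ ∀ d ∈ D, y + d ∈ M)).card : ℝ) ≤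
      ∑ w : D, ((M.filter (fun z => z + (w : V) ∉ M)).card : ℝ) := by
    exact_mod_cast h1
  have h3 : ∑ w : D, ((M.filter (fun z => z + (w : V) ∉ M)).card : ℝ) ≤ ∑ w : D, β :=
    Finset.sum_le_sum (fun (w : D) _ => h w w.2)
  refine h2.trans (h3.trans ?_)
  rw [Finset.sum_const, Finset.card_univ, nsmul_eq_mul, cardV (V := D)]

lemma abs_main (j k : ℕ) (ε : ℝ) (hε : 0 < ε) : ∃ δ : ℝ, 0 < δ ∧ ∃ r₀ : ℕ, ∀ (V : Type) [AddCommGroup V]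
    [Module (ZMod 2) V] [Fintype V] (M : Finset V), (0:V) ∉ M →
    (¬ ∃ X D : Submodule (ZMod 2) V, finrank (ZMod 2) X = j + 1 ∧ finrank (ZMod 2) D = k ∧ BB X D M) →
    r₀ ≤ finrank (ZMod 2) V → ((Mᶜ).card : ℝ) ≤ ((1 / 2) ^ j + δ) * Fintype.card V →
    ∃ W : Submodule (ZMod 2) V, finrank (ZMod 2) W + j = finrank (ZMod 2) V ∧
      ((M.filter (fun z => z ∈ W)).card : ℝ) + (((Mᶜ).filter (fun z => z ∉ W)).card : ℝ)
        < ε * Fintype.card V := by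
  obtain ⟨δS, hδS, HS⟩ := S_all j (ε / 4) (by positivity)
  set μ := min (ε / 8) (δS / 2) with hμ
  have hμ0 : 0 < μ := by rw [hμ]; positivity
  set η := μ / (6 * 2 ^ k) with hη
  have hη0 : 0 < η := by positivity
  set τ := η / 4 with hτ
  have hτ0 : 0 < τ := by positivity
  set δ := min (min μ (η / 2 ^ (j + 1))) (1 / 2 ^ (j + 1)) with hδ
  have hδ0 : 0 < δ := by rw [hδ]; positivity
  have hδ1 : δ ≤ μ := (min_le_left _ _).trans (min_le_left _ _)
  have hp : (0:ℝ) < 2 ^ j := by positivity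
  have hδ2 : 2 ^ j * δ ≤ η / 2 := by
    have : δ ≤ η / 2 ^ (j + 1) := (min_le_left _ _).trans (min_le_right _ _)
    calc 2 ^ j * δ ≤ 2 ^ j * (η / 2 ^ (j + 1)) := by gcongr
      _ = η / 2 := by rw [pow_succ]; field_simp
  have hδ3 : 2 ^ j * δ ≤ 1 / 2 := by
    have : δ ≤ 1 / 2 ^ (j + 1) := min_le_right _ _
    calc 2 ^ j * δ ≤ 2 ^ j * (1 / 2 ^ (j + 1)) := by gcongr
      _ = 1 / 2 := by rw [pow_succ]; field_simp
  have hμ1 : μ ≤ ε / 8 := min_le_left _ _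
  have hμ2 : μ ≤ δS / 2 := min_le_right _ _
  obtain ⟨m, Hm⟩ := grow k τ hτ0
  obtain ⟨r₀, Hr⟩ := exists_BB j (max m k)
  refine ⟨δ, hδ0, r₀, ?_⟩
  intro V _ _ _ M h0 hno hr hM
  have hN := cardV_pos (V := V)
  have hpp : (2:ℝ) ^ j * (1 / 2) ^ j = 1 := by rw [← mul_pow]; norm_num
  obtain ⟨X, D, hX, hD, hB⟩ := Hr V M h0 hr (by
    calc 2 ^ j * ((Mᶜ).card : ℝ) ≤ 2 ^ j * (((1 / 2) ^ j + δ) * Fintype.card V) := by gcongr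
      _ = (2 ^ j * (1 / 2) ^ j + 2 ^ j * δ) * Fintype.card V := by ring
      _ ≤ 3 / 2 * Fintype.card V := by
        rw [hpp]; gcongr; linarith)
  obtain ⟨D0, hD0, hD0k⟩ := exists_sub k D (by rw [hD]; exact le_max_right _ _)
  have hnear : ∀ w ∈ D0, ((M.filter (fun z => z + w ∉ M)).card : ℝ) ≤ 6 * (η * Fintype.card V) := by
    intro w hw
    have := near_inv (δ := δ) (τ := τ) h0 hB (by rw [hX]; exact hM) (by
      intro X' hX' hB'
      by_contra hc
      push Not at hc
      obtain ⟨X1, W, a, b, c⟩ := Hm V X' D M h0 hB' (by rw [hD]; exact le_max_left _ _) hc.le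
      exact hno ⟨X1, W, by rw [a, hX', hX], b, c⟩) (hD0 hw)
    refine this.trans ?_
    rw [hX]
    gcongr
    linarith
  have hall := near_all M D0 _ hnear
  rw [hD0k] at hall
  have hall' : ((M.filter (fun y => ¬ ∀ d ∈ D0, y + d ∈ M)).card : ℝ) ≤ μ * Fintype.card V := by
    refine hall.trans (le_of_eq ?_)
    rw [hη]; field_simp
  set E := M.filter (fun y => ¬ ∀ d ∈ D0, y + d ∈ M) with hE
  set M' := Finset.univ.filter (fun y : V => ∀ d ∈ D0, y + d ∈ M) with hM'
  have hsub : M' ⊆ M := by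
    intro y hy
    simpa using (Finset.mem_filter.1 hy).2 0 D0.zero_mem
  have hc : M'ᶜ ⊆ Mᶜ ∪ E := by
    intro y hy
    simp only [hM', hE, Finset.mem_compl, Finset.mem_filter, Finset.mem_univ, true_and,
      Finset.mem_union] at hy ⊢
    by_cases hyM : y ∈ M
    · exact Or.inr ⟨hyM, hy⟩
    · exact Or.inl hyM
  have hc' : ((M'ᶜ).card : ℝ) ≤ (Mᶜ).card + E.card := by
    exact_mod_cast (Finset.card_le_card hc).trans (Finset.card_union_le _ _)
  obtain ⟨W, hW, hWM⟩ := HS V M' (fun h => h0 (hsub h)) (by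
    rintro ⟨Y, hY, hYM⟩
    refine hno ⟨Y, D0, hY, hD0k, ?_⟩
    intro x hx hx0 d hd
    exact (Finset.mem_filter.1 (hYM x hx hx0)).2 d hd) (by nlinarith)
  refine ⟨W, hW, ?_⟩
  have hMW : ((M.filter (fun z => z ∈ W)).card : ℝ) ≤ (M'.filter (fun z => z ∈ W)).card + E.card := by
    have : M.filter (fun z => z ∈ W) ⊆ M'.filter (fun z => z ∈ W) ∪ E := by
      intro y hy
      simp only [hM', hE, Finset.mem_filter, Finset.mem_univ, true_and,
        Finset.mem_union] at hy ⊢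
      by_cases hyM : ∀ d ∈ D0, y + d ∈ M
      · exact Or.inl ⟨hyM, hy.2⟩
      · exact Or.inr ⟨hy.1, hyM⟩
    exact_mod_cast (Finset.card_le_card this).trans (Finset.card_union_le _ _)
  have hout := card_outside M W
  have hpw : (2:ℝ) ^ finrank (ZMod 2) W = (1 / 2) ^ j * Fintype.card V := by
    rw [cardV, ← hW, pow_add]
    calc (2:ℝ) ^ finrank (ZMod 2) W = 2 ^ finrank (ZMod 2) W * (2 ^ j * (1 / 2) ^ j) := by rw [hpp, mul_one]
      _ = _ := by ring
  rw [hpw] at hout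
  rw [hout]
  nlinarith

lemma restr_of_BB {k c : ℕ} {V : Type} [AddCommGroup V] [Module (ZMod 2) V] [Fintype V]
    (N : Set (Fin k → ZMod 2)) (φ : (Fin k → ZMod 2) →ₗ[ZMod 2] (Fin c → ZMod 2))
    (hφ : ∀ x ∈ N, φ x ≠ 0) (M : Finset V) (h0 : (0:V) ∉ M) (X D : Submodule (ZMod 2) V)
    (hX : finrank (ZMod 2) X = c) (hD : finrank (ZMod 2) D = k) (hB : BB X D M) :
    ∃ ψ : (Fin k → ZMod 2) →ₗ[ZMod 2] V, Function.Injective ψ ∧ ∀ x ∈ N, ψ x ∈ M := by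
  let eX : (Fin c → ZMod 2) ≃ₗ[ZMod 2] X := LinearEquiv.ofFinrankEq _ _ (by simp [hX])
  let eD : (Fin k → ZMod 2) ≃ₗ[ZMod 2] D := LinearEquiv.ofFinrankEq _ _ (by simp [hD])
  let ψ : (Fin k → ZMod 2) →ₗ[ZMod 2] V :=
    X.subtype ∘ₗ eX.toLinearMap ∘ₗ φ + D.subtype ∘ₗ eD.toLinearMap
  have hψ : ∀ v, ψ v = (eX (φ v) : V) + (eD v : V) := fun v => rfl
  have hmem : ∀ v, φ v ≠ 0 → ψ v ∈ M := by
    intro v hv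
    rw [hψ]
    refine hB _ (eX (φ v)).2 ?_ _ (eD v).2
    intro h
    apply hv
    have : eX (φ v) = 0 := Subtype.ext h
    simpa using this
  refine ⟨ψ, ?_, fun x hx => hmem x (hφ x hx)⟩
  rw [injective_iff_map_eq_zero]
  intro v hv
  by_cases h : φ v = 0
  · rw [hψ, h] at hv
    have : eD v = 0 := Subtype.ext (by simpa using hv)
    simpa using this
  · have := hmem v h
    rw [hv] at this
    exact absurd this h0

end ESS

/-- Rank version of stability for the matroidal Erdős–Stone theorem. -/
theorem erdos_stone_stability_rank {k : ℕ} (N : Set (Fin k → ZMod 2))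
    (hN0 : 0 ∉ N) (hNne : N.Nonempty) (hχ : 2 ≤ critNum N)
    {ε : ℝ} (hε : 0 < ε) :
    ∃ δ : ℝ, 0 < δ ∧ ∃ r₀ : ℕ, ∀ n : ℕ, ∀ M : Set (Fin n → ZMod 2),
      0 ∉ M → ¬ HasRestriction N M → r₀ ≤ rankM M →
      (1 - 2 ^ (1 - (critNum N : ℤ)) - δ) * 2 ^ rankM M ≤ (M.ncard : ℝ) →
      ∃ U W : Submodule (ZMod 2) (Fin n → ZMod 2),
        W ≤ U ∧ M ⊆ (U : Set (Fin n → ZMod 2)) ∧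
        Module.finrank (ZMod 2) U = rankM M ∧
        Module.finrank (ZMod 2) W = rankM M - critNum N + 1 ∧
        ((symmDiff M {x : Fin n → ZMod 2 | x ∈ U ∧ x ≠ 0 ∧ x ∉ W}).ncard : ℝ)
          < ε * 2 ^ rankM M := by
  have hne : {c | ∃ φ : (Fin k → ZMod 2) →ₗ[ZMod 2] (Fin c → ZMod 2), ∀ x ∈ N, φ x ≠ 0}.Nonempty :=
    ⟨k, LinearMap.id, fun x hx h => hN0 (by rw [LinearMap.id_apply] at h; rwa [← h])⟩
  obtain ⟨φ, hφ⟩ : ∃ φ : (Fin k → ZMod 2) →ₗ[ZMod 2] (Fin (critNum N) → ZMod 2), ∀ x ∈ N, φ x ≠ 0 :=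
    Nat.sInf_mem hne
  generalize hcd : critNum N = c at *
  obtain ⟨j, rfl⟩ : ∃ j, c = j + 1 := ⟨c - 1, by omega⟩
  obtain ⟨δ, hδ, r₀, H⟩ := ESS.abs_main j k ε hε
  refine ⟨δ, hδ, max r₀ (j + 1), ?_⟩
  intro n M h0 hfree hr hM
  set U := Submodule.span (ZMod 2) M with hU
  have hMU : M ⊆ (U : Set (Fin n → ZMod 2)) := Submodule.subset_span
  set MV : Finset U := Finset.univ.filter (fun v : U => (v : Fin n → ZMod 2) ∈ M) with hMV
  have hmem : ∀ v : U, v ∈ MV ↔ (v : Fin n → ZMod 2) ∈ M := by intro v; simp [hMV]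
  have hrk : Module.finrank (ZMod 2) U = rankM M := rfl
  have hcard : MV.card = M.ncard := by
    have : M = ((MV.image (fun v : U => (v : Fin n → ZMod 2)) : Finset _) : Set (Fin n → ZMod 2)) := by
      ext x
      simp only [Finset.coe_image, Set.mem_image, Finset.mem_coe, hmem]
      exact ⟨fun h => ⟨⟨x, hMU h⟩, h, rfl⟩, by rintro ⟨v, hv, rfl⟩; exact hv⟩
    conv_rhs => rw [this]
    rw [Set.ncard_coe_finset, Finset.card_image_of_injective _ Subtype.val_injective]
  have hcV : (Fintype.card U : ℝ) = 2 ^ rankM M := by rw [ESS.cardV, hrk]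
  have h0V : (0 : U) ∉ MV := by rw [hmem]; simpa using h0
  obtain ⟨W, hW, hlt⟩ := H U MV h0V (by
    rintro ⟨X, D, hX, hD, hB⟩
    obtain ⟨ψ, hψ, hψM⟩ := ESS.restr_of_BB N φ hφ MV h0V X D hX hD hB
    refine hfree ⟨U.subtype ∘ₗ ψ, U.injective_subtype.comp hψ, ?_⟩
    rintro _ ⟨x, hx, rfl⟩
    exact (hmem _).1 (hψM x hx)) ((le_max_left _ _).trans hr) (by
    rw [ESS.card_compl_real, hcard, hcV]
    have e : (2:ℝ) ^ (1 - ((j + 1 : ℕ) : ℤ)) = (1 / 2) ^ j := by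
      have : (1 - ((j + 1 : ℕ) : ℤ)) = - (j : ℤ) := by push_cast; ring
      rw [this, zpow_neg, zpow_natCast]; simp
    rw [e] at hM
    linarith)
  have hj : j + 1 ≤ rankM M := (le_max_right _ _).trans hr
  refine ⟨U, W.map U.subtype, Submodule.map_subtype_le U W, hMU, hrk, ?_, ?_⟩
  · rw [Submodule.finrank_map_subtype_eq]
    omega
  · rw [← hcV]
    refine lt_of_le_of_lt ?_ hlt
    have hsub : symmDiff M {x : Fin n → ZMod 2 | x ∈ U ∧ x ≠ 0 ∧ x ∉ W.map U.subtype} ⊆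
        (((MV.filter (fun z => z ∈ W) ∪ (MVᶜ).filter (fun z => z ∉ W)).image
          (fun v : U => (v : Fin n → ZMod 2)) : Finset _) : Set (Fin n → ZMod 2)) := by
      have hWm : ∀ (x : Fin n → ZMod 2) (hx : x ∈ U), x ∈ W.map U.subtype ↔ (⟨x, hx⟩ : U) ∈ W := by
        intro x hx
        constructor
        · rintro ⟨v, hv, rfl⟩; exact hv
        · intro h; exact ⟨_, h, rfl⟩
      intro x hx
      simp only [Finset.coe_image, Set.mem_image, Finset.mem_coe, Finset.mem_union, Finset.mem_filter,
        Finset.mem_compl, hmem]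
      rcases hx with ⟨hxM, hx⟩ | ⟨⟨hxU, hx0, hxW⟩, hx⟩
      · refine ⟨⟨x, hMU hxM⟩, Or.inl ⟨hxM, ?_⟩, rfl⟩
        by_contra hc
        exact hx ⟨hMU hxM, fun h => h0 (h ▸ hxM), fun h => hc ((hWm _ _).1 h)⟩
      · exact ⟨⟨x, hxU⟩, Or.inr ⟨hx, fun h => hxW ((hWm _ _).2 h)⟩, rfl⟩
    have h1 := Set.ncard_le_ncard hsub (Finset.finite_toSet _)
    rw [Set.ncard_coe_finset] at h1
    have h2 := h1.trans (Finset.card_image_le.trans (Finset.card_union_le _ _))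
    refine (Nat.cast_le (α := ℝ).2 h2).trans (le_of_eq ?_)
    push_cast
    congr!
end

section
/- (Critical element theorem.) Let N be a matroid with χ(N) ≥ 2 such that χ(N \ {e}) < χ(N) for some e ∈ N. Then there exists n₀ such that for all n ≥ n₀, ex({N}, n) = 2ⁿ(1 − 2^{1−χ(N)}), and moreover every n-dimensional N-free matroid M with |M| = 2ⁿ(1 − 2^{1−χ(N)}) is a Bose–Burton geometry, i.e. M = (𝔽₂ⁿ \ {0}) \ W for some subspace W of 𝔽₂ⁿ of dimension n − χ(N) + 1. -/
open scoped Classical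

abbrev FV (n : ℕ) := Fin n → ZMod 2

lemma fv_add_self {n : ℕ} (x : FV n) : x + x = 0 := by
  funext i
  exact CharTwo.add_self_eq_zero (x i)

lemma fv_add_add {n : ℕ} (x u : FV n) : x + u + u = x := by
  rw [add_assoc, fv_add_self, add_zero]

lemma fv_scalar (a : ZMod 2) : a = 0 ∨ a = 1 := by
  fin_cases a
  · left; rfl
  · right; rfl

noncomputable def fvSet {n : ℕ} (U : Submodule (ZMod 2) (FV n)) : Finset (FV n) :=
  Finset.univ.filter (fun x => x ∈ U)

lemma mem_fvSet {n : ℕ} {U : Submodule (ZMod 2) (FV n)} {x : FV n} : x ∈ fvSet U ↔ x ∈ U := by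
  simp [fvSet]

lemma card_fvSet {n : ℕ} (U : Submodule (ZMod 2) (FV n)) :
    (fvSet U).card = 2 ^ Module.finrank (ZMod 2) U := by
  have h := Module.card_eq_pow_finrank (K := ZMod 2) (V := U)
  rw [ZMod.card] at h
  rw [← h, fvSet, Fintype.card_subtype]

noncomputable def corr {n : ℕ} (A : Finset (FV n)) (u : FV n) : Finset (FV n) :=
  A.filter (fun x => x + u ∈ A)

lemma sum_corr {n : ℕ} (A : Finset (FV n)) : ∑ u, (corr A u).card = A.card ^ 2 := by
  simp only [corr, Finset.card_filter]
  rw [Finset.sum_comm, pow_two, ← smul_eq_mul, ← Finset.sum_const]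
  refine Finset.sum_congr rfl fun x _ => ?_
  rw [← Finset.card_filter]
  refine Finset.card_bij' (fun u _ => x + u) (fun y _ => x + y) ?_ ?_ ?_ ?_
  · intro a ha; simpa using ha
  · intro a ha; simp only [Finset.mem_filter, Finset.mem_univ, true_and]
    rwa [← add_assoc, fv_add_self, zero_add]
  · intro a _; rw [← add_assoc, fv_add_self, zero_add]
  · intro a _; rw [← add_assoc, fv_add_self, zero_add]

lemma finrank_sup_span {n : ℕ} (D : Submodule (ZMod 2) (FV n)) (u : FV n) (hu : u ∉ D) :
    Module.finrank (ZMod 2) ↥(D ⊔ Submodule.span (ZMod 2) {u}) = Module.finrank (ZMod 2) D + 1 := by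
  have h := Submodule.finrank_sup_add_finrank_inf_eq D (Submodule.span (ZMod 2) {u})
  have hu0 : u ≠ 0 := by rintro rfl; exact hu D.zero_mem
  have h1 : D ⊓ Submodule.span (ZMod 2) {u} = ⊥ := by
    rw [← disjoint_iff, Submodule.disjoint_span_singleton' hu0]; exact hu
  rw [h1, finrank_bot, finrank_span_singleton hu0] at h
  omega

lemma mem_sup_span {n : ℕ} {D : Submodule (ZMod 2) (FV n)} {u x : FV n}
    (hx : x ∈ D ⊔ Submodule.span (ZMod 2) {u}) : x ∈ D ∨ ∃ d ∈ D, x = d + u := by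
  rw [Submodule.mem_sup] at hx
  obtain ⟨d, hd, z, hz, rfl⟩ := hx
  rw [Submodule.mem_span_singleton] at hz
  obtain ⟨a, rfl⟩ := hz
  rcases fv_scalar a with rfl | rfl
  · left; simpa using hd
  · right; exact ⟨d, hd, by simp⟩

lemma cube_lemma (t : ℕ) : ∀ (d : ℕ) (δ : ℝ), 0 < δ → ∃ K : ℕ, ∀ (n : ℕ)
    (U D : Submodule (ZMod 2) (FV n)) (A : Finset (FV n)), D ≤ U →
    Module.finrank (ZMod 2) D = d → K ≤ Module.finrank (ZMod 2) U →
    (∀ x ∈ A, x ∈ U) → (∀ x ∈ A, ∀ u ∈ D, x + u ∈ A) →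
    δ * 2 ^ Module.finrank (ZMod 2) U ≤ (A.card : ℝ) →
    ∃ D' : Submodule (ZMod 2) (FV n), D ≤ D' ∧ D' ≤ U ∧
      Module.finrank (ZMod 2) D' = d + t ∧ ∃ w, ∀ u ∈ D', w + u ∈ A := by
  induction t with
  | zero =>
    intro d δ hδ
    refine ⟨0, fun n U D A hDU hD _ _ hinv hA => ⟨D, le_rfl, hDU, by simpa using hD, ?_⟩⟩
    have : 0 < (A.card : ℝ) := lt_of_lt_of_le (by positivity) hA
    have : 0 < A.card := by exact_mod_cast this
    obtain ⟨w, hw⟩ := Finset.card_pos.mp this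
    exact ⟨w, fun u hu => hinv w hw u hu⟩
  | succ t ih =>
    intro d δ hδ
    obtain ⟨K, hK⟩ := ih (d+1) (δ^2/2) (by positivity)
    obtain ⟨L, hL⟩ := pow_unbounded_of_one_lt (2 * 2^d / δ) (one_lt_two (α := ℝ))
    refine ⟨max K L, fun n U D A hDU hD hr hAU hinv hA => ?_⟩
    set q : ℝ := 2 ^ Module.finrank (ZMod 2) U with hq
    have hqL : 2 * 2^d < δ * q := by
      have : (2:ℝ)^L ≤ q := pow_le_pow_right₀ one_le_two (le_trans (le_max_right _ _) hr)
      have h2 := lt_of_lt_of_le hL this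
      rw [div_lt_iff₀ hδ] at h2
      linarith
    have hq0 : 0 < q := by positivity
    have key : ∃ u ∈ U, u ∉ D ∧ δ^2/2 * q ≤ ((corr A u).card : ℝ) := by
      by_contra! hcon
      have hs : (A.card : ℝ)^2 = ∑ u, ((corr A u).card : ℝ) := by
        exact_mod_cast (sum_corr A).symm
      have hb : ∀ u, ((corr A u).card : ℝ) ≤
          (if u ∈ D then (A.card : ℝ) else 0) + (if u ∈ U then δ^2/2*q else 0) := by
        intro u
        by_cases hu : u ∈ U
        · by_cases hd : u ∈ D
          · have : ((corr A u).card : ℝ) ≤ A.card := by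
              exact_mod_cast Finset.card_filter_le _ _
            rw [if_pos hu, if_pos hd]
            have : 0 ≤ δ^2/2*q := by positivity
            linarith
          · rw [if_pos hu, if_neg hd]
            linarith [hcon u hu hd]
        · have : corr A u = ∅ := by
            rw [corr, Finset.filter_eq_empty_iff]
            intro x hx hxu
            exact hu (by simpa using (U.add_mem_iff_right (hAU x hx)).mp (hAU _ hxu))
          rw [this, if_neg hu, if_neg (fun h => hu (hDU h))]
          simp
      have h3 := Finset.sum_le_sum (fun u (_ : u ∈ Finset.univ) => hb u)
      rw [← hs, Finset.sum_add_distrib, ← Finset.sum_filter, ← Finset.sum_filter,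
        Finset.sum_const, Finset.sum_const] at h3
      have c1 := card_fvSet D
      have c2 := card_fvSet U
      rw [fvSet] at c1 c2
      rw [c1, c2, hD, nsmul_eq_mul, nsmul_eq_mul] at h3
      push_cast at h3
      rw [← hq] at h3
      have h4 : δ^2 * q^2 ≤ A.card * (δ * q) := by nlinarith [mul_pos hδ hq0]
      have h5 : 0 < (A.card : ℝ) := lt_of_lt_of_le (by positivity) hA
      nlinarith
    obtain ⟨u, huU, huD, hcard⟩ := key
    obtain ⟨D', h1, h2, h3, w, hw⟩ := hK n U (D ⊔ Submodule.span (ZMod 2) {u}) (corr A u)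
      (sup_le hDU (by rw [Submodule.span_singleton_le_iff_mem]; exact huU))
      (by rw [finrank_sup_span D u huD, hD]) (le_trans (le_max_left _ _) hr)
      (fun x hx => hAU x (Finset.mem_filter.mp hx).1) (by
        intro x hx v hv
        rw [corr, Finset.mem_filter] at hx ⊢
        rcases mem_sup_span hv with hv | ⟨v', hv', rfl⟩
        · exact ⟨hinv _ hx.1 _ hv, by
            rw [add_right_comm]; exact hinv _ hx.2 _ hv⟩
        · refine ⟨?_, ?_⟩
          · have := hinv _ hx.2 _ hv'
            rwa [add_right_comm, add_assoc] at this
          · have := hinv _ hx.1 _ hv'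
            rwa [← add_assoc, fv_add_add]) hcard
    exact ⟨D', le_trans le_sup_left h1, h2, by omega, w, fun v hv => 
      (Finset.mem_filter.mp (hw v hv)).1⟩

set_option maxHeartbeats 400000 in
lemma erdos_stone (c : ℕ) : ∀ (t : ℕ) (ε : ℝ), 1 ≤ t → 0 < ε → ∃ n0 : ℕ, ∀ n ≥ n0,
    ∀ (e : FV n) (M : Finset (FV n)), e ≠ 0 → (∀ x ∈ M, x + e ∈ M) →
    (1 - 2 / 2 ^ c + ε) * 2 ^ n ≤ (M.card : ℝ) →
    ∃ U C : Submodule (ZMod 2) (FV n), Module.finrank (ZMod 2) U = t ∧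
      Module.finrank (ZMod 2) C = c ∧ e ∈ U ∧ Disjoint U C ∧
      ∀ a ∈ C, a ≠ 0 → ∀ u ∈ U, a + u ∈ M := by
  induction c with
  | zero =>
    intro t ε ht hε
    obtain ⟨K, hK⟩ := cube_lemma (t-1) 1 1 one_pos
    refine ⟨K, fun n hn e M he _ _ => ?_⟩
    obtain ⟨D', h1, _, h3, _⟩ := hK n ⊤ (Submodule.span (ZMod 2) {e}) Finset.univ le_top
      (finrank_span_singleton he) (by simpa using hn) (by simp) (by simp) (by simp)
    refine ⟨D', ⊥, by omega, finrank_bot _ _, h1 (Submodule.mem_span_singleton_self e),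
      disjoint_bot_right, ?_⟩
    intro a ha ha0
    exact absurd (by simpa using ha) ha0
  | succ c ih =>
    intro t ε ht hε
    obtain ⟨K, hK⟩ := cube_lemma (t-1) 1 (ε/2) (by positivity)
    obtain ⟨n1, hn1⟩ := ih (max K 1) ε (le_max_right _ _) hε
    obtain ⟨L, hL⟩ := pow_unbounded_of_one_lt (2 ^ (max K 1 + c) / (ε/2)) (one_lt_two (α := ℝ))
    refine ⟨max n1 L, fun n hn e M he hinv hM => ?_⟩
    have hL2 : (2:ℝ) ^ (max K 1 + c) ≤ ε/2 * 2^n := by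
      have : (2:ℝ)^L ≤ 2^n := pow_le_pow_right₀ one_le_two (le_trans (le_max_right _ _) hn)
      have h2 := lt_of_lt_of_le hL this
      rw [div_lt_iff₀ (by positivity)] at h2
      linarith
    have hpn : (0:ℝ) < 2^n := by positivity
    have hpc : (0:ℝ) < 2^c := by positivity
    have hpc1 : (1:ℝ) ≤ 2^c := one_le_pow₀ one_le_two
    have hdiv : (2:ℝ) / 2^(c+1) = 1/2^c := by rw [pow_succ]; field_simp
    rw [hdiv] at hM
    obtain ⟨U, C, hU, hC, heU, hdis, hUC⟩ := hn1 n (le_trans (le_max_left _ _) hn) e M he hinv (by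
      refine le_trans ?_ hM
      gcongr
      norm_num)
    set M' := M.filter (fun x => x ∉ U ⊔ C) with hM'
    have hM'inv : ∀ x ∈ M', x + e ∈ M' := by
      intro x hx
      rw [hM', Finset.mem_filter] at hx ⊢
      refine ⟨hinv x hx.1, fun h => hx.2 ?_⟩
      exact (Submodule.add_mem_iff_left _ (Submodule.mem_sup_left heU)).mp h
    have hM'card : (1 - 1/2^c + ε/2) * 2^n ≤ (M'.card : ℝ) := by
      have h1 : M.card ≤ M'.card + (fvSet (U ⊔ C)).card := by
        refine le_trans (Finset.card_le_card ?_) (Finset.card_union_le _ _)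
        intro x hx
        rw [Finset.mem_union, mem_fvSet, hM', Finset.mem_filter]
        tauto
      rw [card_fvSet] at h1
      have h2 : 2 ^ Module.finrank (ZMod 2) ↥(U ⊔ C) ≤ 2 ^ (max K 1 + c) := by
        apply Nat.pow_le_pow_right two_pos
        rw [← hU, ← hC]
        exact Submodule.finrank_add_le_finrank_add_finrank U C
      have h3 : (M.card : ℝ) ≤ M'.card + 2 ^ (max K 1 + c) := by
        exact_mod_cast h1.trans (Nat.add_le_add_left h2 _)
      nlinarith
    set P := fvSet U ×ˢ fvSet C with hP
    have hPc : (P.card : ℝ) = 2^(max K 1) * 2^c := by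
      rw [hP, Finset.card_product, card_fvSet, card_fvSet, hU, hC]; push_cast; ring
    have hex : ∃ x : FV n, ((P.filter (fun p => x + p.1 + p.2 ∉ M')).card : ℝ) * 2^n ≤
        P.card * (2^n - M'.card) := by
      by_contra! hcon
      have hsum : ∑ x : FV n, (P.filter (fun p => x + p.1 + p.2 ∉ M')).card
          = P.card * (2^n - M'.card) := by
        simp only [Finset.card_filter]
        rw [Finset.sum_comm, ← smul_eq_mul, ← Finset.sum_const]
        refine Finset.sum_congr rfl fun p _ => ?_
        rw [← Finset.card_filter]
        have : (2:ℕ)^n - M'.card = M'ᶜ.card := by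
          rw [Finset.card_compl]; simp
        rw [this]
        refine Finset.card_bij' (fun x _ => x + p.1 + p.2) (fun y _ => y + p.2 + p.1) ?_ ?_ ?_ ?_
        · intro a ha; simpa using ha
        · intro a ha
          simp only [Finset.mem_filter, Finset.mem_univ, true_and, fv_add_add]
          simpa using ha
        · intro a _; rw [fv_add_add, fv_add_add]
        · intro a _; rw [fv_add_add, fv_add_add]
      have hle : M'.card ≤ 2^n := by
        have := Finset.card_le_univ M'
        simpa using this
      have hsum' : ∑ x : FV n, ((P.filter (fun p => x + p.1 + p.2 ∉ M')).card : ℝ)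
          = P.card * (2^n - M'.card) := by
        rw [← Nat.cast_sum, hsum]; push_cast [hle]; ring
      have := Finset.sum_lt_sum_of_nonempty (s := (Finset.univ : Finset (FV n)))
        ⟨0, Finset.mem_univ _⟩ (fun x _ => hcon x)
      have hsum2 : ∑ x : FV n, ((P.filter (fun p => x + p.1 + p.2 ∉ M')).card : ℝ) * 2^n
          = P.card * (2^n - M'.card) * 2^n := by rw [← Finset.sum_mul, hsum']
      rw [hsum2, Finset.sum_const, nsmul_eq_mul] at this
      have hcu : ((Finset.univ : Finset (FV n)).card : ℝ) = 2^n := by simp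
      rw [hcu] at this
      linarith
    obtain ⟨x, hx⟩ := hex
    set A := (fvSet U).filter (fun w => ∀ a ∈ C, x + w + a ∈ M') with hA
    have hAcard : ε/2 * 2 ^ Module.finrank (ZMod 2) U ≤ (A.card : ℝ) := by
      have h1 : (fvSet U).card ≤ A.card + (P.filter (fun p => x + p.1 + p.2 ∉ M')).card := by
        set Q := P.filter (fun p => x + p.1 + p.2 ∉ M') with hQ
        have i1 : (Q.image Prod.fst).card ≤ Q.card := Finset.card_image_le
        have i2 := Finset.card_union_le A (Q.image Prod.fst)
        suffices hsub : fvSet U ⊆ A ∪ Q.image Prod.fst by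
          have i3 := Finset.card_le_card hsub
          linarith
        intro w hw
        rw [Finset.mem_union]
        by_cases h : ∀ a ∈ C, x + w + a ∈ M'
        · left; rw [hA, Finset.mem_filter]; exact ⟨hw, h⟩
        · right
          push Not at h
          obtain ⟨a, ha, hna⟩ := h
          rw [Finset.mem_image]
          refine ⟨(w, a), ?_, rfl⟩
          rw [hQ, Finset.mem_filter, hP, Finset.mem_product, mem_fvSet, mem_fvSet]
          exact ⟨⟨mem_fvSet.mp hw, ha⟩, hna⟩
      rw [card_fvSet, hU] at h1
      rw [hU]
      have h2 : (2:ℝ)^(max K 1) ≤ A.card + (P.filter (fun p => x + p.1 + p.2 ∉ M')).card := by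
        exact_mod_cast h1
      have hq : (0:ℝ) < 2^(max K 1) := by positivity
      set q : ℝ := 2^(max K 1)
      set r : ℝ := ((P.filter (fun p => x + p.1 + p.2 ∉ M')).card : ℝ)
      have h3 : r ≤ q * 2^c * (1/2^c - ε/2) := by
        have : r * 2^n ≤ (q * 2^c * (1/2^c - ε/2)) * 2^n := by
          refine hx.trans ?_
          rw [hPc, mul_assoc]
          have : (2:ℝ)^n - M'.card ≤ (1/2^c - ε/2) * 2^n := by linarith
          rw [mul_assoc (q * 2^c), mul_assoc q]
          gcongr
        exact le_of_mul_le_mul_right this hpn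
      have h4 : q * 2^c * (1/2^c - ε/2) = q - q * 2^c * (ε/2) := by field_simp
      have h5 : q * 1 * (ε/2) ≤ q * 2^c * (ε/2) := by gcongr
      linarith
    obtain ⟨D', h1, h2, h3, w, hw⟩ := hK n U (Submodule.span (ZMod 2) {e}) A
      (by rw [Submodule.span_singleton_le_iff_mem]; exact heU)
      (finrank_span_singleton he) (by rw [hU]; exact le_max_left _ _)
      (fun y hy => mem_fvSet.mp (Finset.mem_filter.mp hy).1) (by
        intro y hy v hv
        rw [Submodule.mem_span_singleton] at hv
        obtain ⟨s, rfl⟩ := hv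
        rcases fv_scalar s with rfl | rfl
        · simpa using hy
        · rw [one_smul]
          rw [hA, Finset.mem_filter, mem_fvSet] at hy ⊢
          refine ⟨U.add_mem hy.1 heU, fun a ha => ?_⟩
          have := hM'inv _ (hy.2 a ha)
          rwa [add_right_comm, add_assoc x] at this) hAcard
    have hgood : ∀ u ∈ D', ∀ a ∈ C, x + (w + u) + a ∈ M' := fun u hu =>
      (Finset.mem_filter.mp (hw u hu)).2
    have hx'F : x + w ∉ U ⊔ C := by
      have := hgood 0 D'.zero_mem 0 C.zero_mem
      rw [add_zero, add_zero] at this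
      exact (Finset.mem_filter.mp this).2
    refine ⟨D', C ⊔ Submodule.span (ZMod 2) {x + w}, by omega, ?_,
      h1 (Submodule.mem_span_singleton_self e), ?_, ?_⟩
    · rw [finrank_sup_span, hC]
      exact fun h => hx'F (Submodule.mem_sup_right h)
    · rw [Submodule.disjoint_def]
      intro y hyD hyC
      rcases mem_sup_span hyC with hy | ⟨d, hd, rfl⟩
      · exact Submodule.disjoint_def.mp hdis y (h2 hyD) hy
      · exact absurd ((Submodule.add_mem_iff_right _ (Submodule.mem_sup_right hd)).mp
          (Submodule.mem_sup_left (h2 hyD))) hx'F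
    · intro a ha ha0 u hu
      rcases mem_sup_span ha with ha | ⟨d, hd, rfl⟩
      · exact hUC a ha ha0 u (h2 hu)
      · have := (Finset.mem_filter.mp (hgood u hu d hd)).1
        convert this using 1
        abel

lemma corr_triangle {n : ℕ} (A : Finset (FV n)) (x y : FV n) :
    (corr A x).card + (corr A y).card ≤ A.card + (corr A (x + y)).card := by
  have h1 := Finset.card_union_add_card_inter (corr A x) (corr A y)
  have h2 : (corr A x ∪ corr A y).card ≤ A.card :=
    Finset.card_le_card (Finset.union_subset (Finset.filter_subset _ _) (Finset.filter_subset _ _))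
  have h3 : (corr A x ∩ corr A y).card ≤ (corr A (x + y)).card := by
    refine Finset.card_le_card_of_injOn (fun b => b + x) ?_ ?_
    · intro b hb
      simp only [corr, Finset.coe_inter, Finset.coe_filter, Set.mem_inter_iff, Set.mem_setOf_eq] at hb ⊢
      refine ⟨hb.1.2, ?_⟩
      rw [← add_assoc, fv_add_add]; exact hb.2.2
    · intro a _ b _ h
      exact add_right_cancel h
  omega

lemma subspace_of_corr {n : ℕ} (A : Finset (FV n)) (q : ℝ) (k : ℕ) (hq : q = 2 ^ k)
    (hAq : (A.card : ℝ) ≤ q) (hA : 0.99 * q ≤ A.card)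
    (h : ∀ e ∉ A, ((corr A e).card : ℝ) ≤ 0.1 * q)
    (hs : ∑ e ∈ Aᶜ, ((corr A e).card : ℝ) ≤ q ^ 2 / 1000) :
    ∃ W : Submodule (ZMod 2) (FV n), Module.finrank (ZMod 2) W = k ∧ ∀ x, x ∈ W ↔ x ∈ A := by
  have hq0 : 0 < q := by rw [hq]; positivity
  have hA0 : 0 < (A.card : ℝ) := by linarith
  have tri : ∀ x y, ((corr A x).card : ℝ) + (corr A y).card ≤ A.card + (corr A (x + y)).card := by
    intro x y; exact_mod_cast corr_triangle A x y
  have hTA : ∀ x, 0.5 * (A.card : ℝ) ≤ (corr A x).card → x ∈ A := by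
    intro x hx
    by_contra hc
    have := h x hc
    linarith
  set S := A.filter (fun x => 0.9 * (A.card : ℝ) ≤ (corr A x).card) with hS
  have hScard : 0.98 * (A.card : ℝ) ≤ S.card := by
    have e1 : (A.card : ℝ)^2 = ∑ u, ((corr A u).card : ℝ) := by
      exact_mod_cast (sum_corr A).symm
    rw [← Finset.sum_add_sum_compl A] at e1
    have e2 : ∑ u ∈ A, ((corr A u).card : ℝ) ≤
        ∑ u ∈ A, (0.9 * (A.card : ℝ) +
          if 0.9 * (A.card : ℝ) ≤ (corr A u).card then 0.1 * (A.card : ℝ) else 0) := by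
      refine Finset.sum_le_sum fun u _ => ?_
      split_ifs with hu
      · have : ((corr A u).card : ℝ) ≤ A.card := by
          exact_mod_cast Finset.card_filter_le _ _
        linarith
      · push Not at hu
        linarith
    rw [Finset.sum_add_distrib, ← Finset.sum_filter, Finset.sum_const, Finset.sum_const,
      nsmul_eq_mul, nsmul_eq_mul, ← hS] at e2
    have e3 : q^2/1000 ≤ 0.002 * (A.card : ℝ)^2 := by nlinarith
    have e4 : 0.98 * (A.card : ℝ) * (0.1 * A.card) ≤ S.card * (0.1 * A.card) := by nlinarith
    exact le_of_mul_le_mul_right e4 (by positivity)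
  have hup : ∀ x, 0.6 * (A.card : ℝ) ≤ (corr A x).card → 0.8 * (A.card : ℝ) ≤ (corr A x).card := by
    intro x hx
    have hcl : ∀ s ∈ S, x + s ∈ A := by
      intro s hs'
      rw [hS, Finset.mem_filter] at hs'
      exact hTA _ (by linarith [tri x s])
    have : ∃ s ∈ S, x + s ∈ S := by
      by_contra! hcon
      have d : Disjoint S (S.image (fun s => x + s)) := by
        rw [Finset.disjoint_left]
        intro y hy hy'
        rw [Finset.mem_image] at hy'
        obtain ⟨s, hs', rfl⟩ := hy'
        exact hcon s hs' hy
      have h1 := Finset.card_union_of_disjoint d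
      rw [Finset.card_image_of_injective _ (add_right_injective x)] at h1
      have h2 : (S ∪ S.image (fun s => x + s)).card ≤ A.card := by
        refine Finset.card_le_card (Finset.union_subset (Finset.filter_subset _ _) ?_)
        intro y hy
        rw [Finset.mem_image] at hy
        obtain ⟨s, hs', rfl⟩ := hy
        exact hcl s hs'
      have h3 : (S.card : ℝ) + S.card ≤ A.card := by exact_mod_cast (h1 ▸ h2)
      linarith
    obtain ⟨s, hs1, hs2⟩ := this
    have := tri (x + s) s
    rw [fv_add_add] at this
    rw [hS, Finset.mem_filter] at hs1 hs2
    linarith [hs1.2, hs2.2]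
  have hc0 : corr A 0 = A := by simp [corr]
  let W : Submodule (ZMod 2) (FV n) :=
    { carrier := {x | 0.8 * (A.card : ℝ) ≤ (corr A x).card}
      add_mem' := by
        intro x y hx hy
        simp only [Set.mem_setOf_eq] at hx hy ⊢
        exact hup _ (by linarith [tri x y])
      zero_mem' := by
        simp only [Set.mem_setOf_eq, hc0]; linarith
      smul_mem' := by
        intro s x hx
        rcases fv_scalar s with rfl | rfl
        · simp only [Set.mem_setOf_eq, zero_smul, hc0]; linarith
        · rwa [one_smul] }
  have hW : ∀ x, x ∈ W ↔ 0.8 * (A.card : ℝ) ≤ (corr A x).card := fun x => Iff.rfl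
  have hWA : fvSet W ⊆ A := by
    intro x hx
    rw [mem_fvSet, hW] at hx
    exact hTA x (by linarith)
  have hSW : S ⊆ fvSet W := by
    intro x hx
    rw [mem_fvSet, hW]
    rw [hS, Finset.mem_filter] at hx
    linarith [hx.2]
  have c1 := Finset.card_le_card hWA
  have c2 := Finset.card_le_card hSW
  have hWc := card_fvSet W
  have c1' : ((fvSet W).card : ℝ) ≤ A.card := by exact_mod_cast c1
  have c2' : (S.card : ℝ) ≤ (fvSet W).card := by exact_mod_cast c2
  have hk1 : Module.finrank (ZMod 2) W ≤ k := by
    have : (2:ℝ) ^ Module.finrank (ZMod 2) W ≤ 2 ^ k := by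
      rw [hWc] at c1'; push_cast at c1'; rw [← hq]; linarith
    exact (pow_le_pow_iff_right₀ (one_lt_two)).mp this
  have hk2 : k < Module.finrank (ZMod 2) W + 1 := by
    have : (2:ℝ) ^ k < 2 ^ (Module.finrank (ZMod 2) W + 1) := by
      rw [hWc] at c2'; push_cast at c2'; rw [← hq, pow_succ]; linarith
    exact (pow_lt_pow_iff_right₀ (one_lt_two)).mp this
  have hk : Module.finrank (ZMod 2) W = k := by omega
  have heq : fvSet W = A := by
    refine Finset.eq_of_subset_of_card_le hWA ?_
    rw [hWc, hk]
    rw [hq] at hAq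
    exact_mod_cast hAq
  exact ⟨W, hk, fun x => by rw [← heq, mem_fvSet]⟩

lemma corr_compl {n : ℕ} (A : Finset (FV n)) (e : FV n) :
    (corr A e).card + 2 ^ n ≤ (corr Aᶜ e).card + 2 * A.card := by
  set B := A.image (fun x => x + e) with hB
  have hBmem : ∀ x, x ∈ B ↔ x + e ∈ A := by
    intro x
    rw [hB, Finset.mem_image]
    constructor
    · rintro ⟨a, ha, rfl⟩; rwa [fv_add_add]
    · intro h; exact ⟨x + e, h, fv_add_add x e⟩
  have h1 := Finset.card_union_add_card_inter A B
  have h2 : B.card = A.card := Finset.card_image_of_injective _ (add_left_injective e)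
  have h3 : corr A e = A ∩ B := by
    ext x; rw [corr, Finset.mem_filter, Finset.mem_inter, hBmem]
  have h4 : corr Aᶜ e = (A ∪ B)ᶜ := by
    ext x
    rw [corr, Finset.mem_filter, Finset.mem_compl, Finset.mem_compl, Finset.mem_compl,
      Finset.mem_union, hBmem, not_or]
  have h5 : (A ∪ B).card + (A ∪ B)ᶜ.card = 2 ^ n := by
    rw [Finset.card_add_card_compl]; simp
  rw [h3, h4]
  omega

lemma exists_embed {m n : ℕ} (U : Submodule (ZMod 2) (FV n)) (hU : Module.finrank (ZMod 2) U = m)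
    (e0 : FV m) (he0 : e0 ≠ 0) (e : FV n) (he : e ≠ 0) (heU : e ∈ U) :
    ∃ α : FV m →ₗ[ZMod 2] FV n, Function.Injective α ∧ (∀ x, α x ∈ U) ∧ α e0 = e := by
  let β : U ≃ₗ[ZMod 2] FV m := LinearEquiv.ofFinrankEq U (FV m) (by rw [hU]; simp)
  set f0 := β ⟨e, heU⟩ with hf0
  have hf0' : f0 ≠ 0 := by
    intro h
    rw [hf0, LinearEquiv.map_eq_zero_iff] at h
    exact he (congrArg Subtype.val h)
  obtain ⟨g, hg⟩ := Submodule.exists_linearEquiv_restrict_eq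
    ((LinearEquiv.toSpanNonzeroSingleton (ZMod 2) (FV m) e0 he0).symm ≪≫ₗ
      (LinearEquiv.toSpanNonzeroSingleton (ZMod 2) (FV m) f0 hf0'))
  have hge : g e0 = f0 := by
    have := hg ⟨e0, Submodule.mem_span_singleton_self e0⟩
    rw [← this, LinearEquiv.trans_apply]
    have h1 : (LinearEquiv.toSpanNonzeroSingleton (ZMod 2) (FV m) e0 he0).symm
        ⟨e0, Submodule.mem_span_singleton_self e0⟩ = 1 := by
      rw [LinearEquiv.symm_apply_eq]
      ext1; simp
    rw [h1]; simp
  refine ⟨U.subtype ∘ₗ β.symm.toLinearMap ∘ₗ g.toLinearMap, ?_, ?_, ?_⟩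
  · exact U.injective_subtype.comp (β.symm.injective.comp g.injective)
  · intro x; exact (β.symm (g x)).2
  · simp [hge, hf0]

lemma crit_mem {m : ℕ} (N : Set (FV m)) (hN0 : 0 ∉ N) :
    ∃ φ : (Fin m → ZMod 2) →ₗ[ZMod 2] (Fin (critNum N) → ZMod 2), ∀ x ∈ N, φ x ≠ 0 := by
  have : critNum N ∈ {c | ∃ φ : (Fin m → ZMod 2) →ₗ[ZMod 2] (Fin c → ZMod 2), ∀ x ∈ N, φ x ≠ 0} :=
    Nat.sInf_mem ⟨m, LinearMap.id, fun x hx h => hN0 (by simpa using (show x = 0 from h) ▸ hx)⟩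
  exact this

lemma crit_le {m : ℕ} (N : Set (FV m)) (c : ℕ)
    (φ : (Fin m → ZMod 2) →ₗ[ZMod 2] (Fin c → ZMod 2)) (h : ∀ x ∈ N, φ x ≠ 0) :
    critNum N ≤ c := Nat.sInf_le ⟨φ, h⟩

lemma has_restr {m n : ℕ} (N : Set (FV m)) (hN0 : 0 ∉ N) (e0 : FV m) (he : e0 ∈ N)
    (hdrop : critNum (N \ {e0}) < critNum N) (M : Set (FV n)) (e : FV n) (heM : e ∈ M)
    (he0 : e ≠ 0) (U C : Submodule (ZMod 2) (FV n)) (hU : Module.finrank (ZMod 2) U = m)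
    (hC : Module.finrank (ZMod 2) C = critNum N - 1) (heU : e ∈ U) (hdis : Disjoint U C)
    (hM : ∀ a ∈ C, a ≠ 0 → ∀ u ∈ U, a + u ∈ M) : HasRestriction N M := by
  obtain ⟨α, hα, hαU, hαe⟩ := exists_embed U hU e0 (fun h => hN0 (h ▸ he)) e he0 heU
  obtain ⟨φ, hφ⟩ := crit_mem (N \ {e0}) (fun h => hN0 h.1)
  have hφe : φ e0 = 0 := by
    by_contra hne
    have := crit_le N _ φ (fun x hx => by
      by_cases hxe : x = e0
      · rw [hxe]; exact hne
      · exact hφ x ⟨hx, hxe⟩)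
    omega
  have hle : critNum (N \ {e0}) ≤ critNum N - 1 := by omega
  let γ : (Fin (critNum N - 1) → ZMod 2) ≃ₗ[ZMod 2] C :=
    LinearEquiv.ofFinrankEq _ _ (by rw [hC]; simp)
  let j : (Fin (critNum (N \ {e0})) → ZMod 2) →ₗ[ZMod 2] FV n :=
    C.subtype ∘ₗ γ.toLinearMap ∘ₗ Function.ExtendByZero.linearMap (ZMod 2) (Fin.castLE hle)
  have hj : Function.Injective j :=
    C.injective_subtype.comp (γ.injective.comp
      (Function.extend_injective (Fin.strictMono_castLE _).injective _))
  have hjC : ∀ y, j y ∈ C := fun y =>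
    (γ (Function.ExtendByZero.linearMap (ZMod 2) (Fin.castLE hle) y)).2
  refine ⟨α + j ∘ₗ φ, ?_, ?_⟩
  · rw [injective_iff_map_eq_zero]
    intro x hx
    rw [LinearMap.add_apply, LinearMap.comp_apply] at hx
    have h1 : α x ∈ C := by
      rw [← Submodule.add_mem_iff_left C (hjC (φ x)), hx]; exact C.zero_mem
    have h2 := Submodule.disjoint_def.mp hdis _ (hαU x) h1
    exact (injective_iff_map_eq_zero α).mp hα x h2
  · rintro _ ⟨x, hx, rfl⟩
    rw [LinearMap.add_apply, LinearMap.comp_apply]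
    by_cases hxe : x = e0
    · rw [hxe, hφe, map_zero, add_zero, hαe]; exact heM
    · rw [add_comm]
      refine hM _ (hjC _) ?_ _ (hαU x)
      intro h
      exact hφ x ⟨hx, hxe⟩ ((injective_iff_map_eq_zero j).mp hj _ h)

lemma upper_struct {m : ℕ} (N : Set (FV m)) (hN0 : 0 ∉ N)
    (hχ : 2 ≤ critNum N) (e0 : FV m) (he : e0 ∈ N)
    (hdrop : critNum (N \ {e0}) < critNum N) :
    ∃ n₀ : ℕ, ∀ n ≥ n₀, ∀ M : Set (FV n), 0 ∉ M → ¬ HasRestriction N M →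
        2 ^ n - 2 ^ (n - critNum N + 1) ≤ M.ncard →
        ∃ W : Submodule (ZMod 2) (FV n),
          Module.finrank (ZMod 2) W = n - critNum N + 1 ∧
          M = {x : FV n | x ≠ 0 ∧ x ∉ W} := by
  have hm : 1 ≤ m := by
    rcases Nat.eq_zero_or_pos m with rfl | h
    · exact absurd (Subsingleton.elim e0 0 ▸ he) hN0
    · exact h
  set c := critNum N with hc
  set p : ℝ := 2 ^ (c - 1) with hp
  have hp0 : 0 < p := by positivity
  have hp2 : 2 ≤ p := by
    calc (2:ℝ) = 2^1 := by norm_num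
      _ ≤ p := pow_le_pow_right₀ one_le_two (by omega)
  obtain ⟨n1, hn1⟩ := erdos_stone (c-1) m (1/p * (1/(1000*p))) hm (by positivity)
  refine ⟨max n1 c, fun n hn M hM0 hfree hcard => ?_⟩
  have hnc : c ≤ n := le_trans (le_max_right _ _) hn
  set q : ℝ := 2 ^ (n - c + 1) with hq
  have hq0 : 0 < q := by positivity
  have hpq : q * p = 2 ^ n := by
    rw [hq, hp, ← pow_add]; congr 1; omega
  set A : Finset (FV n) := Finset.univ.filter (fun x => x ∉ M) with hA
  have hAmem : ∀ x, x ∈ A ↔ x ∉ M := by intro x; simp [hA]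
  have hMA : (Aᶜ).card = M.ncard := by
    rw [← Set.ncard_coe_finset]
    congr 1
    ext x
    simp [hAmem]
  have hAt : A.card + (Aᶜ).card = 2 ^ n := by
    rw [Finset.card_add_card_compl]; simp
  have hpowle : 2 ^ (n - c + 1) ≤ 2 ^ n := Nat.pow_le_pow_right two_pos (by omega)
  have hAqn : A.card ≤ 2 ^ (n - c + 1) := by omega
  have hAq : (A.card : ℝ) ≤ q := by rw [hq]; exact_mod_cast hAqn
  have hmain : ∀ e ∉ A, ((corr A e).card : ℝ) ≤ 2 * A.card - 2 * q + q / (1000 * p) := by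
    intro e heA
    have heM : e ∈ M := by by_contra h; exact heA ((hAmem e).mpr h)
    have he0 : e ≠ 0 := by rintro rfl; exact hM0 heM
    have hlt : ((corr Aᶜ e).card : ℝ) < (1 - 2 / 2 ^ (c-1) + 1/p * (1/(1000*p))) * 2 ^ n := by
      by_contra! hge
      obtain ⟨U, C, hU, hC, heU, hdis, hUC⟩ := hn1 n (le_trans (le_max_left _ _) hn) e
        (corr Aᶜ e) he0 (by
          intro x hx
          rw [corr, Finset.mem_filter] at hx ⊢
          rw [fv_add_add]
          exact ⟨hx.2, hx.1⟩) hge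
      refine hfree (has_restr N hN0 e0 he hdrop M e heM he0 U C hU hC heU hdis ?_)
      intro a ha ha0 u hu
      have := (Finset.mem_filter.mp (hUC a ha ha0 u hu)).1
      rw [Finset.mem_compl, hAmem, not_not] at this
      exact this
    have h1 : ((corr A e).card : ℝ) + 2 ^ n ≤ (corr Aᶜ e).card + 2 * A.card := by
      exact_mod_cast corr_compl A e
    rw [← hp, ← hpq] at hlt
    rw [← hpq] at h1
    have h2 : (1 - 2 / p + 1/p * (1/(1000*p))) * (q * p) = q * p - 2 * q + q / (1000 * p) := by
      field_simp
    rw [h2] at hlt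
    linarith
  have hqp : q / (1000 * p) ≤ q / 2000 := by
    apply div_le_div_of_nonneg_left hq0.le (by norm_num) (by linarith)
  have hne : ∃ e, e ∉ A := by
    by_contra! hall
    have : A = Finset.univ := by ext x; simp [hall x]
    have h1 : A.card = 2 ^ n := by rw [this]; simp
    have h2 : 2 ^ (n - c + 1) < 2 ^ n := Nat.pow_lt_pow_right one_lt_two (by omega)
    omega
  obtain ⟨W, hW, hWA⟩ := subspace_of_corr A q (n - c + 1) hq hAq
    (by
      obtain ⟨e, he'⟩ := hne
      have h1 := hmain e he'
      have h2 : (0:ℝ) ≤ (corr A e).card := Nat.cast_nonneg _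
      linarith)
    (by
      intro e he'
      have h1 := hmain e he'
      linarith)
    (by
      have h1 : ∑ e ∈ Aᶜ, ((corr A e).card : ℝ) ≤ ∑ e ∈ Aᶜ, q / (1000 * p) := by
        refine Finset.sum_le_sum fun e he' => ?_
        have h1 := hmain e (Finset.mem_compl.mp he')
        linarith
      rw [Finset.sum_const, nsmul_eq_mul] at h1
      have h2 : ((Aᶜ).card : ℝ) ≤ q * p := by
        rw [hpq]
        have : (Aᶜ).card ≤ 2 ^ n := by omega
        exact_mod_cast this
      have h3 : ((Aᶜ).card : ℝ) * (q / (1000 * p)) ≤ q * p * (q / (1000 * p)) := by gcongr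
      have h4 : q * p * (q / (1000 * p)) = q ^ 2 / 1000 := by field_simp
      linarith)
  refine ⟨W, hW, ?_⟩
  ext x
  show x ∈ M ↔ (x ≠ 0 ∧ x ∉ W)
  rw [hWA, hAmem, not_not]
  exact ⟨fun h => ⟨fun h0 => hM0 (h0 ▸ h), h⟩, fun h => h.2⟩

lemma ncard_bb {n : ℕ} (W : Submodule (ZMod 2) (FV n)) :
    ({x : FV n | x ≠ 0 ∧ x ∉ W}).ncard = 2 ^ n - 2 ^ Module.finrank (ZMod 2) W := by
  have h1 : {x : FV n | x ≠ 0 ∧ x ∉ W} = (((fvSet W)ᶜ : Finset (FV n)) : Set (FV n)) := by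
    ext x
    show (x ≠ 0 ∧ x ∉ W) ↔ x ∈ (fvSet W)ᶜ
    rw [Finset.mem_compl, mem_fvSet]
    exact ⟨fun h => h.2, fun h => ⟨fun h0 => h (h0 ▸ W.zero_mem), h⟩⟩
  rw [h1, Set.ncard_coe_finset, Finset.card_compl, card_fvSet]
  simp

lemma lower_ex {m : ℕ} (N : Set (FV m)) (hχ : 2 ≤ critNum N) (n : ℕ) (hn : critNum N ≤ n) :
    ∃ M : Set (FV n), 0 ∉ M ∧ ¬ HasRestriction N M ∧
      M.ncard = 2 ^ n - 2 ^ (n - critNum N + 1) := by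
  set c := critNum N with hc
  have hle : c - 1 ≤ n := by omega
  let π : FV n →ₗ[ZMod 2] FV (c-1) := LinearMap.funLeft (ZMod 2) (ZMod 2) (Fin.castLE hle)
  have hπ : Function.Surjective π :=
    LinearMap.funLeft_surjective_of_injective _ _ _ (Fin.castLE_injective hle)
  have hr := LinearMap.finrank_range_add_finrank_ker π
  rw [LinearMap.range_eq_top.mpr hπ, finrank_top] at hr
  simp only [Module.finrank_fin_fun] at hr
  refine ⟨{x | x ≠ 0 ∧ x ∉ LinearMap.ker π}, fun h => h.1 rfl, ?_, ?_⟩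
  · rintro ⟨ψ, _, hψ⟩
    have := crit_le N (c-1) (π ∘ₗ ψ) (fun x hx h => (hψ ⟨x, hx, rfl⟩).2 h)
    omega
  · rw [ncard_bb]
    congr 2
    omega

/-- Critical element theorem: exact Turán numbers when deleting an element
drops the critical number. -/
theorem critical_element {m : ℕ} (N : Set (Fin m → ZMod 2)) (hN0 : 0 ∉ N)
    (hχ : 2 ≤ critNum N) (e : Fin m → ZMod 2) (he : e ∈ N)
    (hdrop : critNum (N \ {e}) < critNum N) :
    ∃ n₀ : ℕ, ∀ n ≥ n₀,
      exNum N n = 2 ^ n - 2 ^ (n - critNum N + 1) ∧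
      ∀ M : Set (Fin n → ZMod 2), 0 ∉ M → ¬ HasRestriction N M →
        M.ncard = 2 ^ n - 2 ^ (n - critNum N + 1) →
        ∃ W : Submodule (ZMod 2) (Fin n → ZMod 2),
          Module.finrank (ZMod 2) W = n - critNum N + 1 ∧
          M = {x : Fin n → ZMod 2 | x ≠ 0 ∧ x ∉ W} := by
  obtain ⟨n0, hn0⟩ := upper_struct N hN0 hχ e he hdrop
  refine ⟨max n0 (critNum N), fun n hn => ⟨?_, fun M hM0 hfree hcard =>
    hn0 n (le_trans (le_max_left _ _) hn) M hM0 hfree hcard.ge⟩⟩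
  refine IsGreatest.csSup_eq ⟨lower_ex N hχ n (le_trans (le_max_right _ _) hn), ?_⟩
  rintro k ⟨M, hM0, hfree, rfl⟩
  by_contra! hlt
  obtain ⟨W, hW, hMW⟩ := hn0 n (le_trans (le_max_left _ _) hn) M hM0 hfree hlt.le
  rw [hMW, ncard_bb, hW] at hlt
  exact lt_irrefl _ hlt
end
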